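/- Let X ⊂ ℙ^N be an irreducible, non-degenerate projective variety whose dual X* is a hypersurface, and let L ⊂ ℙ^N be a linear subspace with L^⊥ ⊂ X*. Let S ⊂ L^⊥ be a smooth connected (not necessarily closed) curve passing through a general point of L^⊥, and assume X* is equimultiple along S. Then for every s ∈ S, the dual |C_s(X*)|* of the reduced tangent cone is contained in Tan(L,X), hence in L. -/

import Mathlib

/-!
The dual variety `X*` is the zero locus of one irreducible form `F` (`exists_generator`).  A generic
point `(h, x)` of the conormal variety satisfies `∑ xᵢ dhᵢ = 0` for every derivation
(`exists_generic`); as every tangent vector of `X*` at `h` comes from a derivation, `x` is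
proportional to `∇F(h)`.  Hence the conormal variety contains all pairs `(h, ∇F(h))` with
`F(h) = 0` and `∇F(h) ≠ 0` (reflexivity, `exists_dual_equation`).

Let `K` be the linear subspace of covectors with projectivization `L^⊥`.  Since `S` contains a
general point of `L^⊥` and `X*` is equimultiple along `S`, the multiplicity `m` along `S` is the
minimal one along `L^⊥`, so `F` has order at least `m` at every point of `K` (`order_on_linear`).
The tangent cone at `s ∈ S` is `G = 0`, where `G` is the degree `m` part of the expansion of `F` at
`s`.  It is invariant under translation by `K` (`eval_add_of_order`), whence its dual lies in `L`.

A general point of the dual of the tangent cone is `x = ∇g(w₀)` for a polynomial `g` vanishing on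
the cone and a point `w₀` of the cone (`exists_grad`).  When `k ∈ K` tends to `s` and `u` to `0`,
the functions `w ↦ F(k + u w) / u^m` tend to `G`.  By a theorem of Hurwitz type their zeros approach
those of `G`, so the points of their zero sets nearest to a suitable center converge to `w₀`, and
Lagrange multipliers identify the normal direction at such a nearest point with that of `∇F`.
Letting `u → 0` first, with `k` a general point of `K`, gives conormal pairs lying over `k`; they
converge to `(s, x)` as `k → s` (`analytic_main`).  Over general points of `L^⊥` the preimage
`q⁻¹(L^⊥)` is the union of the components dominating `L^⊥` (`exists_dominating`), and this union is
closed, so it contains `(s, x)`, which means `x ∈ Tan(L, X)`.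
-/
/- Common framework: complex projective varieties, Zariski topology, projective duality,
   multiplicities, contact loci, shadows, secant varieties, polar varieties. -/

noncomputable section

open Function Set

/-- The vector space `ℂ^n`. -/
abbrev Vc (n : ℕ) : Type := Fin n → ℂ

/-- Projective space `ℙ^{n-1} = ℙ(ℂ^n)`. -/
abbrev Pj (n : ℕ) : Type := Projectivization ℂ (Vc n)

variable {n : ℕ}

/-- Projective zero locus of a polynomial. -/
def pZeros (f : MvPolynomial (Fin n) ℂ) : Set (Pj n) :=
  {x | ∀ v ∈ x.submodule, MvPolynomial.eval v f = 0}

/-- The Zariski topology on projective space. -/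
def zarTop (n : ℕ) : TopologicalSpace (Pj n) :=
  TopologicalSpace.generateFrom {U | ∃ f, U = (pZeros f)ᶜ}

def zOpen (U : Set (Pj n)) : Prop := @IsOpen _ (zarTop n) U

def zClosed (S : Set (Pj n)) : Prop := @IsClosed _ (zarTop n) S

/-- Zariski closure. -/
def zcl (S : Set (Pj n)) : Set (Pj n) := @closure _ (zarTop n) S

/-- Zariski irreducibility. -/
def zIrr (S : Set (Pj n)) : Prop := @IsIrreducible _ (zarTop n) S

/-- Dimension of an algebraic set: the length of the longest strict chain of
irreducible closed subsets of its closure. -/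
def zdim (S : Set (Pj n)) : ℕ :=
  sSup {d | ∃ c : Fin (d + 1) → Set (Pj n), StrictMono c ∧
    ∀ i, zIrr (c i) ∧ zClosed (c i) ∧ c i ⊆ zcl S}

/-- The (homogeneous) vanishing ideal of a subset of projective space. -/
def vanishId (S : Set (Pj n)) : Set (MvPolynomial (Fin n) ℂ) :=
  {f | ∀ x ∈ S, ∀ v ∈ x.submodule, MvPolynomial.eval v f = 0}

/-- The linear subvariety of `ℙ^{n-1}` associated to a linear subspace `W ⊆ ℂ^n`. -/
def projLin (W : Submodule ℂ (Vc n)) : Set (Pj n) := {x | x.submodule ≤ W}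

/-- A set is a linear subvariety if it is the projectivization of a linear subspace. -/
def IsLinSub (L : Set (Pj n)) : Prop := ∃ W : Submodule ℂ (Vc n), L = projLin W

/-- The linear span of a subset of projective space, as a linear subspace of `ℂ^n`. -/
def spanSet (S : Set (Pj n)) : Submodule ℂ (Vc n) :=
  Submodule.span ℂ {v | ∃ x ∈ S, v ∈ x.submodule}

/-- Nondegeneracy: not contained in a hyperplane. -/
def Nondeg (X : Set (Pj n)) : Prop := spanSet X = ⊤

/-- Incidence pairing between the dual projective space and projective space
(both identified with `ℙ^{n-1}` via coordinates): `h` and `x` are incident if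
`∑ hᵢ xᵢ = 0`. -/
def pair0 (h x : Pj n) : Prop :=
  ∀ w ∈ h.submodule, ∀ v ∈ x.submodule, (∑ i, w i * v i) = 0

/-- The hyperplane of `ℙ^{n-1}` corresponding to a point `h` of the dual projective space. -/
def hypOf (h : Pj n) : Set (Pj n) := {x | pair0 h x}

/-- `L^⊥`: the set of (points of the dual space corresponding to) hyperplanes containing `L`. -/
def perpSet (L : Set (Pj n)) : Set (Pj n) := {h | ∀ x ∈ L, pair0 h x}

/-- The linear subspace of `ℂ^n` cut out by the linear form corresponding to `h`. -/
def hypSub (h : Pj n) : Submodule ℂ (Vc n) :=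
  LinearMap.ker (∑ i, h.rep i • (LinearMap.proj i : Vc n →ₗ[ℂ] ℂ))

/-- Differential of a polynomial at a point, as a linear form. -/
def dmap (f : MvPolynomial (Fin n) ℂ) (v : Vc n) : Vc n →ₗ[ℂ] ℂ :=
  ∑ i, MvPolynomial.eval v (MvPolynomial.pderiv i f) • (LinearMap.proj i : Vc n →ₗ[ℂ] ℂ)

/-- The affine cone over the embedded projective tangent space of `X` at `x`. -/
def tangentSub (X : Set (Pj n)) (x : Pj n) : Submodule ℂ (Vc n) :=
  ⨅ f ∈ vanishId X, LinearMap.ker (dmap f x.rep)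

/-- The embedded projective tangent space `T_{X,x}`. -/
def tanSpace (X : Set (Pj n)) (x : Pj n) : Set (Pj n) := projLin (tangentSub X x)

/-- `x` is a smooth point of `X`. -/
def SmoothPt (X : Set (Pj n)) (x : Pj n) : Prop :=
  x ∈ X ∧ Module.finrank ℂ (tangentSub X x : Submodule ℂ (Vc n)) = zdim X + 1

/-- The singular locus. -/
def singLocus (Z : Set (Pj n)) : Set (Pj n) := {z ∈ Z | ¬ SmoothPt Z z}

/-- Irreducible components of a set: maximal irreducible subsets. -/
def irrCompsOf (A : Set (Pj n)) : Set (Set (Pj n)) :=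
  {F | Maximal (fun G => G ⊆ A ∧ zIrr G) F}

/-- Zero locus in `ℙ^{n-1} × ℙ^{n-1}` of a polynomial in two groups of variables. -/
def pZeros2 (f : MvPolynomial (Fin n ⊕ Fin n) ℂ) : Set (Pj n × Pj n) :=
  {p | ∀ w ∈ p.1.submodule, ∀ v ∈ p.2.submodule, MvPolynomial.eval (Sum.elim w v) f = 0}

/-- The Zariski topology on the product `ℙ^{n-1} × ℙ^{n-1}`. -/
def zarTop2 (n : ℕ) : TopologicalSpace (Pj n × Pj n) :=
  TopologicalSpace.generateFrom {U | ∃ f, U = (pZeros2 f)ᶜ}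

def zcl2 (S : Set (Pj n × Pj n)) : Set (Pj n × Pj n) := @closure _ (zarTop2 n) S

def zIrr2 (S : Set (Pj n × Pj n)) : Prop := @IsIrreducible _ (zarTop2 n) S

def zClosed2 (S : Set (Pj n × Pj n)) : Prop := @IsClosed _ (zarTop2 n) S

/-- The conormal variety `I(X/ℙ^N)`: the Zariski closure of the set of pairs `(H, x)` with
`x` a smooth point of `X` and `T_{X,x} ⊆ H`.  The first projection `q = Prod.fst` goes to the
dual projective space, the second projection `p = Prod.snd` to the original space. -/
def conormal (X : Set (Pj n)) : Set (Pj n × Pj n) :=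
  zcl2 {p | SmoothPt X p.2 ∧ tanSpace X p.2 ⊆ hypOf p.1}

/-- The projective dual variety `X* = q(I(X/ℙ^N))`. -/
def dualVar (X : Set (Pj n)) : Set (Pj n) := Prod.fst '' conormal X

/-- The contact locus `Tan(L, X)`: the union of `p(F)` over the irreducible components `F` of
`q⁻¹(L^⊥)` (inside the conormal variety) such that `q|_F : F → L^⊥` is surjective. -/
def contactLocus (X L : Set (Pj n)) : Set (Pj n) :=
  ⋃₀ {T | ∃ F : Set (Pj n × Pj n),
      Maximal (fun G => G ⊆ conormal X ∩ (Prod.fst ⁻¹' perpSet L) ∧ zIrr2 G) F ∧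
      Prod.fst '' F = perpSet L ∧ T = Prod.snd '' F}

/-- The dual defect `def(X) = codim X* - 1` (in `ℙ^{n-1}`). -/
def defect (X : Set (Pj n)) : ℕ := (n - 1) - zdim (dualVar X) - 1

/-- The shadow `Sh_X(L)`: the closed set covered by the linear subvarieties `M ⊆ X` with
`dim M = def(X) + 1` meeting the contact locus `Tan(L,X)` in dimension `def(X)`. -/
def shadow (X L : Set (Pj n)) : Set (Pj n) :=
  zcl (⋃₀ {M | IsLinSub M ∧ M ⊆ X ∧ zdim M = defect X + 1 ∧
    (M ∩ contactLocus X L).Nonempty ∧ zdim (M ∩ contactLocus X L) = defect X})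

/-- Translate a polynomial so that the point `v` becomes the origin. -/
def shiftPoly (f : MvPolynomial (Fin n) ℂ) (v : Vc n) : MvPolynomial (Fin n) ℂ :=
  MvPolynomial.bind₁ (fun i => MvPolynomial.X i + MvPolynomial.C (v i)) f

/-- Order of vanishing of a polynomial at the origin. -/
def polyOrd (g : MvPolynomial (Fin n) ℂ) : ℕ :=
  sInf {d | MvPolynomial.homogeneousComponent d g ≠ 0}

open Classical in
/-- Multiplicity at (a representative of) a point of the scheme cut out by an ideal:
the minimal order of vanishing of a nonzero element of the ideal. -/
def idealMult (I : Ideal (MvPolynomial (Fin n) ℂ)) (v : Vc n) : ℕ :=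
  if I = ⊥ then 1 else sInf {d | ∃ f ∈ I, f ≠ 0 ∧ d = polyOrd (shiftPoly f v)}

/-- Multiplicity `mult_z(Z)` of an algebraic set at a point. -/
def multAt (Z : Set (Pj n)) (z : Pj n) : ℕ := idealMult (Ideal.span (vanishId Z)) z.rep

/-- A property holds at a general point of `W`. -/
def forGeneralIn (W : Set (Pj n)) (P : Pj n → Prop) : Prop :=
  ∃ U, zOpen U ∧ (W ∩ U).Nonempty ∧ ∀ z ∈ W ∩ U, P z

/-- The multiplicity of `Z` at a general point of `W` equals `m`. -/
def multAtGeneral (Z W : Set (Pj n)) (m : ℕ) : Prop :=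
  forGeneralIn W fun z => multAt Z z = m

/-- The initial form of `f` at the point `v`. -/
def initForm (f : MvPolynomial (Fin n) ℂ) (v : Vc n) : MvPolynomial (Fin n) ℂ :=
  MvPolynomial.homogeneousComponent (polyOrd (shiftPoly f v)) (shiftPoly f v)

/-- The (reduced) embedded projective tangent cone `|C_z(Z)| ⊆ ℙ^{n-1}`:
zero locus of the initial forms at `z` of the elements of the ideal of `Z`. -/
def tanConeAt (Z : Set (Pj n)) (z : Pj n) : Set (Pj n) :=
  {y | ∀ f ∈ vanishId Z, ∀ w ∈ y.submodule, MvPolynomial.eval w (initForm f z.rep) = 0}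

/-- The linear map `ℂ^m → ℂ^n` sending the `i`th basis vector to `v i`. -/
def tupleMap {m : ℕ} (v : Fin m → Vc n) : Vc m →ₗ[ℂ] Vc n :=
  Matrix.toLin' (Matrix.of fun i j => v j i)

/-- The linear subspace spanned by a tuple of points of projective space. -/
def spanTuple {m : ℕ} (t : Fin m → Pj n) : Submodule ℂ (Vc n) :=
  LinearMap.range (tupleMap fun i => (t i).rep)

/-- Zero loci on the space of `m`-tuples of points of `ℙ^{n-1}`. -/
def pZerosT {m : ℕ} (f : MvPolynomial (Fin m × Fin n) ℂ) : Set (Fin m → Pj n) :=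
  {t | ∀ v : Fin m → Vc n, (∀ i, v i ∈ (t i).submodule) →
    MvPolynomial.eval (fun p => v p.1 p.2) f = 0}

/-- The Zariski topology on the space of `m`-tuples of points of `ℙ^{n-1}`. -/
def zarTopT (m n : ℕ) : TopologicalSpace (Fin m → Pj n) :=
  TopologicalSpace.generateFrom {U | ∃ f, U = (pZerosT f)ᶜ}

/-- A property `P` holds for the linear span of a general `m`-tuple of points in general
position (equivalently, for a general linear subspace of projective dimension `m-1`). -/
def forGeneralTuple {n : ℕ} (m : ℕ) (P : (Fin m → Pj n) → Prop) : Prop :=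
  ∃ U, @IsOpen _ (zarTopT m n) U ∧
    (∃ t ∈ U, Function.Injective (tupleMap fun i => (t i).rep)) ∧
    ∀ t ∈ U, Function.Injective (tupleMap fun i => (t i).rep) → P t

/-- The `k`-th secant variety `S^k(X)`. -/
def secantVar (X : Set (Pj n)) (k : ℕ) : Set (Pj n) :=
  zcl {u | ∃ t : Fin (k + 1) → Pj n, (∀ i, t i ∈ X) ∧
    LinearIndependent ℂ (fun i => (t i).rep) ∧
    u.rep ∈ Submodule.span ℂ (Set.range fun i => (t i).rep)}

/-- `ord(X) = min {k | S^{k-1}(X) = ℙ^N}`. -/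
def ordOf (X : Set (Pj n)) : ℕ := sInf {k | secantVar X (k - 1) = Set.univ}

/-- `t(Y) = t`: the general fiber of the Gauss map of `Y` has dimension `t`. -/
def hasGaussFiberDim (Y : Set (Pj n)) (t : ℕ) : Prop :=
  ∃ U, zOpen U ∧ (Y ∩ U).Nonempty ∧ ∀ y ∈ Y ∩ U, SmoothPt Y y ∧
    zdim {y' | SmoothPt Y y' ∧ tangentSub Y y' = tangentSub Y y} = t

/-- `X` is dual `k`-defective: `S^k(X) ≠ ℙ^N` and `def(S^k(X)) > t(S^k(X))`. -/
def dualKDefective (X : Set (Pj n)) (k : ℕ) : Prop :=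
  secantVar X k ≠ Set.univ ∧
  ∃ t, hasGaussFiberDim (secantVar X k) t ∧ t < defect (secantVar X k)

/-- Degree of a projective variety: the maximal (finite) number of points in which a linear
subspace of complementary dimension meets it. -/
def degOf (Z : Set (Pj n)) : ℕ :=
  sSup {d | ∃ W : Submodule ℂ (Vc n), Module.finrank ℂ W = n - zdim Z ∧
    (Z ∩ projLin W).Finite ∧ (Z ∩ projLin W).ncard = d}

/-- The polar variety `P(Z, D)`: closure of the set of smooth points of `Z` whose embedded
tangent space contains `D`.  (For `D = ∅` this is `Z` itself.) -/
def polarVar (Z D : Set (Pj n)) : Set (Pj n) :=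
  zcl {z | SmoothPt Z z ∧ D ⊆ tanSpace Z z}

/-- The ideal of the polar scheme `P(f_Z, D)`, generated by the polynomials
`u₀ ∂f/∂t₀ + ⋯ + u_N ∂f/∂t_N` for `u` ranging over (the cone over) `D`. -/
def polarIdeal (f : MvPolynomial (Fin n) ℂ) (W : Submodule ℂ (Vc n)) :
    Ideal (MvPolynomial (Fin n) ℂ) :=
  Ideal.span {g | ∃ u ∈ W, g = ∑ i, u i • MvPolynomial.pderiv i f}

/-- The linear form corresponding to a point of the dual projective space. -/
def linForm (h : Pj n) : MvPolynomial (Fin n) ℂ :=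
  ∑ i, MvPolynomial.C (h.rep i) * MvPolynomial.X i

/-- The ideal of the scheme-theoretic tangency locus of the hyperplane `H = hypOf h` with `X`:
generated by the ideal of `X`, the linear form of `H`, and the derivatives of this linear form
along all polynomial vector fields tangent to `X`. -/
def tangencyIdeal (X : Set (Pj n)) (h : Pj n) : Ideal (MvPolynomial (Fin n) ℂ) :=
  Ideal.span (vanishId X ∪ {linForm h} ∪
    {g | ∃ θ : Derivation ℂ (MvPolynomial (Fin n) ℂ) (MvPolynomial (Fin n) ℂ),
        (∀ f ∈ vanishId X, θ f ∈ Ideal.span (vanishId X)) ∧ g = θ (linForm h)})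

/-- Zero locus of an ideal in projective space. -/
def idealZeros (I : Ideal (MvPolynomial (Fin n) ℂ)) : Set (Pj n) :=
  {x | ∀ f ∈ I, ∀ v ∈ x.submodule, MvPolynomial.eval v f = 0}

/-- The number of components (including embedded ones) of the scheme cut out by `I`:
the number of associated primes. -/
def numComponents (I : Ideal (MvPolynomial (Fin n) ℂ)) : ℕ :=
  (associatedPrimes (MvPolynomial (Fin n) ℂ) (MvPolynomial (Fin n) ℂ ⧸ I)).ncard

/-- The scheme cut out by `I` has an embedded component. -/
def hasEmbedded (I : Ideal (MvPolynomial (Fin n) ℂ)) : Prop :=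
  ∃ p ∈ associatedPrimes (MvPolynomial (Fin n) ℂ) (MvPolynomial (Fin n) ℂ ⧸ I),
    ∃ q ∈ associatedPrimes (MvPolynomial (Fin n) ℂ) (MvPolynomial (Fin n) ℂ ⧸ I), p < q

/-- A hyperquadric: a quadric hypersurface of a linear subspace of projective space. -/
def IsHyperquadric (T : Set (Pj n)) : Prop :=
  ∃ (W : Submodule ℂ (Vc n)) (q : MvPolynomial (Fin n) ℂ),
    q.IsHomogeneous 2 ∧ T = projLin W ∩ pZeros q ∧ ¬ IsLinSub T

/-- Transpose of a linear map between coordinate spaces. -/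
def transposeMap {m : ℕ} (j : Vc m →ₗ[ℂ] Vc n) : Vc n →ₗ[ℂ] Vc m :=
  Matrix.toLin' (Matrix.transpose (LinearMap.toMatrix' j))

/-- Image of a set under the rational map `ℙ(g)` induced by a linear map `g`
(a linear projection when `g` is a quotient map). -/
def projImage {m : ℕ} (g : Vc n →ₗ[ℂ] Vc m) (S : Set (Pj n)) : Set (Pj m) :=
  {y | ∃ x ∈ S, ∃ v ∈ x.submodule, ∃ hv : g v ≠ 0, y = Projectivization.mk ℂ (g v) hv}

/-- Zero loci on `(ℙ^{n-1} × ℙ^{n-1}) × ℙ^{n-1}`. -/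
def pZeros3 (f : MvPolynomial ((Fin n ⊕ Fin n) ⊕ Fin n) ℂ) : Set ((Pj n × Pj n) × Pj n) :=
  {p | ∀ w ∈ p.1.1.submodule, ∀ v ∈ p.1.2.submodule, ∀ u ∈ p.2.submodule,
    MvPolynomial.eval (Sum.elim (Sum.elim w v) u) f = 0}

/-- The Zariski topology on `(ℙ^{n-1} × ℙ^{n-1}) × ℙ^{n-1}`. -/
def zarTop3 (n : ℕ) : TopologicalSpace ((Pj n × Pj n) × Pj n) :=
  TopologicalSpace.generateFrom {U | ∃ f, U = (pZeros3 f)ᶜ}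

def zClosed3 (S : Set ((Pj n × Pj n) × Pj n)) : Prop := @IsClosed _ (zarTop3 n) S

def zIrr3 (S : Set ((Pj n × Pj n) × Pj n)) : Prop := @IsIrreducible _ (zarTop3 n) S

/-- Flatness of a (reduced) family over a (smooth) curve `S`; for reduced total space over a
smooth curve, flatness is equivalent to every irreducible component dominating the base. -/
def flatFam2 (Γ : Set (Pj n × Pj n)) (S : Set (Pj n)) : Prop :=
  Prod.snd '' Γ ⊆ S ∧ ∀ F, Maximal (fun G => G ⊆ Γ ∧ zIrr2 G) F → S ⊆ zcl (Prod.snd '' F)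

/-- Flatness over a curve for families of subsets of `ℙ^{n-1} × ℙ^{n-1}`. -/
def flatFam3 (Γ : Set ((Pj n × Pj n) × Pj n)) (S : Set (Pj n)) : Prop :=
  Prod.snd '' Γ ⊆ S ∧ ∀ F, Maximal (fun G => G ⊆ Γ ∧ zIrr3 G) F → S ⊆ zcl (Prod.snd '' F)

/-- The Segre variety `ℙ¹ × ℙ² ⊆ ℙ⁵`, i.e. the rank-one locus: coordinates are arranged as a
`2 × 3` matrix `(v_{3a+b})` and all `2 × 2` minors vanish. -/
def segre : Set (Pj 6) :=
  {x | ∀ v ∈ x.submodule, ∀ b c : Fin 3,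
    v (⟨b.1, by have := b.isLt; omega⟩ : Fin 6) * v (⟨3 + c.1, by have := c.isLt; omega⟩ : Fin 6) =
    v (⟨c.1, by have := c.isLt; omega⟩ : Fin 6) * v (⟨3 + b.1, by have := b.isLt; omega⟩ : Fin 6)}

end

/-! ### Taylor expansion of polynomials along lines -/

section

open MvPolynomial Filter Topology

/-- The one-variable polynomial `u ↦ F (k + u w)`. -/
noncomputable def linePoly {n : ℕ} (F : MvPolynomial (Fin n) ℂ) (k w : Vc n) : Polynomial ℂ :=
  aeval (fun i => Polynomial.C (k i) + Polynomial.X * Polynomial.C (w i)) F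

section
variable {n : ℕ}

theorem eval_bind₁' (f : Fin n → MvPolynomial (Fin n) ℂ) (φ : MvPolynomial (Fin n) ℂ) (v : Vc n) :
    eval v (bind₁ f φ) = eval (fun i => eval v (f i)) φ := by
  simp only [← MvPolynomial.coe_aeval_eq_eval, RingHom.coe_coe, aeval_bind₁]

theorem eval_linePoly (F : MvPolynomial (Fin n) ℂ) (k w : Vc n) (u : ℂ) :
    (linePoly F k w).eval u = eval (k + u • w) F := by
  induction F using MvPolynomial.induction_on with
  | C a => simp [linePoly]
  | add p q hp hq => simp only [linePoly, map_add, Polynomial.eval_add] at *; rw [hp, hq]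
  | mul_X p i hp =>
    simp only [linePoly, map_mul, Polynomial.eval_mul, aeval_X, eval_X] at *; rw [hp]; simp [mul_comm u]

theorem continuous_coeff_linePoly (F : MvPolynomial (Fin n) ℂ) (j : ℕ) :
    Continuous fun p : Vc n × Vc n => (linePoly F p.1 p.2).coeff j := by
  induction F using MvPolynomial.induction_on generalizing j with
  | C a => simp [linePoly]; exact continuous_const
  | add p q hp hq => simp only [linePoly, map_add, Polynomial.coeff_add] at *; exact (hp j).add (hq j)
  | mul_X p i hp =>
    have : ∀ x : Vc n × Vc n, (linePoly (p * X i) x.1 x.2).coeff j =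
        (linePoly p x.1 x.2).coeff j * x.1 i +
        (if j = 0 then 0 else (linePoly p x.1 x.2).coeff (j - 1)) * x.2 i := by
      intro x
      simp only [linePoly, map_mul, aeval_X, mul_add, Polynomial.coeff_add,
        Polynomial.coeff_mul_C, ← mul_assoc]
      cases j <;> simp [Polynomial.coeff_mul_X]
    simp only [this]
    split_ifs
    · have := hp j; fun_prop
    · have := hp j; have := hp (j-1); fun_prop

theorem linePoly_homogeneous {F : MvPolynomial (Fin n) ℂ} {d : ℕ} (hF : F.IsHomogeneous d)
    (w : Vc n) : linePoly F 0 w = Polynomial.C (eval w F) * Polynomial.X ^ d := by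
  apply Polynomial.funext
  intro u
  rw [eval_linePoly, zero_add, MvPolynomial.eval_eq]
  simp only [Polynomial.eval_mul, Polynomial.eval_C, Polynomial.eval_pow, Polynomial.eval_X]
  rw [MvPolynomial.eval_eq, Finset.sum_mul]
  refine Finset.sum_congr rfl fun a ha => ?_
  have := hF (mem_support_iff.mp ha)
  simp only [Pi.smul_apply, smul_eq_mul, mul_pow, Finset.prod_mul_distrib]
  rw [Finset.prod_pow_eq_pow_sum]
  have h2 : ∑ i ∈ a.support, a i = d := by
    rw [← this, Finsupp.weight_apply]; simp [Finsupp.sum]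
  rw [h2]; ring

theorem linePoly_shift (F : MvPolynomial (Fin n) ℂ) (k w : Vc n) :
    linePoly (shiftPoly F k) 0 w = linePoly F k w := by
  apply Polynomial.funext
  intro u
  rw [eval_linePoly, eval_linePoly, shiftPoly, eval_bind₁']
  congr 2
  ext i
  simp [add_comm]

theorem coeff_linePoly (F : MvPolynomial (Fin n) ℂ) (k w : Vc n) (j : ℕ) :
    (linePoly F k w).coeff j = eval w (homogeneousComponent j (shiftPoly F k)) := by
  rw [← linePoly_shift]
  generalize shiftPoly F k = G
  conv_lhs => rw [← sum_homogeneousComponent G]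
  simp only [linePoly, map_sum, Polynomial.finsetSum_coeff]
  have : ∀ i, (aeval (fun i => Polynomial.C ((0 : Vc n) i) + Polynomial.X * Polynomial.C (w i))
      (homogeneousComponent i G)).coeff j = if j = i then eval w (homogeneousComponent i G) else 0 := by
    intro i
    have := linePoly_homogeneous (homogeneousComponent_isHomogeneous i G) w
    simp only [linePoly] at this
    rw [this, Polynomial.coeff_C_mul_X_pow]
  simp only [this, Finset.sum_ite_eq, Finset.mem_range]
  split_ifs with h
  · rfl
  · rw [homogeneousComponent_eq_zero _ _ (by omega)]; simp

theorem natDegree_linePoly_le (F : MvPolynomial (Fin n) ℂ) (k w : Vc n) :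
    (linePoly F k w).natDegree ≤ F.totalDegree := by
  rw [linePoly, aeval_def, eval₂_eq]
  refine Polynomial.natDegree_sum_le_of_forall_le _ _ fun a ha => ?_
  refine (Polynomial.natDegree_C_mul_le _ _).trans ?_
  refine (Polynomial.natDegree_prod_le _ _).trans ?_
  refine le_trans (Finset.sum_le_sum (g := fun i => a i) fun i _ => ?_) (le_totalDegree ha)
  refine (Polynomial.natDegree_pow_le).trans ?_
  have : (Polynomial.C (k i) + Polynomial.X * Polynomial.C (w i)).natDegree ≤ 1 := by
    compute_degree
  nlinarith

theorem eval_pderiv_mul_X (p : MvPolynomial (Fin n) ℂ) (i j : Fin n) (v : Vc n) :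
    eval v (pderiv j (p * X i)) = eval v p * (if i = j then 1 else 0) +
      v i * eval v (pderiv j p) := by
  rw [Derivation.leibniz, pderiv_X]
  by_cases h : i = j
  · subst h; simp
  · simp [h]

/-- Partial derivatives compute the Fréchet derivative of a polynomial function. -/
theorem hasStrictFDerivAt_eval (f : MvPolynomial (Fin n) ℂ) (v : Vc n) :
    HasStrictFDerivAt (𝕜 := ℂ) (fun w : Vc n => eval w f)
      (∑ i, eval v (pderiv i f) • (ContinuousLinearMap.proj (R := ℂ) i : Vc n →L[ℂ] ℂ)) v := by
  induction f using MvPolynomial.induction_on with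
  | C a => 
    simp only [eval_C]
    refine (hasStrictFDerivAt_const (𝕜 := ℂ) a v).congr_fderiv ?_
    ext1 w; simp
  | add p q hp hq =>
    have := hp.fun_add hq
    simp only [map_add (eval _)]
    refine this.congr_fderiv ?_
    ext1 w; simp [add_mul, Finset.sum_add_distrib]
  | mul_X p i hp =>
    have hX : HasStrictFDerivAt (𝕜 := ℂ) (fun w : Vc n => w i)
      (ContinuousLinearMap.proj (R := ℂ) i : Vc n →L[ℂ] ℂ) v :=
      (ContinuousLinearMap.proj (R := ℂ) (φ := fun _ : Fin n => ℂ) i).hasStrictFDerivAt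
    have := hp.mul hX
    simp only [map_mul, eval_X]
    refine this.congr_fderiv ?_
    ext1 w
    simp [eval_pderiv_mul_X, -Derivation.leibniz, add_mul, Finset.sum_add_distrib, Finset.mul_sum,
      mul_assoc]

theorem differentiable_eval_line (f : MvPolynomial (Fin n) ℂ) (w e : Vc n) :
    Differentiable ℂ fun z : ℂ => eval (w + z • e) f := by
  have h : Differentiable ℂ fun v : Vc n => eval v f := fun v =>
    (hasStrictFDerivAt_eval f v).hasFDerivAt.differentiableAt
  exact h.comp (f := fun z : ℂ => w + z • e) (by fun_prop)

/-- If `F` has order at least `m` at every point of a subset, then `F (k + u w)` is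
divisible by `u ^ m` with a quotient continuous in all arguments. -/
theorem exists_quot_linePoly (F : MvPolynomial (Fin n) ℂ) (m : ℕ) :
    ∃ Φ : Vc n × ℂ × Vc n → ℂ, Continuous Φ ∧
      (∀ k, (∀ j < m, homogeneousComponent j (shiftPoly F k) = 0) → ∀ u w,
        eval (k + u • w) F = u ^ m * Φ (k, u, w)) ∧
      (∀ k w, Φ (k, 0, w) = eval w (homogeneousComponent m (shiftPoly F k))) ∧
      (∀ k u w e, Differentiable ℂ fun z : ℂ => Φ (k, u, w + z • e)) := by
  refine ⟨fun p => ∑ j ∈ Finset.range (F.totalDegree + 1),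
    (linePoly F p.1 p.2.2).coeff (j + m) * p.2.1 ^ j, ?_, ?_, ?_, ?_⟩
  · refine continuous_finsetSum _ fun j _ => ?_
    have := (continuous_coeff_linePoly F (j + m)).comp
      (g := fun p : Vc n × Vc n => (linePoly F p.1 p.2).coeff (j + m))
      (f := fun p : Vc n × ℂ × Vc n => (p.1, p.2.2)) (by fun_prop)
    simp only [Function.comp_def] at this
    fun_prop
  · intro k hk u w
    rw [← eval_linePoly, Polynomial.eval_eq_sum_range' (n := m + (F.totalDegree + 1))
      (lt_of_le_of_lt (natDegree_linePoly_le F k w) (by omega)), Finset.sum_range_add]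
    rw [Finset.sum_eq_zero, zero_add, Finset.mul_sum]
    · refine Finset.sum_congr rfl fun j _ => ?_
      rw [add_comm m j, pow_add]; ring
    · intro j hj
      rw [coeff_linePoly, hk j (Finset.mem_range.mp hj)]; simp
  · intro k w
    simp only
    rw [Finset.sum_eq_single 0]
    · simp [coeff_linePoly]
    · intro b _ hb; simp [hb]
    · simp
  · intro k u w e
    refine Differentiable.fun_sum fun j _ => ?_
    simp only [coeff_linePoly]
    exact (differentiable_eval_line _ w e).mul_const _

/-- Second order Taylor bound for a polynomial function near a point. -/
theorem taylor_bound (f : MvPolynomial (Fin n) ℂ) (w₀ : Vc n) :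
    ∃ M : ℝ, 0 ≤ M ∧ ∀ w, ‖w - w₀‖ ≤ 1 →
      ‖eval w f - eval w₀ f - ∑ i, eval w₀ (pderiv i f) * (w i - w₀ i)‖ ≤ M * ‖w - w₀‖ ^ 2 := by
  induction f using MvPolynomial.induction_on with
  | C a => exact ⟨0, le_rfl, by simp⟩
  | add p q hp hq =>
    obtain ⟨M, hM, h⟩ := hp
    obtain ⟨M', hM', h'⟩ := hq
    refine ⟨M + M', by positivity, fun w hw => ?_⟩
    have := norm_add_le_of_le (h w hw) (h' w hw)
    rw [add_mul]
    refine le_trans (le_of_eq ?_) this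
    congr 1
    simp [add_mul, Finset.sum_add_distrib]; ring
  | mul_X p i hp =>
    obtain ⟨M, hM, h⟩ := hp
    set A : ℝ := ∑ i, ‖eval w₀ (pderiv i p)‖ with hA
    have hA0 : 0 ≤ A := by positivity
    refine ⟨‖w₀ i‖ * M + (M + A), by positivity, fun w hw => ?_⟩
    set r := ‖w - w₀‖ with hr
    have hr0 : 0 ≤ r := norm_nonneg _
    have hi : ∀ i, ‖w i - w₀ i‖ ≤ r := fun i => norm_le_pi_norm (w - w₀) i
    have hlin : ‖∑ i, eval w₀ (pderiv i p) * (w i - w₀ i)‖ ≤ A * r := by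
      rw [hA, Finset.sum_mul]
      refine norm_sum_le_of_le _ fun i _ => ?_
      rw [norm_mul]
      exact mul_le_mul_of_nonneg_left (hi i) (norm_nonneg _)
    have h1 := h w hw
    set E := eval w p - eval w₀ p - ∑ i, eval w₀ (pderiv i p) * (w i - w₀ i) with hE
    have key : eval w (p * X i) - eval w₀ (p * X i) -
        ∑ j, eval w₀ (pderiv j (p * X i)) * (w j - w₀ j) =
        w₀ i * E + (E + ∑ i, eval w₀ (pderiv i p) * (w i - w₀ i)) * (w i - w₀ i) := by
      simp only [eval_pderiv_mul_X, add_mul, Finset.sum_add_distrib, mul_assoc]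
      have h6 : ∑ j, w₀ i * (eval w₀ (pderiv j p) * (w j - w₀ j)) =
        w₀ i * ∑ j, eval w₀ (pderiv j p) * (w j - w₀ j) := by rw [Finset.mul_sum]
      rw [h6, hE]
      generalize ∑ j, eval w₀ (pderiv j p) * (w j - w₀ j) = T
      simp
      ring
    rw [key]
    refine (norm_add_le _ _).trans ?_
    rw [norm_mul, norm_mul]
    have h2 : ‖E + ∑ i, eval w₀ (pderiv i p) * (w i - w₀ i)‖ ≤ M * r ^ 2 + A * r :=
      norm_add_le_of_le h1 hlin
    have h3 : ‖E + ∑ i, eval w₀ (pderiv i p) * (w i - w₀ i)‖ * ‖w i - w₀ i‖ ≤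
        (M * r ^ 2 + A * r) * r := mul_le_mul h2 (hi i) (norm_nonneg _) (by positivity)
    have h4 : ‖w₀ i‖ * ‖E‖ ≤ ‖w₀ i‖ * (M * r ^ 2) := mul_le_mul_of_nonneg_left h1 (norm_nonneg _)
    have h5 : M * r ^ 2 * r ≤ M * r ^ 2 := mul_le_of_le_one_right (by positivity) hw
    nlinarith
end

end

/-! ### Stability of zeros and of nearest points -/

section

open MvPolynomial Filter Topology

/-- Roots of a continuous family of entire functions deform: a zero of a member that does not
vanish identically persists nearby for all nearby members (Hurwitz). -/
theorem exists_root_near {T : Type*} [TopologicalSpace T] {Θ : T → ℂ → ℂ} {τ₀ : T}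
    (hc : Continuous fun p : T × ℂ => Θ p.1 p.2) (hd : ∀ τ, Differentiable ℂ (Θ τ))
    (h0 : Θ τ₀ 0 = 0) (h1 : ∃ z, Θ τ₀ z ≠ 0) {ε : ℝ} (hε : 0 < ε) :
    ∀ᶠ τ in 𝓝 τ₀, ∃ z, ‖z‖ < ε ∧ Θ τ z = 0 := by
  have an : ∀ τ, AnalyticOnNhd ℂ (Θ τ) Set.univ := fun τ =>
    (hd τ).differentiableOn.analyticOnNhd isOpen_univ
  have ident : ∀ τ (c : ℂ), (∀ᶠ z in 𝓝 (0 : ℂ), Θ τ z = c) → ∀ z, Θ τ z = c := by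
    intro τ c h z
    have := (an τ).eq_of_eventuallyEq (g := fun _ => c) (z₀ := 0) (fun _ _ => analyticAt_const) h
    exact congrFun this z
  have hne : ∀ᶠ z in 𝓝[≠] (0 : ℂ), Θ τ₀ z ≠ 0 := by
    rcases (an τ₀ 0 trivial).eventually_eq_zero_or_eventually_ne_zero with h | h
    · obtain ⟨z, hz⟩ := h1
      exact absurd (ident τ₀ 0 h z) hz
    · exact h
  obtain ⟨r₀, hr₀, hr₀'⟩ := Metric.eventually_nhds_iff.mp (eventually_nhdsWithin_iff.mp hne)
  set r := min r₀ ε / 2 with hr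
  have hrpos : 0 < r := by have := lt_min hr₀ hε; linarith
  have hrr : r < r₀ := by have := min_le_left r₀ ε; linarith
  have hrε : r < ε := by have := min_le_right r₀ ε; linarith
  have hsph : ∀ z ∈ Metric.sphere (0 : ℂ) r, 0 < ‖Θ τ₀ z‖ := by
    intro z hz
    have hz' : ‖z‖ = r := by simpa using hz
    refine norm_pos_iff.mpr (hr₀' (by rw [dist_zero_right]; linarith) ?_)
    intro h; simp at h; rw [h] at hz'; simp at hz'; linarith
  obtain ⟨z₁, hz₁, hmin⟩ := (isCompact_sphere (0 : ℂ) r).exists_isMinOn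
    (NormedSpace.sphere_nonempty.mpr hrpos.le)
    (f := fun z => ‖Θ τ₀ z‖) (hd τ₀).continuous.norm.continuousOn
  set δ := ‖Θ τ₀ z₁‖ with hδ
  have hδpos : 0 < δ := hsph z₁ hz₁
  have e1 : ∀ᶠ τ in 𝓝 τ₀, ∀ z ∈ Metric.sphere (0 : ℂ) r, δ / 2 < ‖Θ τ z‖ := by
    apply (isCompact_sphere (0 : ℂ) r).eventually_forall_of_forall_eventually
    intro z hz
    have : δ / 2 < ‖Θ τ₀ z‖ := by have := hmin hz; simp at this; linarith
    exact (hc.norm.tendsto (τ₀, z)).eventually (lt_mem_nhds this)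
  have e2 : ∀ᶠ τ in 𝓝 τ₀, ‖Θ τ 0‖ < δ / 8 := by
    have hcont : Continuous fun τ => ‖Θ τ 0‖ := (hc.comp (by fun_prop : Continuous fun τ : T => (τ, (0:ℂ)))).norm
    refine (hcont.tendsto τ₀).eventually (gt_mem_nhds ?_)
    rw [h0]; simpa using hδpos
  filter_upwards [e1, e2] with τ h1 h2
  have hsub := DiffContOnCl.ball_subset_image_closedBall (f := Θ τ) (z₀ := 0) (r := r) (ε := 3 * δ / 8)
    (hd τ).diffContOnCl hrpos ?_ ?_
  · have : (0 : ℂ) ∈ Metric.ball (Θ τ 0) (3 * δ / 8 / 2) := by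
      rw [Metric.mem_ball, dist_zero_left]; linarith
    obtain ⟨z, hz, hz'⟩ := hsub this
    refine ⟨z, ?_, hz'⟩
    have : ‖z‖ ≤ r := by simpa using hz
    linarith
  · intro z hz
    have := h1 z hz
    have := norm_sub_norm_le (Θ τ z) (Θ τ 0)
    linarith
  · by_contra hcon
    rw [not_frequently] at hcon
    have := ident τ (Θ τ 0) (by simpa using hcon) z₁
    have h3 := h1 z₁ hz₁
    rw [this] at h3
    linarith

/-- Stability of nearest points: for small parameters, the zero set of `Θ τ` in the compact set
`B` is nonempty and all minimisers of `N` on it lie in a given neighbourhood `U` of the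
minimisers of `N` on the zero set of `Θ τ₀`. -/
theorem minimisers_stable {T V : Type*} [TopologicalSpace T] [NormedAddCommGroup V]
    [NormedSpace ℂ V] {Θ : T → V → ℂ} {τ₀ : T}
    (hc : Continuous fun p : T × V => Θ p.1 p.2) (hd : ∀ τ w e, Differentiable ℂ fun z : ℂ => Θ τ (w + z • e))
    {N : V → ℝ} (hN : Continuous N) {B U : Set V} (hB : IsCompact B) (hU : IsOpen U)
    {p : V} (hpB : B ∈ 𝓝 p) (hp : Θ τ₀ p = 0)
    (hmin : ∀ w ∈ B, Θ τ₀ w = 0 → w ∉ U → N p < N w)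
    (hline : ∃ e, ∃ z : ℂ, Θ τ₀ (p + z • e) ≠ 0) :
    ∀ᶠ τ in 𝓝 τ₀, ∃ w ∈ B, w ∈ U ∧ Θ τ w = 0 ∧ ∀ w' ∈ B, Θ τ w' = 0 →
      N w ≤ N w' ∧ (w' ∉ U → N w < N w') := by
  have hA : IsCompact (B \ U) := hB.diff hU
  have e1 : ∀ᶠ y : T × ℝ in 𝓝 (τ₀, 0), ∀ w ∈ B \ U, Θ y.1 w ≠ 0 ∨ N p + y.2 < N w := by
    apply hA.eventually_forall_of_forall_eventually
    intro w hw
    have hc' : Continuous fun q : (T × ℝ) × V => Θ q.1.1 q.2 :=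
      hc.comp (by fun_prop : Continuous fun q : (T × ℝ) × V => (q.1.1, q.2))
    by_cases h : Θ τ₀ w = 0
    · have hlt := hmin w hw.1 h hw.2
      have : ∀ᶠ q : (T × ℝ) × V in 𝓝 ((τ₀, 0), w), N p + q.1.2 < N q.2 := by
        have c1 : Continuous fun q : (T × ℝ) × V => N p + q.1.2 := by fun_prop
        have c2 : Continuous fun q : (T × ℝ) × V => N q.2 := by fun_prop
        exact (c1.tendsto _).eventually_lt (c2.tendsto _) (by simpa using hlt)
      exact this.mono fun q hq => Or.inr hq
    · have := (hc'.tendsto ((τ₀, 0), w)).eventually (isOpen_ne.mem_nhds h)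
      exact this.mono fun q hq => Or.inl hq
  rw [nhds_prod_eq] at e1
  obtain ⟨P, hP, Q, hQ, hPQ⟩ := eventually_prod_iff.mp e1
  obtain ⟨η, hη, hη'⟩ := Metric.eventually_nhds_iff.mp hQ
  obtain ⟨e, z₁, hz₁⟩ := hline
  -- points of the line close to `p` stay in `B` and do not increase `N` too much
  have e2 : ∀ᶠ z : ℂ in 𝓝 0, p + z • e ∈ B ∧ N (p + z • e) < N p + η / 2 := by
    have c : Continuous fun z : ℂ => p + z • e := by fun_prop
    have c0 := c.tendsto 0
    simp only [zero_smul, add_zero] at c0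
    refine (c0.eventually hpB).and ?_
    exact (((hN.tendsto p).comp c0).eventually (gt_mem_nhds (by linarith)))
  obtain ⟨ε, hε, hε'⟩ := Metric.eventually_nhds_iff.mp e2
  have e3 := exists_root_near (Θ := fun τ z => Θ τ (p + z • e)) (τ₀ := τ₀)
    (hc.comp (by fun_prop : Continuous fun q : T × ℂ => (q.1, p + q.2 • e)))
    (fun τ => hd τ p e) (by simpa using hp) ⟨z₁, hz₁⟩ hε
  filter_upwards [e3, hP] with τ h1 h2
  obtain ⟨z, hz, hz0⟩ := h1
  obtain ⟨hzB, hzN⟩ := hε' (y := z) (by simpa using hz)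
  have hcτ : Continuous (Θ τ) := hc.comp (by fun_prop : Continuous fun w : V => (τ, w))
  have hK : IsCompact (B ∩ {w | Θ τ w = 0}) := hB.inter_right (isClosed_eq hcτ continuous_const)
  obtain ⟨w, hw, hwmin⟩ := hK.exists_isMinOn ⟨_, hzB, hz0⟩ hN.continuousOn
  have hwle : N w ≤ N (p + z • e) := hwmin ⟨hzB, hz0⟩
  have hout : ∀ w' ∈ B, Θ τ w' = 0 → w' ∉ U → N w < N w' := by
    intro w' hw' h0 hU'
    rcases hPQ h2 (hη' (y := η / 2) (by
      rw [dist_zero_right, Real.norm_eq_abs, abs_of_pos] <;> linarith)) w' ⟨hw', hU'⟩ with h4 | h4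
    · exact absurd h0 h4
    · simp at h4
      linarith
  refine ⟨w, hw.1, ?_, hw.2, fun w' hw' h0 => ⟨hwmin ⟨hw', h0⟩, hout w' hw' h0⟩⟩
  by_contra hwU
  exact lt_irrefl _ (hout w hw.1 hw.2 hwU)

end

/-! ### Lagrange multipliers for nearest points -/

section

open MvPolynomial Filter Topology

variable {n : ℕ}

/-- Squared Hermitian distance from `c`. -/
noncomputable def sqDist (c w : Vc n) : ℝ := ∑ i, ‖w i - c i‖ ^ 2

theorem continuous_sqDist (c : Vc n) : Continuous (sqDist c) := by
  unfold sqDist; fun_prop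

theorem hasStrictFDerivAt_sqDist (c w : Vc n) :
    ∃ L : Vc n →L[ℝ] ℝ, HasStrictFDerivAt (sqDist c) L w ∧
      ∀ v, L v = 2 * (∑ i, (starRingEnd ℂ) (w i - c i) * v i).re := by
  have h : ∀ i, HasStrictFDerivAt (fun w : Vc n => ‖w i - c i‖ ^ 2)
      (2 • (innerSL ℝ (w i - c i)).comp (ContinuousLinearMap.proj (R := ℝ) i : Vc n →L[ℝ] ℂ)) w := by
    intro i
    have h1 : HasStrictFDerivAt (fun w : Vc n => w i - c i)
      (ContinuousLinearMap.proj (R := ℝ) i : Vc n →L[ℝ] ℂ) w :=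
      (ContinuousLinearMap.proj (R := ℝ) (φ := fun _ : Fin n => ℂ) i).hasStrictFDerivAt.sub_const _
    have h2 := (hasStrictFDerivAt_norm_sq (w i - c i)).comp w h1
    exact h2.congr_fderiv (by ext; simp)
  refine ⟨_, HasStrictFDerivAt.fun_sum (u := Finset.univ) fun i _ => h i, fun v => ?_⟩
  simp only [_root_.sum_apply, Complex.re_sum, Finset.mul_sum]
  refine Finset.sum_congr rfl fun i _ => ?_
  simp [Complex.inner]
  ring

theorem linear_multiple {a b : Fin n → ℂ} (ha : ∃ i, a i ≠ 0)
    (h : ∀ v : Fin n → ℂ, ∑ i, a i * v i = 0 → ∑ i, b i * v i = 0) :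
    ∃ μ : ℂ, ∀ i, b i = μ * a i := by
  obtain ⟨i, hi⟩ := ha
  refine ⟨b i / a i, fun j => ?_⟩
  have := h (a i • Pi.single j 1 - a j • Pi.single i 1) (by
    simp [mul_sub, Finset.sum_sub_distrib, Pi.single_apply]; ring)
  simp [mul_sub, Finset.sum_sub_distrib, Pi.single_apply] at this
  field_simp
  linear_combination this

/-- Lagrange multipliers: at a point of a smooth part of a hypersurface nearest to `c`, the
conjugate of the displacement is proportional to the gradient of the equation. -/
theorem lagrange_nearest (F : MvPolynomial (Fin n) ℂ) (k c w : Vc n) {u : ℂ} (hu : u ≠ 0)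
    {B : Set (Vc n)} (hB : B ∈ 𝓝 w) (h0 : eval (k + u • w) F = 0)
    (hmin : ∀ w' ∈ B, eval (k + u • w') F = 0 → sqDist c w ≤ sqDist c w')
    (hg : ∃ i, eval (k + u • w) (pderiv i F) ≠ 0) :
    ∃ μ : ℂ, ∀ i, (starRingEnd ℂ) (c i - w i) = μ * eval (k + u • w) (pderiv i F) := by
  obtain ⟨L, hL, hLv⟩ := hasStrictFDerivAt_sqDist c w
  have hF := (hasStrictFDerivAt_eval F (k + u • w)).comp w
    (((hasStrictFDerivAt_id w).const_smul u).const_add k)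
  have hFr := hF.restrictScalars ℝ
  set D := ((∑ i, eval (k + u • w) (pderiv i F) •
    (ContinuousLinearMap.proj (R := ℂ) i : Vc n →L[ℂ] ℂ)).comp
      (u • ContinuousLinearMap.id ℂ (Vc n))) with hD
  have hDv : ∀ v, D v = u * ∑ i, eval (k + u • w) (pderiv i F) * v i := by
    intro v; simp [hD, Finset.mul_sum]
  have hext : IsLocalExtrOn (sqDist c) {x | (eval (k + u • x)) F = (eval (k + u • w)) F} w := by
    left
    filter_upwards [mem_nhdsWithin_of_mem_nhds hB, self_mem_nhdsWithin] with x hx hx'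
    exact hmin x hx (by rw [hx', h0])
  obtain ⟨Λ, Λ₀, hne, hΛ⟩ := hext.exists_linear_map_of_hasStrictFDerivAt hFr hL
  obtain ⟨i, hi⟩ := hg
  have hsurj : ∀ y : ℂ, ∃ v, D v = y := by
    intro y
    refine ⟨Pi.single i (y / (u * eval (k + u • w) (pderiv i F))), ?_⟩
    rw [hDv]; simp [Pi.single_apply]; field_simp
  have hΛ0 : Λ₀ ≠ 0 := by
    intro h
    apply hne
    rw [h]
    refine Prod.ext ?_ rfl
    refine LinearMap.ext fun y => ?_
    obtain ⟨v, hv⟩ := hsurj y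
    have := hΛ v
    rw [ContinuousLinearMap.coe_restrictScalars', hv, h] at this
    simpa using this
  have key : ∀ v : Vc n, ∑ i, eval (k + u • w) (pderiv i F) * v i = 0 →
      (∑ i, (starRingEnd ℂ) (w i - c i) * v i).re = 0 := by
    intro v hv
    have h1 := hΛ v
    have h2 : D v = 0 := by rw [hDv, hv, mul_zero]
    rw [ContinuousLinearMap.coe_restrictScalars', h2, map_zero, zero_add, smul_eq_mul, hLv] at h1
    rcases mul_eq_zero.mp h1 with h | h
    · exact absurd h hΛ0
    · linarith
  have key2 : ∀ v : Vc n, ∑ i, eval (k + u • w) (pderiv i F) * v i = 0 →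
      ∑ i, (starRingEnd ℂ) (c i - w i) * v i = 0 := by
    intro v hv
    have h1 := key v hv
    have h2 := key (Complex.I • v) (by
      simp only [Pi.smul_apply, smul_eq_mul, mul_left_comm _ Complex.I]
      rw [← Finset.mul_sum, hv, mul_zero])
    simp only [Pi.smul_apply, smul_eq_mul, mul_left_comm _ Complex.I] at h2
    rw [← Finset.mul_sum] at h2
    have h3 : ∑ i, (starRingEnd ℂ) (w i - c i) * v i = 0 := by
      apply Complex.ext
      · simpa using h1
      · simpa using h2
    have h4 : ∑ i, (starRingEnd ℂ) (c i - w i) * v i = - ∑ i, (starRingEnd ℂ) (w i - c i) * v i := by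
      rw [← Finset.sum_neg_distrib]
      exact Finset.sum_congr rfl fun i _ => by simp; ring
    rw [h4, h3, neg_zero]
  exact linear_multiple ⟨i, hi⟩ key2

/-- If `g` vanishes at `w₀`, then `w₀` is the strictly nearest point of the zero set of `g`, near
`w₀`, to a point displaced from `w₀` along the complex conjugate of the gradient of `g`. -/
theorem nearest_unique (g : MvPolynomial (Fin n) ℂ) (w₀ : Vc n) (h0 : eval w₀ g = 0) :
    ∃ ρ : ℝ, 0 < ρ ∧ ∀ w, ‖w - w₀‖ ≤ 1 → w ≠ w₀ → eval w g = 0 →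
      sqDist (fun i => w₀ i + ρ * (starRingEnd ℂ) (eval w₀ (pderiv i g))) w₀ <
      sqDist (fun i => w₀ i + ρ * (starRingEnd ℂ) (eval w₀ (pderiv i g))) w := by
  obtain ⟨M, hM, hT⟩ := taylor_bound g w₀
  refine ⟨1 / (4 * (M + 1)), by positivity, fun w hw hne hgw => ?_⟩
  set ρ : ℝ := 1 / (4 * (M + 1)) with hρ
  have hρpos : 0 < ρ := by positivity
  have h1 := hT w hw
  rw [hgw, h0] at h1
  simp only [sub_zero, zero_sub, norm_neg] at h1
  set a : Fin n → ℂ := fun i => eval w₀ (pderiv i g)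
  have e : ∀ i, ‖w i - (w₀ i + ρ * (starRingEnd ℂ) (a i))‖ ^ 2 = ‖w i - w₀ i‖ ^ 2
      - 2 * ρ * (a i * (w i - w₀ i)).re + ‖w₀ i - (w₀ i + ρ * (starRingEnd ℂ) (a i))‖ ^ 2 := by
    intro i
    simp only [← Complex.normSq_eq_norm_sq, Complex.normSq_apply]
    simp
    ring
  have e2 : sqDist (fun i => w₀ i + ρ * (starRingEnd ℂ) (a i)) w =
      ∑ i, ‖w i - w₀ i‖ ^ 2 - 2 * ρ * (∑ i, a i * (w i - w₀ i)).re +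
      sqDist (fun i => w₀ i + ρ * (starRingEnd ℂ) (a i)) w₀ := by
    simp only [sqDist, e, Finset.sum_add_distrib, Finset.sum_sub_distrib, Complex.re_sum, Finset.mul_sum]
  rw [e2]
  have h2 : ‖w - w₀‖ ^ 2 ≤ ∑ i, ‖w i - w₀ i‖ ^ 2 := by
    have : ‖w - w₀‖ ≤ Real.sqrt (∑ i, ‖w i - w₀ i‖ ^ 2) := by
      rw [pi_norm_le_iff_of_nonneg (Real.sqrt_nonneg _)]
      intro i
      apply Real.le_sqrt_of_sq_le
      exact Finset.single_le_sum (f := fun i => ‖w i - w₀ i‖ ^ 2) (fun _ _ => by positivity) (Finset.mem_univ i)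
    calc _ ≤ Real.sqrt (∑ i, ‖w i - w₀ i‖ ^ 2) ^ 2 := by gcongr
      _ = _ := Real.sq_sqrt (by positivity)
  have h3 : (∑ i, a i * (w i - w₀ i)).re ≤ M * ‖w - w₀‖ ^ 2 := (Complex.re_le_norm _).trans h1
  have h4 : 0 < ‖w - w₀‖ ^ 2 := by
    have : 0 < ‖w - w₀‖ := norm_pos_iff.mpr (sub_ne_zero.mpr hne)
    positivity
  have h5 : 2 * ρ * (∑ i, a i * (w i - w₀ i)).re ≤ 2 * ρ * (M * ‖w - w₀‖ ^ 2) := by gcongr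
  have h6 : 2 * ρ * M < 1 := by
    rw [hρ]; 
    have : 2 * (1 / (4 * (M + 1))) * M = (2 * M) / (4 * (M + 1)) := by ring
    rw [this, div_lt_one (by positivity)]; linarith
  nlinarith
end

/-! ### Elimination of one variable and lowest terms -/

section

open MvPolynomial Filter Topology

variable {n : ℕ}

/-- Polynomials in the distinguished variable `i` over the ring of polynomials in the others. -/
noncomputable def splitVar (i : Fin n) :
    MvPolynomial (Fin n) ℂ ≃ₐ[ℂ] Polynomial (MvPolynomial {j : Fin n // j ≠ i} ℂ) :=
  (renameEquiv ℂ (Equiv.optionSubtypeNe i).symm).trans (optionEquivLeft ℂ _)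

theorem splitVar_X_self (i : Fin n) : splitVar i (X i) = Polynomial.X := by
  simp [splitVar, optionEquivLeft_X_none]

theorem splitVar_X_ne (i : Fin n) (j : {j : Fin n // j ≠ i}) :
    splitVar i (X j.1) = Polynomial.C (X j) := by
  simp [splitVar, optionEquivLeft_X_some, Equiv.optionSubtypeNe_symm_of_ne j.2]

theorem splitVar_pderiv (i : Fin n) (f : MvPolynomial (Fin n) ℂ) :
    splitVar i (pderiv i f) = Polynomial.derivative (splitVar i f) := by
  induction f using MvPolynomial.induction_on with
  | C a =>
    have : splitVar i (C a) = Polynomial.C (C a) := by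
      have := (splitVar i).commutes a
      rw [MvPolynomial.algebraMap_eq] at this
      rw [this]; rfl
    simp [this]
  | add p q hp hq => simp [hp, hq]
  | mul_X p j hp =>
    rw [Derivation.leibniz, pderiv_X]
    by_cases h : j = i
    · subst h
      simp [hp, splitVar_X_self]; ring
    · have := splitVar_X_ne i ⟨j, h⟩
      simp only at this
      simp [hp, this, h]; ring

theorem splitVar_rename (i : Fin n) (c : MvPolynomial {j : Fin n // j ≠ i} ℂ) :
    splitVar i (rename Subtype.val c) = Polynomial.C c := by
  induction c using MvPolynomial.induction_on with
  | C a =>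
    have := (splitVar i).commutes a
    rw [MvPolynomial.algebraMap_eq] at this
    rw [rename_C, this]; rfl
  | add p q hp hq => simp [hp, hq]
  | mul_X p j hp => simp [hp, splitVar_X_ne]

/-- An irreducible polynomial and a nonzero partial derivative of it have, up to eliminating
the variable, no common zero: some nonzero polynomial not involving the `i`-th variable lies in the
ideal they generate. -/
theorem exists_elim (F : MvPolynomial (Fin n) ℂ) (hF : Irreducible F) (i : Fin n)
    (hi : pderiv i F ≠ 0) :
    ∃ A B d : MvPolynomial (Fin n) ℂ, A * F + B * pderiv i F = d ∧ d ≠ 0 ∧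
      ∀ (v : Vc n) (z : ℂ), eval (v + z • Pi.single i 1) d = eval v d := by
  set Q := MvPolynomial {j : Fin n // j ≠ i} ℂ
  set K := FractionRing Q
  set P := splitVar i F with hP
  have hPirr : Irreducible P := (MulEquiv.irreducible_iff (splitVar i)).mpr hF
  have hP' : Polynomial.derivative P ≠ 0 := by
    rw [hP, ← splitVar_pderiv]; simpa using hi
  have hdeg : P.natDegree ≠ 0 := by
    intro h
    rw [Polynomial.natDegree_eq_zero] at h
    obtain ⟨x, hx⟩ := h
    rw [← hx] at hP'; simp at hP'
  have hprim : P.IsPrimitive := hPirr.isPrimitive hdeg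
  have hK : Irreducible (P.map (algebraMap Q K)) :=
    (Polynomial.IsPrimitive.irreducible_iff_irreducible_map_fraction_map hprim).mp hPirr
  obtain ⟨a, b, hab⟩ := hK.separable
  obtain ⟨α, hα, hα'⟩ := IsLocalization.integerNormalization_spec (nonZeroDivisors Q) a
  obtain ⟨β, hβ, hβ'⟩ := IsLocalization.integerNormalization_spec (nonZeroDivisors Q) b
  set a' := IsLocalization.integerNormalization (nonZeroDivisors Q) a
  set b' := IsLocalization.integerNormalization (nonZeroDivisors Q) b
  have key : Polynomial.C β * a' * P + Polynomial.C α * b' * Polynomial.derivative P =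
      Polynomial.C (α * β) := by
    apply Polynomial.map_injective (algebraMap Q K) (IsFractionRing.injective Q K)
    simp only [Polynomial.map_add, Polynomial.map_mul, Polynomial.map_C, hα', hβ',
      Polynomial.derivative_map] at *
    simp only [Algebra.smul_def, Polynomial.algebraMap_apply]
    rw [map_mul, Polynomial.C_mul]
    linear_combination (Polynomial.C (algebraMap Q K α)) * (Polynomial.C (algebraMap Q K β)) * hab
  refine ⟨(splitVar i).symm (Polynomial.C β * a'), (splitVar i).symm (Polynomial.C α * b'),
    rename Subtype.val (α * β), ?_, ?_, ?_⟩
  · apply (splitVar i).injective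
    rw [splitVar_rename, map_add, map_mul _ _ F, map_mul _ _ (pderiv i F),
      AlgEquiv.apply_symm_apply, AlgEquiv.apply_symm_apply, splitVar_pderiv, key]
  · rw [Ne, map_eq_zero_iff _ (rename_injective _ Subtype.val_injective)]
    exact mul_ne_zero (nonZeroDivisors.ne_zero hα) (nonZeroDivisors.ne_zero hβ)
  · intro v z
    rw [eval_rename, eval_rename]
    congr 2
    ext j
    simp [j.2]

theorem continuous_ev2 (Q : Polynomial (MvPolynomial (Fin n) ℂ)) :
    Continuous fun p : ℂ × Vc n => Q.eval₂ (eval p.2) p.1 := by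
  simp only [Polynomial.eval₂_eq_sum_range]
  refine continuous_finsetSum _ fun j _ => ?_
  have := (MvPolynomial.continuous_eval (Q.coeff j)).comp (continuous_snd (X := ℂ) (Y := Vc n))
  exact this.mul (by fun_prop)

theorem continuous_ev3 (P : Polynomial (Polynomial (MvPolynomial (Fin n) ℂ))) :
    Continuous fun p : ℂ × ℂ × Vc n => P.eval₂ (Polynomial.eval₂RingHom (eval p.2.2) p.1) p.2.1 := by
  simp only [Polynomial.eval₂_eq_sum_range]
  refine continuous_finsetSum _ fun j _ => ?_
  have := (continuous_ev2 (P.coeff j)).comp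
    (by fun_prop : Continuous fun p : ℂ × ℂ × Vc n => (p.1, p.2.2))
  exact this.mul (by fun_prop)

theorem exists_pow_mul {R : Type*} [CommRing R] [IsDomain R] {P : Polynomial R} (hP : P ≠ 0) :
    ∃ (b : ℕ) (Q : Polynomial R), P = Polynomial.X ^ b * Q ∧ Q.coeff 0 ≠ 0 := by
  obtain ⟨q, hq, hnd⟩ := Polynomial.exists_eq_pow_rootMultiplicity_mul_and_not_dvd P hP 0
  refine ⟨_, q, by simpa using hq, ?_⟩
  rwa [map_zero, sub_zero, Polynomial.X_dvd_iff] at hnd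

/-- The lexicographically lowest term of `d (s + t e + u w)` as `u → 0` and then `t → 0`. -/
theorem exists_lex_lowest (d : MvPolynomial (Fin n) ℂ) (hd : d ≠ 0) (s e : Vc n) :
    ∃ (a b : ℕ) (D' : ℂ × ℂ × Vc n → ℂ) (D'' : ℂ × Vc n → ℂ) (δ : MvPolynomial (Fin n) ℂ),
      Continuous D' ∧ Continuous D'' ∧ δ ≠ 0 ∧
      (∀ t u w, eval (s + t • e + u • w) d = u ^ b * D' (t, u, w)) ∧
      (∀ t w, D' (t, 0, w) = t ^ a * D'' (t, w)) ∧ ∀ w, D'' (0, w) = eval w δ := by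
  set P : Polynomial (Polynomial (MvPolynomial (Fin n) ℂ)) :=
    aeval (fun i => Polynomial.C (Polynomial.C (C (s i)) + Polynomial.X * Polynomial.C (C (e i)))
      + Polynomial.X * Polynomial.C (Polynomial.C (X i))) d with hPdef
  have hev : ∀ t u w, P.eval₂ (Polynomial.eval₂RingHom (eval w) t) u =
      eval (s + t • e + u • w) d := by
    intro t u w
    have h : (Polynomial.eval₂RingHom (Polynomial.eval₂RingHom (eval w) t) u).comp
        (aeval (R := ℂ) (fun i => Polynomial.C (Polynomial.C (C (s i)) + Polynomial.X *
          Polynomial.C (C (e i))) + Polynomial.X * Polynomial.C (Polynomial.C (X i)))).toRingHom =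
        eval (s + t • e + u • w) := by
      apply MvPolynomial.ringHom_ext
      · intro a
        simp [IsScalarTower.algebraMap_apply ℂ (Polynomial (MvPolynomial (Fin n) ℂ))
          (Polynomial (Polynomial (MvPolynomial (Fin n) ℂ)))]
      · intro i
        simp
        ring
    exact DFunLike.congr_fun h d
  have hP : P ≠ 0 := by
    intro h
    apply hd
    apply MvPolynomial.funext
    intro v
    have := hev 0 1 (v - s)
    rw [h] at this
    simpa using this.symm
  obtain ⟨b, Q, hQ, hQ0⟩ := exists_pow_mul hP
  obtain ⟨a, R, hR, hR0⟩ := exists_pow_mul hQ0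
  refine ⟨a, b, _, _, R.coeff 0, continuous_ev3 Q, continuous_ev2 R, hR0, ?_, ?_, ?_⟩
  · intro t u w
    rw [← hev, hQ, Polynomial.eval₂_mul, Polynomial.eval₂_pow, Polynomial.eval₂_X]
  · intro t w
    simp only [Polynomial.eval₂_at_zero]
    rw [hR]; simp
  · intro w
    simp [Polynomial.eval₂_at_zero]
end

/-! ### Limits of conormal vectors -/

section

open MvPolynomial Filter Topology

variable {n : ℕ}

theorem eval_add_single_of_pderiv_eq_zero {F : MvPolynomial (Fin n) ℂ} {i : Fin n}
    (h : pderiv i F = 0) (v : Vc n) (z : ℂ) : eval (v + z • Pi.single i 1) F = eval v F := by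
  have h1 : Polynomial.derivative (splitVar i F) = 0 := by rw [← splitVar_pderiv, h, map_zero]
  obtain ⟨c, hc⟩ := Polynomial.natDegree_eq_zero.mp
    (Polynomial.derivative_eq_zero.mp h1)
  have : F = rename Subtype.val c := by
    apply (splitVar i).injective; rw [splitVar_rename, hc]
  rw [this, eval_rename, eval_rename]
  congr 2
  ext j
  simp [j.2]

theorem hasDerivAt_eval_single (g : MvPolynomial (Fin n) ℂ) (w : Vc n) (i : Fin n) :
    HasDerivAt (fun z : ℂ => eval (w + z • Pi.single i 1) g) (eval w (pderiv i g)) 0 := by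
  have h1 := (hasStrictFDerivAt_eval g (w + (0:ℂ) • Pi.single i 1)).hasFDerivAt
  have h2 : HasDerivAt (fun z : ℂ => w + z • (Pi.single i 1 : Vc n)) (Pi.single i 1 : Vc n) 0 := by
    have := ((hasDerivAt_id (0:ℂ)).smul_const (Pi.single i 1 : Vc n)).const_add w
    simpa using this
  have := h1.comp_hasDerivAt (0:ℂ) h2
  refine this.congr_deriv ?_
  simp [Pi.single_apply]

theorem eventually_eval_line_ne {b : MvPolynomial (Fin n) ℂ} {s e : Vc n}
    (h : eval (s + e) b ≠ 0) : ∀ᶠ t in 𝓝[≠] (0 : ℂ), eval (s + t • e) b ≠ 0 := by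
  have hne : linePoly b s e ≠ 0 := by
    intro h0
    have := eval_linePoly b s e 1
    rw [h0] at this
    simp at this
    exact h this.symm
  have hfin : {t | (linePoly b s e).IsRoot t}.Finite := Polynomial.finite_setOfPred_isRoot hne
  have : ({t | (linePoly b s e).IsRoot t} \ {0})ᶜ ∈ 𝓝 (0 : ℂ) :=
    (hfin.sdiff.isClosed.isOpen_compl).mem_nhds (by simp)
  rw [eventually_nhdsWithin_iff]
  filter_upwards [this] with t ht h0 hz
  apply ht
  refine ⟨?_, h0⟩
  show Polynomial.eval t _ = 0
  rw [eval_linePoly, hz]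

/-- The points of a hypersurface cone `G = 0` at which a polynomial `δ` independent of the
`i`-th variable does not vanish are dense near points where `G` is not constant in direction `i`. -/
theorem exists_approx {G δ : MvPolynomial (Fin n) ℂ} (hδ : δ ≠ 0) {i : Fin n}
    (hδi : ∀ (v : Vc n) (z : ℂ), eval (v + z • Pi.single i 1) δ = eval v δ) {w₀ : Vc n}
    (h0 : eval w₀ G = 0) (h1 : ∃ z : ℂ, eval (w₀ + z • Pi.single i 1) G ≠ 0) :
    w₀ ∈ closure {w | eval w G = 0 ∧ eval w δ ≠ 0} := by
  obtain ⟨y, hy⟩ : ∃ y, eval y δ ≠ 0 := by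
    by_contra hcon
    push Not at hcon
    exact hδ (MvPolynomial.funext fun v => by simpa using hcon v)
  have e1 := eventually_eval_line_ne (b := δ) (s := w₀) (e := y - w₀) (by simpa using hy)
  rw [Metric.mem_closure_iff]
  intro ε hε
  have hcont : Continuous fun p : ℂ × ℂ => w₀ + p.1 • (y - w₀) + p.2 • (Pi.single i 1 : Vc n) := by
    fun_prop
  have e2 : ∀ᶠ p : ℂ × ℂ in 𝓝 0, dist w₀ (w₀ + p.1 • (y - w₀) + p.2 • (Pi.single i 1 : Vc n)) < ε := by
    have := (hcont.tendsto 0).eventually (Metric.ball_mem_nhds _ (by simpa using hε))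
    filter_upwards [this] with p hp
    rw [dist_comm]; simpa using hp
  obtain ⟨r, hr, hr'⟩ := Metric.eventually_nhds_iff.mp e2
  have e3 := exists_root_near (Θ := fun (τ z : ℂ) => eval (w₀ + τ • (y - w₀) + z • (Pi.single i 1 : Vc n)) G)
    (τ₀ := 0) ((MvPolynomial.continuous_eval G).comp hcont)
    (fun τ => differentiable_eval_line G _ _) (by simpa using h0) (by simpa using h1) hr
  have e4 : ∀ᶠ t in 𝓝[≠] (0:ℂ), ‖t‖ < r := by
    refine mem_nhdsWithin_of_mem_nhds ?_
    simpa [Metric.ball, dist_zero_right] using Metric.ball_mem_nhds (0:ℂ) hr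
  obtain ⟨t, ht1, ht2, z, hz, hz0⟩ := (e1.and (e4.and (e3.filter_mono nhdsWithin_le_nhds))).exists
  have hδz := hδi (w₀ + t • (y - w₀)) z
  have hmem : w₀ + t • (y - w₀) + z • (Pi.single i 1 : Vc n) ∈
      {w | eval w G = 0 ∧ eval w δ ≠ 0} := by
    constructor
    · exact hz0
    · rw [hδz]; exact ht1
  have hd : dist ((t, z) : ℂ × ℂ) 0 < r := by
    rw [dist_zero_right, Prod.norm_def]; exact max_lt ht2 hz
  have hd' := hr' hd
  exact ⟨_, hmem, hd'⟩

/-- Semicontinuity of tangent cones.  Let `C` be a closed set containing all pairs `(h, μ ∇F(h))`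
with `F(h) = 0`, where `F` is irreducible and has order at least `m` along the linear space `K`.
If `G` is the degree `m` part of `F` at `s ∈ K` and `g` vanishes on `G = 0`, then the pair formed by
`s` and the gradient of `g` at a point of `G = 0` is a limit of pairs in `C` over the open
part `b ≠ 0` of `K`. -/
theorem analytic_main (F : MvPolynomial (Fin n) ℂ) (hF : Irreducible F)
    (C : Set (Vc n × Vc n)) (hC : IsClosed C) (hCs : ∀ h x, ∀ β : ℂ, (h, x) ∈ C → (h, β • x) ∈ C)
    (hCF : ∀ h, eval h F = 0 → ∀ μ : ℂ, (h, fun i => μ * eval h (pderiv i F)) ∈ C)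
    (m : ℕ) (K : Submodule ℂ (Vc n))
    (hord : ∀ k ∈ K, ∀ j < m, homogeneousComponent j (shiftPoly F k) = 0)
    (s : Vc n) (hs : s ∈ K) (w₀ : Vc n) (hw₀ : eval w₀ (homogeneousComponent m (shiftPoly F s)) = 0)
    (g : MvPolynomial (Fin n) ℂ)
    (hg : ∀ w, eval w (homogeneousComponent m (shiftPoly F s)) = 0 → eval w g = 0)
    (hgrad : ∃ i, eval w₀ (pderiv i g) ≠ 0)
    (b : MvPolynomial (Fin n) ℂ) (k₁ : Vc n) (hk₁ : k₁ ∈ K) (hb : eval k₁ b ≠ 0) :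
    (s, fun i => eval w₀ (pderiv i g)) ∈
      closure {p : Vc n × Vc n | p ∈ C ∧ p.1 ∈ K ∧ eval p.1 b ≠ 0} := by
  set G := homogeneousComponent m (shiftPoly F s) with hG
  set A := {p : Vc n × Vc n | p ∈ C ∧ p.1 ∈ K ∧ eval p.1 b ≠ 0} with hA
  obtain ⟨i, hi⟩ := hgrad
  -- `G` is not constant along the `i`-th direction at any zero where `∂ᵢ g ≠ 0`
  have hline : ∀ w, eval w (pderiv i g) ≠ 0 → ∃ z : ℂ, eval (w + z • Pi.single i 1) G ≠ 0 := by
    intro w hwi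
    by_contra hcon
    push Not at hcon
    apply hwi
    have h1 := hasDerivAt_eval_single g w i
    have : (fun z : ℂ => eval (w + z • Pi.single i 1) g) = fun _ => 0 := by
      funext z; exact hg _ (hcon z)
    rw [this] at h1
    exact h1.unique (hasDerivAt_const _ _)
  have hFi : pderiv i F ≠ 0 := by
    intro h
    obtain ⟨z, hz⟩ := hline w₀ hi
    apply hz
    have hpoly : linePoly F s (w₀ + z • Pi.single i 1) = linePoly F s w₀ := by
      apply Polynomial.funext
      intro u
      rw [eval_linePoly, eval_linePoly, smul_add, ← add_assoc, smul_smul,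
        eval_add_single_of_pderiv_eq_zero h]
    rw [hG, ← coeff_linePoly, hpoly, coeff_linePoly]
    exact hw₀
  obtain ⟨P, Q, d, hPQ, hd, hdi⟩ := exists_elim F hF i hFi
  set e := k₁ - s with he
  have hkt : ∀ t : ℂ, s + t • e ∈ K := fun t => K.add_mem hs (K.smul_mem t (K.sub_mem hk₁ hs))
  obtain ⟨a, q, D', D'', δ, hD', hD'', hδ, hdD', hDD, hDδ⟩ := exists_lex_lowest d hd s e
  -- the lowest term inherits independence of the `i`-th variable
  have hD'i : ∀ t u w (z : ℂ), D' (t, u, w + z • Pi.single i 1) = D' (t, u, w) := by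
    intro t u w z
    have h1 : (fun u => D' (t, u, w + z • Pi.single i 1)) = fun u => D' (t, u, w) := by
      refine Continuous.ext_on (dense_compl_singleton (0:ℂ)) (by fun_prop) (by fun_prop) ?_
      intro u hu
      apply mul_left_cancel₀ (pow_ne_zero q hu)
      rw [← hdD', ← hdD', smul_add, ← add_assoc, smul_smul, hdi]
    exact congrFun h1 u
  have hD''i : ∀ t w (z : ℂ), D'' (t, w + z • Pi.single i 1) = D'' (t, w) := by
    intro t w z
    have h1 : (fun t => D'' (t, w + z • Pi.single i 1)) = fun t => D'' (t, w) := by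
      refine Continuous.ext_on (dense_compl_singleton (0:ℂ)) (by fun_prop) (by fun_prop) ?_
      intro t ht
      apply mul_left_cancel₀ (pow_ne_zero a ht)
      simp only
      rw [← hDD, ← hDD, hD'i]
    exact congrFun h1 t
  have hδi : ∀ (v : Vc n) (z : ℂ), eval (v + z • Pi.single i 1) δ = eval v δ := by
    intro v z; rw [← hDδ, ← hDδ, hD''i]
  obtain ⟨Φ, hΦc, hΦ, hΦ0, hΦd⟩ := exists_quot_linePoly F m
  -- the claim at points where `δ` does not vanish
  have main : ∀ w₁, eval w₁ G = 0 → eval w₁ δ ≠ 0 → eval w₁ (pderiv i g) ≠ 0 →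
      (s, fun i => eval w₁ (pderiv i g)) ∈ closure A := by
    intro w₁ hw₁ hδ₁ hi₁
    obtain ⟨ρ, hρ, hnear⟩ := nearest_unique g w₁ (hg _ hw₁)
    set c : Vc n := fun i => w₁ i + ρ * (starRingEnd ℂ) (eval w₁ (pderiv i g)) with hc
    set B := Metric.closedBall w₁ 1 with hB
    have hBc : IsCompact B := isCompact_closedBall _ _
    obtain ⟨z₁, hz₁⟩ := hline w₁ hi₁
    set ψ : Vc n → Vc n := fun w i => (starRingEnd ℂ) (c i - w i) with hψ
    have hψc : Continuous ψ := by
      refine continuous_pi fun i => ?_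
      exact Complex.continuous_conj.comp (by fun_prop)
    have cΦ0 : Continuous fun p : ℂ × Vc n => Φ (s + p.1 • e, 0, p.2 + z₁ • Pi.single i 1) :=
      hΦc.comp (by fun_prop)
    have ev0 : ∀ᶠ p : ℂ × Vc n in 𝓝 (0, w₁),
        Φ (s + p.1 • e, 0, p.2 + z₁ • Pi.single i 1) ≠ 0 ∧ D'' p ≠ 0 := by
      refine ((cΦ0.tendsto _).eventually (isOpen_ne.mem_nhds ?_)).and
        ((hD''.tendsto _).eventually (isOpen_ne.mem_nhds ?_))
      · simpa [hΦ0] using hz₁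
      · simpa [hDδ] using hδ₁
    obtain ⟨r, hr, hr'⟩ := Metric.eventually_nhds_iff.mp ev0
    -- existence of a nearby pair in `C` lying over `s + t e`
    have step : ∀ ε, 0 < ε → ε < r → ε < 1 → ∀ᶠ t in 𝓝[≠] (0:ℂ),
        ∃ w ∈ Metric.closedBall w₁ ε, (s + t • e, ψ w) ∈ C := by
      intro ε hε hεr hε1
      have hUB : Metric.ball w₁ ε ⊆ B :=
        Metric.ball_subset_closedBall.trans (Metric.closedBall_subset_closedBall hε1.le)
      have e1 := minimisers_stable (T := ℂ) (Θ := fun t w => Φ (s + t • e, 0, w)) (τ₀ := 0)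
        (hΦc.comp (by fun_prop)) (fun τ w e' => hΦd _ _ _ _) (continuous_sqDist c) hBc
        (Metric.isOpen_ball (x := w₁) (ε := ε)) (p := w₁)
        (Metric.closedBall_mem_nhds _ one_pos) (by simpa [hΦ0] using hw₁)
        (by
          intro w hw h0 hwU
          have h0' : eval w G = 0 := by simpa [hΦ0] using h0
          refine hnear w (by rw [← dist_eq_norm]; exact hw) ?_ (hg _ h0')
          rintro rfl
          exact hwU (Metric.mem_ball_self hε))
        ⟨Pi.single i 1, z₁, by simpa [hΦ0] using hz₁⟩
      have e2 : ∀ᶠ t in 𝓝 (0:ℂ), ‖t‖ < r := by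
        filter_upwards [Metric.ball_mem_nhds (0:ℂ) hr] with t ht
        simpa using ht
      filter_upwards [(e1.and e2).filter_mono nhdsWithin_le_nhds, self_mem_nhdsWithin] with t ht ht0
      obtain ⟨⟨p, hpB, hpU, hp0, hpmin⟩, htr⟩ := ht
      have hball : ∀ w ∈ Metric.closedBall w₁ ε,
          Φ (s + t • e, 0, w + z₁ • Pi.single i 1) ≠ 0 ∧ D'' (t, w) ≠ 0 := by
        intro w hw
        refine hr' (y := (t, w)) ?_
        rw [Prod.dist_eq]
        exact max_lt (by simpa using htr) (lt_of_le_of_lt hw hεr)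
      have e3 := minimisers_stable (T := ℂ) (Θ := fun u w => Φ (s + t • e, u, w)) (τ₀ := 0)
        (hΦc.comp (by fun_prop)) (fun τ w e' => hΦd _ _ _ _) (continuous_sqDist c) hBc
        (Metric.isOpen_ball (x := w₁) (ε := ε)) (p := p)
        (mem_of_superset (Metric.isOpen_ball.mem_nhds hpU) hUB) hp0
        (fun w hw h0 hwU => (hpmin w hw h0).2 hwU)
        ⟨Pi.single i 1, z₁, (hball p (Metric.ball_subset_closedBall hpU)).1⟩
      have e4 : ∀ᶠ u in 𝓝 (0:ℂ), ∀ w ∈ Metric.closedBall w₁ ε, D' (t, u, w) ≠ 0 := by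
        apply (isCompact_closedBall w₁ ε).eventually_forall_of_forall_eventually
        intro w hw
        have hcont : Continuous fun p : ℂ × Vc n => D' (t, p.1, p.2) := by fun_prop
        refine (hcont.tendsto (0, w)).eventually (isOpen_ne.mem_nhds ?_)
        show D' (t, 0, w) ≠ 0
        rw [hDD]
        exact mul_ne_zero (pow_ne_zero a ht0) (hball w hw).2
      have e5 : ∀ᶠ u in 𝓝[≠] (0:ℂ), ∃ w ∈ Metric.closedBall w₁ ε,
          (s + t • e + u • w, ψ w) ∈ C := by
        filter_upwards [(e3.and e4).filter_mono nhdsWithin_le_nhds, self_mem_nhdsWithin] with u hu hu0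
        obtain ⟨⟨w, hwB, hwU, hw0, hwmin⟩, hDu⟩ := hu
        have hu0' : u ≠ 0 := hu0
        have hwcl := Metric.ball_subset_closedBall hwU
        refine ⟨w, hwcl, ?_⟩
        have hF0 : eval (s + t • e + u • w) F = 0 := by
          rw [hΦ _ (hord _ (hkt t)), hw0, mul_zero]
        have hdne : eval (s + t • e + u • w) d ≠ 0 := by
          rw [hdD']; exact mul_ne_zero (pow_ne_zero q hu0') (hDu w hwcl)
        have hFne : eval (s + t • e + u • w) (pderiv i F) ≠ 0 := by
          intro h
          apply hdne
          rw [← hPQ]; simp [hF0, h]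
        obtain ⟨μ, hμ⟩ := lagrange_nearest F (s + t • e) c w hu0'
          (mem_of_superset (Metric.isOpen_ball.mem_nhds hwU) hUB) hF0
          (by
            intro w' hw' h'
            refine (hwmin w' hw' ?_).1
            rw [hΦ _ (hord _ (hkt t))] at h'
            exact (mul_eq_zero.mp h').resolve_left (pow_ne_zero m hu0'))
          ⟨i, hFne⟩
        have : ψ w = fun i => μ * eval (s + t • e + u • w) (pderiv i F) := funext hμ
        rw [this]
        exact hCF _ hF0 μ
      by_contra hcon
      push Not at hcon
      have e6 : ∀ᶠ u in 𝓝 (0:ℂ), ∀ w ∈ Metric.closedBall w₁ ε, (s + t • e + u • w, ψ w) ∉ C := by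
        apply (isCompact_closedBall w₁ ε).eventually_forall_of_forall_eventually
        intro w hw
        have hcont : Continuous fun p : ℂ × Vc n => (s + t • e + p.1 • p.2, ψ p.2) := by fun_prop
        refine (hcont.tendsto (0, w)).eventually (hC.isOpen_compl.mem_nhds ?_)
        simpa using hcon w hw
      obtain ⟨u, ⟨w, hw, hwC⟩, hu⟩ := (e5.and (e6.filter_mono nhdsWithin_le_nhds)).exists
      exact hu w hw hwC
    have hlim : (s, ψ w₁) ∈ closure A := by
      rw [mem_closure_iff_nhds]
      intro O hO
      have hcont : Continuous fun p : ℂ × Vc n => (s + p.1 • e, ψ p.2) := by fun_prop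
      have h1 := (hcont.tendsto (0, w₁)) (by simpa using hO)
      obtain ⟨η, hη, hη'⟩ := Metric.mem_nhds_iff.mp h1
      set ε := min (min η r) 1 / 2 with hε
      have hmpos : 0 < min (min η r) 1 := lt_min (lt_min hη hr) one_pos
      have h2 : min (min η r) 1 ≤ η := (min_le_left _ _).trans (min_le_left _ _)
      have h3 : min (min η r) 1 ≤ r := (min_le_left _ _).trans (min_le_right _ _)
      have h4 : min (min η r) 1 ≤ 1 := min_le_right _ _
      have e1 := step ε (by linarith) (by linarith) (by linarith)
      have e2 := eventually_eval_line_ne (b := b) (s := s) (e := e) (by simpa [he] using hb)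
      have e3 : ∀ᶠ t in 𝓝[≠] (0:ℂ), ‖t‖ < η := by
        refine mem_nhdsWithin_of_mem_nhds ?_
        simpa [Metric.ball, dist_zero_right] using Metric.ball_mem_nhds (0:ℂ) hη
      obtain ⟨t, ⟨w, hw, hwC⟩, htb, ht⟩ := (e1.and (e2.and e3)).exists
      refine ⟨(s + t • e, ψ w), hη' (a := (t, w)) ?_, hwC, hkt t, htb⟩
      rw [Metric.mem_ball, Prod.dist_eq]
      refine max_lt (by simpa using ht) ?_
      have : dist w w₁ ≤ ε := hw
      show dist w w₁ < η
      linarith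
    have hscale : ∀ p : Vc n × Vc n, p ∈ A → (p.1, (ρ : ℂ)⁻¹ • p.2) ∈ A :=
      fun p hp => ⟨hCs _ _ _ hp.1, hp.2⟩
    have := map_mem_closure (f := fun p : Vc n × Vc n => (p.1, (ρ : ℂ)⁻¹ • p.2))
      (by fun_prop) hlim hscale
    convert this using 2
    funext j
    have hρ' : (ρ : ℂ) ≠ 0 := by exact_mod_cast hρ.ne'
    simp [hψ, hc]
    field_simp
  -- the general case follows by approximation
  have happ := exists_approx hδ hδi hw₀ (hline w₀ hi)
  have hcl : IsClosed {w : Vc n | (s, fun i => eval w (pderiv i g)) ∈ closure A} := by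
    refine isClosed_closure.preimage (f := fun w : Vc n => (s, fun i => eval w (pderiv i g))) ?_
    exact continuous_const.prodMk (continuous_pi fun i => MvPolynomial.continuous_eval _)
  have hopen : {w : Vc n | eval w (pderiv i g) ≠ 0} ∈ 𝓝 w₀ :=
    (isOpen_ne.preimage (MvPolynomial.continuous_eval (pderiv i g))).mem_nhds hi
  have : w₀ ∈ closure ({w | eval w G = 0 ∧ eval w δ ≠ 0} ∩ {w : Vc n | eval w (pderiv i g) ≠ 0}) :=
    mem_closure_iff_nhds.mpr fun O hO => by
      obtain ⟨w, ⟨hwO, hw1⟩, hw2⟩ := mem_closure_iff_nhds.mp happ _ (inter_mem hO hopen)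
      exact ⟨w, hwO, hw2, hw1⟩
  exact hcl.closure_subset_iff.mpr (fun w hw => main w hw.1.1 hw.1.2 hw.2) this
end

/-! ### Zariski topology and vanishing ideals -/

noncomputable section

open MvPolynomial TopologicalSpace

variable {n : ℕ}

theorem mem_submodule_iff (x : Pj n) (v : Vc n) : v ∈ x.submodule ↔ ∃ c : ℂ, v = c • x.rep := by
  rw [Projectivization.submodule_eq, Submodule.mem_span_singleton]
  simp only [eq_comm]

theorem mem_submodule_mk (w : Vc n) (hw : w ≠ 0) (v : Vc n) :
    v ∈ (Projectivization.mk ℂ w hw).submodule ↔ ∃ c : ℂ, v = c • w := by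
  rw [Projectivization.submodule_mk, Submodule.mem_span_singleton]
  simp only [eq_comm]

theorem rep_mem (x : Pj n) : x.rep ∈ x.submodule := (mem_submodule_iff _ _).2 ⟨1, by simp⟩

/-- Restriction of a polynomial to the line spanned by `v`. -/
def resLine (v : Vc n) : MvPolynomial (Fin n) ℂ →ₐ[ℂ] MvPolynomial (Fin 2) ℂ :=
  aeval (fun i => C (v i) * X 0)

/-- Restriction of a polynomial in two groups of variables to the product of the lines
spanned by `w` and `v`. -/
def resLine2 (w v : Vc n) : MvPolynomial (Fin n ⊕ Fin n) ℂ →ₐ[ℂ] MvPolynomial (Fin 2) ℂ :=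
  aeval (Sum.elim (fun i => C (w i) * X 0) (fun i => C (v i) * X 1))

theorem eval_resLine (v : Vc n) (f : MvPolynomial (Fin n) ℂ) (t : Fin 2 → ℂ) :
    eval t (resLine v f) = eval (t 0 • v) f := by
  induction f using MvPolynomial.induction_on with
  | C a => simp [resLine]
  | add p q hp hq => simp only [map_add, hp, hq]
  | mul_X p i hp => rw [map_mul, map_mul, hp]; simp [resLine, mul_comm]

theorem eval_resLine2 (w v : Vc n) (f : MvPolynomial (Fin n ⊕ Fin n) ℂ) (t : Fin 2 → ℂ) :
    eval t (resLine2 w v f) = eval (Sum.elim (t 0 • w) (t 1 • v)) f := by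
  induction f using MvPolynomial.induction_on with
  | C a => simp [resLine2]
  | add p q hp hq => simp only [map_add, hp, hq]
  | mul_X p i hp => rw [map_mul, map_mul, hp]; cases i <;> simp [resLine2, mul_comm]

/-- The prime ideal of the cone over a point of projective space. -/
def spt (x : Pj n) : PrimeSpectrum (MvPolynomial (Fin n) ℂ) :=
  ⟨RingHom.ker (resLine x.rep), RingHom.ker_isPrime _⟩

/-- The prime ideal of the bicone over a point of a product of projective spaces. -/
def spt2 (p : Pj n × Pj n) : PrimeSpectrum (MvPolynomial (Fin n ⊕ Fin n) ℂ) :=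
  ⟨RingHom.ker (resLine2 p.1.rep p.2.rep), RingHom.ker_isPrime _⟩

theorem mem_spt (x : Pj n) (f : MvPolynomial (Fin n) ℂ) : f ∈ (spt x).asIdeal ↔ x ∈ pZeros f := by
  change resLine x.rep f = 0 ↔ ∀ v ∈ x.submodule, eval v f = 0
  constructor
  · intro h v hv
    obtain ⟨c, rfl⟩ := (mem_submodule_iff _ _).1 hv
    have := eval_resLine x.rep f ![c, 0]
    rw [h] at this; simpa using this.symm
  · intro h
    refine MvPolynomial.funext fun t => ?_
    rw [eval_resLine, map_zero]
    exact h _ ((mem_submodule_iff _ _).2 ⟨_, rfl⟩)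

theorem mem_spt2 (p : Pj n × Pj n) (f : MvPolynomial (Fin n ⊕ Fin n) ℂ) :
    f ∈ (spt2 p).asIdeal ↔ p ∈ pZeros2 f := by
  change resLine2 p.1.rep p.2.rep f = 0 ↔
    ∀ w ∈ p.1.submodule, ∀ v ∈ p.2.submodule, eval (Sum.elim w v) f = 0
  constructor
  · intro h w hw v hv
    obtain ⟨c, rfl⟩ := (mem_submodule_iff _ _).1 hw
    obtain ⟨d, rfl⟩ := (mem_submodule_iff _ _).1 hv
    have := eval_resLine2 p.1.rep p.2.rep f ![c, d]
    rw [h] at this; simpa using this.symm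
  · intro h
    refine MvPolynomial.funext fun t => ?_
    rw [eval_resLine2, map_zero]
    exact h _ ((mem_submodule_iff _ _).2 ⟨_, rfl⟩) _ ((mem_submodule_iff _ _).2 ⟨_, rfl⟩)

theorem inducing_of_generateFrom {P R : Type*} [CommRing R] (φ : P → PrimeSpectrum R)
    (Z : R → Set P) (hφ : ∀ p f, f ∈ (φ p).asIdeal ↔ p ∈ Z f) :
    @Topology.IsInducing _ _ (generateFrom {U | ∃ f, U = (Z f)ᶜ}) _ φ := by
  let _ := generateFrom {U : Set P | ∃ f, U = (Z f)ᶜ}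
  refine ⟨?_⟩
  rw [PrimeSpectrum.isTopologicalBasis_basic_opens.eq_generateFrom, induced_generateFrom_eq]
  congr 1
  ext U
  constructor
  · rintro ⟨f, rfl⟩
    refine ⟨_, ⟨f, rfl⟩, ?_⟩
    ext p
    simp [← hφ]
  · rintro ⟨_, ⟨f, rfl⟩, rfl⟩
    refine ⟨f, ?_⟩
    ext p
    simp [← hφ]

theorem inducing_spt : @Topology.IsInducing _ _ (zarTop n) _ (spt (n := n)) :=
  inducing_of_generateFrom spt pZeros mem_spt

theorem inducing_spt2 : @Topology.IsInducing _ _ (zarTop2 n) _ (spt2 (n := n)) :=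
  inducing_of_generateFrom spt2 pZeros2 mem_spt2

/-- The vanishing ideal of a subset of projective space. -/
def van (S : Set (Pj n)) : Ideal (MvPolynomial (Fin n) ℂ) := PrimeSpectrum.vanishingIdeal (spt '' S)

/-- The vanishing ideal of a subset of a product of projective spaces. -/
def van2 (S : Set (Pj n × Pj n)) : Ideal (MvPolynomial (Fin n ⊕ Fin n) ℂ) :=
  PrimeSpectrum.vanishingIdeal (spt2 '' S)

theorem mem_van {S : Set (Pj n)} {f : MvPolynomial (Fin n) ℂ} : f ∈ van S ↔ S ⊆ pZeros f := by
  simp [van, PrimeSpectrum.mem_vanishingIdeal, mem_spt, Set.subset_def]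

theorem mem_van' {S : Set (Pj n)} {f : MvPolynomial (Fin n) ℂ} : f ∈ van S ↔ f ∈ vanishId S := mem_van

theorem mem_van2 {S : Set (Pj n × Pj n)} {f : MvPolynomial (Fin n ⊕ Fin n) ℂ} :
    f ∈ van2 S ↔ S ⊆ pZeros2 f := by
  rw [van2, PrimeSpectrum.mem_vanishingIdeal, Set.forall_mem_image]
  simp only [mem_spt2]; rfl

theorem span_vanishId (S : Set (Pj n)) : Ideal.span (vanishId S) = van S := by
  have : vanishId S = (van S : Set _) := Set.ext fun f => mem_van.symm
  rw [this, Ideal.span_eq]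

theorem mem_closure_iff_van {P R : Type*} [CommRing R] [TopologicalSpace P]
    {φ : P → PrimeSpectrum R} (h : Topology.IsInducing φ) (S : Set P) (p : P) :
    p ∈ closure S ↔ PrimeSpectrum.vanishingIdeal (φ '' S) ≤ (φ p).asIdeal := by
  rw [h.closure_eq_preimage_closure_image, Set.mem_preimage,
    ← PrimeSpectrum.zeroLocus_vanishingIdeal_eq_closure, PrimeSpectrum.mem_zeroLocus]
  rfl

theorem mem_zcl {S : Set (Pj n)} {x : Pj n} : x ∈ zcl S ↔ ∀ f ∈ van S, x ∈ pZeros f := by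
  rw [zcl, @mem_closure_iff_van _ _ _ (zarTop n) _ inducing_spt]
  simp only [← mem_spt]; rfl

theorem mem_zcl2 {S : Set (Pj n × Pj n)} {p : Pj n × Pj n} :
    p ∈ zcl2 S ↔ ∀ f ∈ van2 S, p ∈ pZeros2 f := by
  rw [zcl2, @mem_closure_iff_van _ _ _ (zarTop2 n) _ inducing_spt2]
  simp only [← mem_spt2]; rfl

theorem zClosed.zcl_eq {S : Set (Pj n)} (h : zClosed S) : zcl S = S :=
  @IsClosed.closure_eq _ (zarTop n) _ h

theorem zClosed2.zcl2_eq {S : Set (Pj n × Pj n)} (h : zClosed2 S) : zcl2 S = S :=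
  @IsClosed.closure_eq _ (zarTop2 n) _ h

theorem zClosed2_zcl2 (S : Set (Pj n × Pj n)) : zClosed2 (zcl2 S) :=
  @isClosed_closure _ (zarTop2 n) _

theorem zClosed_pZeros (f : MvPolynomial (Fin n) ℂ) : zClosed (pZeros f) :=
  @IsClosed.mk _ (zarTop n) _ (isOpen_generateFrom_of_mem ⟨f, rfl⟩)

theorem zClosed2_pZeros2 (f : MvPolynomial (Fin n ⊕ Fin n) ℂ) : zClosed2 (pZeros2 f) :=
  @IsClosed.mk _ (zarTop2 n) _ (isOpen_generateFrom_of_mem ⟨f, rfl⟩)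

theorem zcl2_subset {S T : Set (Pj n × Pj n)} (hT : zClosed2 T) (h : S ⊆ T) : zcl2 S ⊆ T :=
  @closure_minimal _ (zarTop2 n) _ _ h hT

theorem subset_zcl2 (S : Set (Pj n × Pj n)) : S ⊆ zcl2 S := @subset_closure _ (zarTop2 n) S

theorem van_isPrime {S : Set (Pj n)} (h : zIrr S) : (van S).IsPrime := by
  rw [van, ← PrimeSpectrum.isIrreducible_iff_vanishingIdeal_isPrime]
  let _ := zarTop n
  exact IsIrreducible.image h _ inducing_spt.continuous.continuousOn

theorem van_anti {S T : Set (Pj n)} (h : S ⊆ T) : van T ≤ van S :=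
  fun _ hf => mem_van.2 (h.trans (mem_van.1 hf))

theorem van_zcl (S : Set (Pj n)) : van (zcl S) = van S := by
  refine le_antisymm (van_anti (@subset_closure _ (zarTop n) S)) fun f hf => ?_
  exact mem_van.2 fun x hx => mem_zcl.1 hx f hf

theorem van_strictAnti {S T : Set (Pj n)} (hS : zClosed S) (h : S ⊂ T) : van T < van S := by
  refine lt_of_le_of_ne (van_anti h.1) fun heq => h.2 ?_
  intro x hx
  rw [← hS.zcl_eq, mem_zcl, ← heq]
  exact fun f hf => mem_van.1 hf hx

/-- A closed subset of the product is the union of finitely many irreducible components. -/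
theorem exists_components {A : Set (Pj n × Pj n)} (hA : zClosed2 A) :
    ∃ 𝓕 : Set (Set (Pj n × Pj n)), 𝓕.Finite ∧ A = ⋃₀ 𝓕 ∧
      ∀ F ∈ 𝓕, zClosed2 F ∧ Maximal (fun G => G ⊆ A ∧ zIrr2 G) F := by
  let _ := zarTop2 n
  have : NoetherianSpace (Pj n × Pj n) := inducing_spt2.noetherianSpace
  obtain ⟨𝓢, hfin, hcl, hirr, hU⟩ := NoetherianSpace.exists_finite_set_isClosed_irreducible hA
  refine ⟨{F | Maximal (· ∈ 𝓢) F}, hfin.subset fun F hF => hF.1, ?_, ?_⟩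
  · apply Set.Subset.antisymm
    · rw [hU]
      rintro p ⟨t, ht, hp⟩
      obtain ⟨F, hF1, hF2⟩ := hfin.exists_le_maximal ht
      exact ⟨F, hF2, hF1 hp⟩
    · rintro p ⟨t, ht, hp⟩
      rw [hU]
      exact ⟨t, ht.1, hp⟩
  · intro F hF
    refine ⟨hcl F hF.1, ⟨?_, hirr F hF.1⟩, ?_⟩
    · rw [hU]; exact Set.subset_sUnion_of_mem hF.1
    · rintro G ⟨hGA, hG⟩ hFG
      lift 𝓢 to Finset (Set (Pj n × Pj n)) using hfin
      obtain ⟨t, ht, hGt⟩ := isIrreducible_iff_sUnion_isClosed.1 hG 𝓢 hcl (hU ▸ hGA)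
      exact hGt.trans (hF.2 ht (hFG.trans hGt))
end

/-! ### Elimination theory: projections are closed -/

section

open MvPolynomial TopologicalSpace

variable {n : ℕ}

theorem shiftPoly_zero (F : MvPolynomial (Fin n) ℂ) : shiftPoly F 0 = F := by
  have : (fun i => X i + C ((0 : Vc n) i)) = (X : Fin n → MvPolynomial (Fin n) ℂ) := by
    funext i; simp
  rw [shiftPoly, this, bind₁_X_left]; rfl

theorem eval_homogeneousComponent_eq_zero {P : MvPolynomial (Fin n) ℂ} {v : Vc n}
    (h : ∀ β : ℂ, eval (β • v) P = 0) (d : ℕ) : eval v (homogeneousComponent d P) = 0 := by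
  have h1 : linePoly P 0 v = 0 := by
    apply Polynomial.funext
    intro u
    rw [eval_linePoly, zero_add, h, Polynomial.eval_zero]
  have := coeff_linePoly P 0 v d
  rw [h1, shiftPoly_zero] at this
  simpa using this.symm

theorem map_homogeneousComponent' {R S : Type*} [CommSemiring R] [CommSemiring S] (φ : R →+* S)
    (d : ℕ) (P : MvPolynomial (Fin n) R) :
    map φ (homogeneousComponent d P) = homogeneousComponent d (map φ P) := by
  ext a
  simp only [coeff_map, coeff_homogeneousComponent]
  split_ifs <;> simp

/-- Main theorem of elimination theory: the image of a closed subset of the product under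
the first projection is closed. -/
theorem elimination {Z : Set (Pj n × Pj n)} (hZ : zClosed2 Z) {h₀ : Pj n}
    (hh : h₀ ∉ Prod.fst '' Z) :
    ∃ e : MvPolynomial (Fin n) ℂ, Prod.fst '' Z ⊆ pZeros e ∧ eval h₀.rep e ≠ 0 := by
  classical
  -- the ideal of `Z`, as polynomials in `x` with coefficients polynomials in `h`
  let I : Ideal (MvPolynomial (Fin n) (MvPolynomial (Fin n) ℂ)) :=
    { carrier := {Q | ∀ p ∈ Z, ∀ w ∈ p.1.submodule, ∀ v ∈ p.2.submodule,
        eval v (map (eval w) Q) = 0}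
      add_mem' := by
        intro a b ha hb p hp w hw v hv
        rw [map_add, map_add, ha p hp w hw v hv, hb p hp w hw v hv, add_zero]
      zero_mem' := by intro p hp w hw v hv; simp
      smul_mem' := by
        intro c a ha p hp w hw v hv
        rw [smul_eq_mul, map_mul, map_mul, ha p hp w hw v hv, mul_zero] }
  have memI : ∀ Q, Q ∈ I ↔ ∀ p ∈ Z, ∀ w ∈ p.1.submodule, ∀ v ∈ p.2.submodule,
        eval v (map (eval w) Q) = 0 := fun Q => Iff.rfl
  have hcomp : ∀ Q ∈ I, ∀ d, homogeneousComponent d Q ∈ I := by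
    intro Q hQ d p hp w hw v hv
    rw [map_homogeneousComponent']
    exact eval_homogeneousComponent_eq_zero (fun β => hQ p hp w hw _ (Submodule.smul_mem _ β hv)) d
  let ev : MvPolynomial (Fin n) (MvPolynomial (Fin n) ℂ) →+* MvPolynomial (Fin n) ℂ :=
    map (eval h₀.rep)
  have hev : Function.Surjective ev := by
    apply MvPolynomial.map_surjective
    intro c
    exact ⟨C c, by simp⟩
  have hrad : ∀ i : Fin n, (X i : MvPolynomial (Fin n) ℂ) ∈ (I.map ev).radical := by
    intro i
    rw [← MvPolynomial.vanishingIdeal_zeroLocus_eq_radical (K := ℂ), mem_vanishingIdeal_iff]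
    intro v hv
    rw [aeval_X]
    by_contra hvi
    have hv0 : v ≠ 0 := fun h => hvi (by rw [h]; rfl)
    have hnot : (h₀, Projectivization.mk ℂ v hv0) ∉ Z := fun h => hh ⟨_, h, rfl⟩
    rw [← hZ.zcl2_eq, mem_zcl2] at hnot
    push Not at hnot
    obtain ⟨f, hf, hfn⟩ := hnot
    have : ∃ w ∈ h₀.submodule, ∃ u ∈ (Projectivization.mk ℂ v hv0).submodule,
        eval (Sum.elim w u) f ≠ 0 := by
      by_contra hcon
      push Not at hcon
      exact hfn hcon
    obtain ⟨w, hw, u, hu, hne⟩ := this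
    obtain ⟨α, rfl⟩ := (mem_submodule_iff _ _).1 hw
    obtain ⟨β, rfl⟩ := (mem_submodule_mk _ _ _).1 hu
    let Q : MvPolynomial (Fin n) (MvPolynomial (Fin n) ℂ) :=
      aeval (Sum.elim (fun i => C (C α * X i)) (fun i => C (C β) * X i)) f
    have hQ : ∀ w v : Vc n, eval v (map (eval w) Q) = eval (Sum.elim (α • w) (β • v)) f := by
      intro w v
      simp only [Q]
      clear hf hfn hne
      induction f using MvPolynomial.induction_on with
      | C a => simp [MvPolynomial.algebraMap_apply]
      | add p q hp hq => simp only [map_add, hp, hq]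
      | mul_X p i hp => rw [map_mul, map_mul, map_mul, hp, map_mul]; cases i <;> simp
    have hQI : Q ∈ I := by
      intro p hp w hw v hv
      rw [hQ]
      exact mem_van2.1 hf hp _ (Submodule.smul_mem _ _ hw) _ (Submodule.smul_mem _ _ hv)
    apply hne
    rw [← hQ]
    have := hv _ (Ideal.mem_map_of_mem ev hQI)
    rwa [aeval_eq_eval] at this
  choose k hk using fun i => hrad i
  obtain ⟨κ, hκ⟩ : ∃ κ, ∀ i, k i ≤ κ := ⟨∑ i, k i, fun i =>
    Finset.single_le_sum (f := k) (fun _ _ => Nat.zero_le _) (Finset.mem_univ i)⟩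
  have hpow : ∀ i, ∃ Q ∈ I, ev Q = X i ^ κ := by
    intro i
    have : (X i : MvPolynomial (Fin n) ℂ) ^ κ ∈ I.map ev := by
      rw [← Nat.sub_add_cancel (hκ i), pow_add]
      exact Ideal.mul_mem_left _ _ (hk i)
    exact (Ideal.mem_map_iff_of_surjective ev hev).1 this
  choose Q hQI hQ using hpow
  let d := n * κ + 1
  let mI : Ideal (MvPolynomial (Fin n) ℂ) := RingHom.ker (eval h₀.rep)
  let mk : MvPolynomial (Fin n) (MvPolynomial (Fin n) ℂ) →ₐ[MvPolynomial (Fin n) ℂ]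
      (MvPolynomial (Fin n) (MvPolynomial (Fin n) ℂ) ⧸ I) := Ideal.Quotient.mkₐ _ I
  let N : Submodule (MvPolynomial (Fin n) ℂ) (MvPolynomial (Fin n) (MvPolynomial (Fin n) ℂ) ⧸ I) :=
    Submodule.span _ ((fun a => mk (monomial a 1)) '' {a | a.degree = d})
  have hfg : N.FG := Submodule.fg_span ((Finsupp.finite_of_degree_eq d).image _)
  have hN : N ≤ mI • N := by
    apply Submodule.span_le.2
    rintro _ ⟨a, ha, rfl⟩
    obtain ⟨i, hi⟩ : ∃ i, κ ≤ a i := by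
      by_contra hcon
      push Not at hcon
      have : a.degree ≤ n * κ := by
        rw [Finsupp.degree_eq_sum]
        calc ∑ i, a i ≤ ∑ _i : Fin n, κ := Finset.sum_le_sum fun i _ => (hcon i).le
          _ = n * κ := by simp
      have ha' : a.degree = n * κ + 1 := ha
      omega
    let Q' := homogeneousComponent d (monomial (a - Finsupp.single i κ) 1 * Q i)
    have hQ' : Q' ∈ I := hcomp _ (Ideal.mul_mem_left _ _ (hQI i)) d
    have hevQ' : ev Q' = monomial a 1 := by
      change map (eval h₀.rep) (homogeneousComponent d _) = _
      rw [map_homogeneousComponent', map_mul]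
      have h1 : map (eval h₀.rep) (Q i) = X i ^ κ := hQ i
      rw [h1, map_monomial, map_one, X_pow_eq_monomial, monomial_mul, mul_one,
        tsub_add_cancel_of_le (Finsupp.single_le_iff.2 hi)]
      exact homogeneousComponent_eq_self (isHomogeneous_monomial _ ha)
    have hmk : mk (monomial a 1) = mk (monomial a 1 - Q') := by
      rw [map_sub]
      have : mk Q' = 0 := Ideal.Quotient.eq_zero_iff_mem.2 hQ'
      rw [this, sub_zero]
    change mk (monomial a 1) ∈ mI • N
    rw [hmk, MvPolynomial.as_sum (monomial a 1 - Q'), map_sum]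
    refine Submodule.sum_mem _ fun c hc => ?_
    have hc0 := mem_support_iff.1 hc
    have hcd : c.degree = d := by
      by_contra hcd
      apply hc0
      rw [coeff_sub, coeff_monomial, coeff_homogeneousComponent, if_neg hcd, if_neg, sub_zero]
      rintro rfl
      exact hcd ha
    have : monomial c (coeff c (monomial a 1 - Q')) =
        (coeff c (monomial a 1 - Q')) • (monomial c (1 : MvPolynomial (Fin n) ℂ)) := by
      rw [smul_monomial, smul_eq_mul, mul_one]
    rw [this, map_smul]
    refine Submodule.smul_mem_smul ?_ (Submodule.subset_span ⟨c, hcd, rfl⟩)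
    change eval h₀.rep (coeff c (monomial a 1 - Q')) = 0
    rw [← coeff_map, map_sub]
    have h1 : map (eval h₀.rep) Q' = monomial a 1 := hevQ'
    rw [h1, map_monomial, map_one, sub_self, coeff_zero]
  obtain ⟨e, he1, he2⟩ := Submodule.exists_sub_one_mem_and_smul_eq_zero_of_fg_of_le_smul mI N hfg hN
  refine ⟨e, ?_, ?_⟩
  · rintro _ ⟨p, hp, rfl⟩ w hw
    obtain ⟨i, hi⟩ : ∃ i, p.2.rep i ≠ 0 := Function.ne_iff.1 p.2.rep_nonzero
    have h1 := he2 (mk (monomial (Finsupp.single i d) 1))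
      (Submodule.subset_span ⟨Finsupp.single i d, by simp, rfl⟩)
    rw [← map_smul] at h1
    have h2 := (Ideal.Quotient.eq_zero_iff_mem.1 h1 : _ ∈ I) p hp w hw _ (rep_mem p.2)
    rw [smul_monomial, smul_eq_mul, mul_one, map_monomial, eval_monomial] at h2
    refine (mul_eq_zero.1 h2).resolve_right ?_
    rw [Finsupp.prod_single_index (by simp)]
    exact pow_ne_zero _ hi
  · have : eval h₀.rep (e - 1) = 0 := he1
    rw [map_sub, map_one, sub_eq_zero] at this
    rw [this]; exact one_ne_zero
end

/-! ### Linear spaces and the contact locus -/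

section

open MvPolynomial TopologicalSpace Filter Topology

variable {n : ℕ}

/-- The orthogonal complement of a linear subspace for the bilinear pairing `∑ kᵢ vᵢ`. -/
def orth (W : Submodule ℂ (Vc n)) : Submodule ℂ (Vc n) where
  carrier := {k | ∀ v ∈ W, ∑ i, k i * v i = 0}
  add_mem' := by
    intro a b ha hb v hv
    simp only [Pi.add_apply, add_mul, Finset.sum_add_distrib, ha v hv, hb v hv, add_zero]
  zero_mem' := by intro v hv; simp
  smul_mem' := by
    intro c a ha v hv
    simp only [Pi.smul_apply, smul_eq_mul, mul_assoc, ← Finset.mul_sum, ha v hv, mul_zero]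

theorem linearMap_apply_eq_sum (f : Vc n →ₗ[ℂ] ℂ) (v : Vc n) : f v = ∑ i, f (Pi.single i 1) * v i := by
  conv_lhs => rw [LinearMap.pi_apply_eq_sum_univ f v]
  refine Finset.sum_congr rfl fun i _ => ?_
  rw [smul_eq_mul, mul_comm]
  congr 2
  funext j
  simp [Pi.single_apply, eq_comm]

theorem mem_of_forall_orth {W : Submodule ℂ (Vc n)} {x : Vc n}
    (h : ∀ k ∈ orth W, ∑ i, k i * x i = 0) : x ∈ W := by
  by_contra hx
  obtain ⟨f, hf, hW⟩ := Submodule.exists_le_ker_of_notMem hx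
  apply hf
  rw [linearMap_apply_eq_sum]
  refine h _ fun v hv => ?_
  rw [← linearMap_apply_eq_sum]
  exact hW hv

theorem mem_projLin_iff {W : Submodule ℂ (Vc n)} {x : Pj n} : x ∈ projLin W ↔ x.rep ∈ W := by
  constructor
  · intro h; exact h (rep_mem x)
  · intro h v hv
    obtain ⟨c, rfl⟩ := (mem_submodule_iff _ _).1 hv
    exact W.smul_mem c h

theorem perpSet_projLin (W : Submodule ℂ (Vc n)) : perpSet (projLin W) = projLin (orth W) := by
  ext h
  rw [mem_projLin_iff]
  constructor
  · intro hh v hv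
    by_cases hv0 : v = 0
    · simp [hv0]
    · refine hh (Projectivization.mk ℂ v hv0) ?_ _ (rep_mem h) v ?_
      · rw [projLin, Set.mem_ofPred_eq, Projectivization.submodule_mk,
          Submodule.span_singleton_le_iff_mem]
        exact hv
      · rw [Projectivization.submodule_mk]; exact Submodule.mem_span_singleton_self v
  · intro hh x hx w hw v hv
    obtain ⟨c, rfl⟩ := (mem_submodule_iff _ _).1 hw
    exact (orth W).smul_mem c hh v (hx hv)

theorem zClosed2_preimage_fst_projLin (K : Submodule ℂ (Vc n)) :
    zClosed2 (Prod.fst ⁻¹' projLin K : Set (Pj n × Pj n)) := by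
  have : (Prod.fst ⁻¹' projLin K : Set (Pj n × Pj n)) =
      ⋂ k ∈ orth K, pZeros2 (∑ i, C (k i) * X (Sum.inl i)) := by
    ext p
    simp only [Set.mem_preimage, Set.mem_iInter]
    constructor
    · intro h k hk w hw v hv
      simp [hk w (h hw)]
    · intro h
      rw [mem_projLin_iff]
      refine mem_of_forall_orth fun k hk => ?_
      simpa using h k hk _ (rep_mem _) _ (rep_mem _)
  rw [this]
  exact @isClosed_biInter _ _ (zarTop2 n) _ _ fun k _ => zClosed2_pZeros2 _

theorem exists_mem_prod_ne {ι : Type*} (K : Submodule ℂ (Vc n)) (e : ι → MvPolynomial (Fin n) ℂ)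
    (t : Finset ι) (h : ∀ j ∈ t, ∃ k ∈ K, eval k (e j) ≠ 0) :
    ∃ k ∈ K, eval k (∏ j ∈ t, e j) ≠ 0 := by
  classical
  induction t using Finset.induction_on with
  | empty => exact ⟨0, K.zero_mem, by simp⟩
  | insert j t hj ih =>
    obtain ⟨k₁, hk₁, h₁⟩ := h j (Finset.mem_insert_self _ _)
    obtain ⟨k₂, hk₂, h₂⟩ := ih fun i hi => h i (Finset.mem_insert_of_mem hi)
    have e2 := eventually_eval_line_ne (b := ∏ j ∈ t, e j) (s := k₁) (e := k₂ - k₁)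
      (by simpa using h₂)
    have hc : Continuous fun z : ℂ => eval (k₁ + z • (k₂ - k₁)) (e j) :=
      (differentiable_eval_line (e j) k₁ (k₂ - k₁)).continuous
    have e1 : ∀ᶠ z in 𝓝[≠] (0 : ℂ), eval (k₁ + z • (k₂ - k₁)) (e j) ≠ 0 := by
      refine mem_nhdsWithin_of_mem_nhds ?_
      exact (hc.tendsto 0).eventually (isOpen_ne.mem_nhds (by simpa using h₁))
    obtain ⟨z, hz1, hz2⟩ := (e1.and e2).exists
    refine ⟨k₁ + z • (k₂ - k₁), K.add_mem hk₁ (K.smul_mem _ (K.sub_mem hk₂ hk₁)), ?_⟩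
    rw [Finset.prod_insert hj, map_mul]
    exact mul_ne_zero hz1 hz2

/-- Over a dense open part `b ≠ 0` of `L^⊥`, the preimage of `L^⊥` in the conormal variety is the
union `T` of the components dominating `L^⊥`. -/
theorem exists_dominating (X : Set (Pj n)) (W : Submodule ℂ (Vc n)) :
    ∃ (T : Set (Pj n × Pj n)) (b : MvPolynomial (Fin n) ℂ), zClosed2 T ∧
      (∀ p ∈ T, p.2 ∈ contactLocus X (projLin W)) ∧ (∃ k ∈ orth W, eval k b ≠ 0) ∧
      ∀ p ∈ conormal X, p.1 ∈ projLin (orth W) → (∃ w ∈ p.1.submodule, eval w b ≠ 0) → p ∈ T := by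
  classical
  set A := conormal X ∩ (Prod.fst ⁻¹' perpSet (projLin W)) with hA
  have hAc : zClosed2 A := by
    rw [hA, perpSet_projLin]
    exact @IsClosed.inter _ _ _ (zarTop2 n) (zClosed2_zcl2 _) (zClosed2_preimage_fst_projLin _)
  obtain ⟨𝓕, hfin, hAU, h𝓕⟩ := exists_components hAc
  have hbad : ∀ F : Set (Pj n × Pj n), ∃ e : MvPolynomial (Fin n) ℂ,
      F ∈ 𝓕 → Prod.fst '' F ≠ perpSet (projLin W) →
      Prod.fst '' F ⊆ pZeros e ∧ ∃ k ∈ orth W, eval k e ≠ 0 := by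
    intro F
    by_cases hF : F ∈ 𝓕 ∧ Prod.fst '' F ≠ perpSet (projLin W)
    · have hsub : Prod.fst '' F ⊆ perpSet (projLin W) := by
        rintro _ ⟨p, hp, rfl⟩
        exact ((h𝓕 F hF.1).2.1.1 hp).2
      obtain ⟨h₀, hh₀, hn⟩ := Set.exists_of_ssubset (hsub.ssubset_of_ne hF.2)
      obtain ⟨e, he1, he2⟩ := elimination (h𝓕 F hF.1).1 hn
      rw [perpSet_projLin, mem_projLin_iff] at hh₀
      exact ⟨e, fun _ _ => ⟨he1, _, hh₀, he2⟩⟩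
    · exact ⟨0, fun h1 h2 => absurd ⟨h1, h2⟩ hF⟩
  choose e he using hbad
  let bad := hfin.toFinset.filter fun F => Prod.fst '' F ≠ perpSet (projLin W)
  refine ⟨⋃₀ {F ∈ 𝓕 | Prod.fst '' F = perpSet (projLin W)}, ∏ F ∈ bad, e F, ?_, ?_, ?_, ?_⟩
  · rw [Set.sUnion_eq_biUnion]
    exact @Set.Finite.isClosed_biUnion _ _ (zarTop2 n) _ _ (hfin.subset fun F hF => hF.1)
      fun F hF => (h𝓕 F hF.1).1
  · rintro p ⟨F, ⟨hF, hF'⟩, hp⟩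
    exact ⟨_, ⟨F, (h𝓕 F hF).2, hF', rfl⟩, p, hp, rfl⟩
  · refine exists_mem_prod_ne _ _ _ fun F hF => ?_
    obtain ⟨h1, h2⟩ := Finset.mem_filter.1 hF
    exact (he F (hfin.mem_toFinset.1 h1) h2).2
  · rintro p hp hpK ⟨w, hw, hwb⟩
    have hpA : p ∈ A := ⟨hp, by rw [Set.mem_preimage, perpSet_projLin]; exact hpK⟩
    rw [hAU] at hpA
    obtain ⟨F, hF, hpF⟩ := hpA
    refine ⟨F, ⟨hF, ?_⟩, hpF⟩
    by_contra hne
    apply hwb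
    rw [map_prod]
    refine Finset.prod_eq_zero (i := F) (Finset.mem_filter.2 ⟨hfin.mem_toFinset.2 hF, hne⟩) ?_
    exact (he F hF hne).1 ⟨p, hpF, rfl⟩ w hw
end

/-! ### Extension of derivations -/

section

open MvPolynomial


theorem formallySmooth_of_charZero (B E : Type) [CommRing B] [IsDomain B] [Field E] [CharZero E]
    [Algebra B E] [FaithfulSMul B E] : Algebra.FormallySmooth B E := by
  let _ : Algebra (FractionRing B) E := FractionRing.liftAlgebra B E
  have _ : CharZero (FractionRing B) :=
    ⟨fun a b h => Nat.cast_injective (R := E)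
      (by simpa using congrArg (algebraMap (FractionRing B) E) h)⟩
  obtain ⟨s, hs⟩ := exists_isTranscendenceBasis' (FractionRing B) E
  obtain ⟨v, hv⟩ := hs
  have h2 : Algebra.IsAlgebraic (IntermediateField.adjoin (FractionRing B) (Set.range v)) E :=
    hv.isAlgebraic_field
  have h3 : Algebra.FormallySmooth (FractionRing B) E :=
    Algebra.FormallySmooth.of_algebraicIndependent_of_isSeparable hv.1
  have h4 : Algebra.FormallySmooth B (FractionRing B) :=
    Algebra.FormallySmooth.of_isLocalization (nonZeroDivisors B)
  exact Algebra.FormallySmooth.comp B (FractionRing B) E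

theorem exists_ringHom_lift {B E T : Type} [CommRing B] [CommRing E] [CommRing T] [Algebra B E]
    [Algebra.FormallySmooth B E] (φ : B →+* T) (π : T →+* E) (hπ : Function.Surjective π)
    (hker : RingHom.ker π ^ 2 = ⊥) (hcomp : ∀ b, π (φ b) = algebraMap B E b) :
    ∃ σ : E →+* T, (∀ x, π (σ x) = x) ∧ ∀ b, σ (algebraMap B E b) = φ b := by
  let _ : Algebra B T := φ.toAlgebra
  let g : T →ₐ[B] E := { π with commutes' := hcomp }
  have hg : IsNilpotent (RingHom.ker (g : T →+* E)) := ⟨2, hker⟩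
  refine ⟨(Algebra.FormallySmooth.liftOfSurjective (AlgHom.id B E) g hπ hg : E →ₐ[B] T), ?_, ?_⟩
  · intro x
    exact Algebra.FormallySmooth.liftOfSurjective_apply (AlgHom.id B E) g hπ hg x
  · intro b
    exact AlgHom.commutes (Algebra.FormallySmooth.liftOfSurjective (AlgHom.id B E) g hπ hg) b

/-- In characteristic zero, a tangent vector `c` to the locus of the point `a` with coordinates in
the field `E` extends to a derivation of `E`. -/
theorem exists_derivation {ι E : Type} [Fintype ι] [Field E] [Algebra ℂ E] (a c : ι → E)
    (h : ∀ P : MvPolynomial ι ℂ, aeval a P = 0 → ∑ i, aeval a (pderiv i P) * c i = 0) :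
    ∃ D : Derivation ℂ E E, ∀ i, D (a i) = c i := by
  classical
  have _ : CharZero E := charZero_of_injective_algebraMap (algebraMap ℂ E).injective
  let B := (aeval a : MvPolynomial ι ℂ →ₐ[ℂ] E).range
  have _ := formallySmooth_of_charZero B E
  let Ψ : MvPolynomial ι ℂ →ₐ[ℂ] TrivSqZeroExt E E :=
    aeval fun i => TrivSqZeroExt.inl (a i) + TrivSqZeroExt.inr (c i)
  have hfst : ∀ P, (Ψ P).fst = aeval a P := by
    intro P
    induction P using MvPolynomial.induction_on with
    | C z => simp [Ψ, TrivSqZeroExt.algebraMap_eq_inl']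
    | add p q hp hq => simp only [map_add, TrivSqZeroExt.fst_add, hp, hq]
    | mul_X p i hp => simp only [map_mul, TrivSqZeroExt.fst_mul, hp]; simp [Ψ]
  have hsnd : ∀ P, (Ψ P).snd = ∑ i, aeval a (pderiv i P) * c i := by
    intro P
    induction P using MvPolynomial.induction_on with
    | C z => simp [Ψ, TrivSqZeroExt.algebraMap_eq_inl']
    | add p q hp hq => simp only [map_add, TrivSqZeroExt.snd_add, hp, hq, add_mul, Finset.sum_add_distrib]
    | mul_X p i hp =>
      rw [map_mul, TrivSqZeroExt.snd_mul, hp, hfst]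
      have : ∀ j, aeval a (pderiv j (p * X i)) * c j =
          (aeval a (pderiv j p) * c j) * a i + (if j = i then aeval a p * c i else 0) := by
        intro j
        rw [Derivation.leibniz, pderiv_X]
        by_cases hij : j = i
        · subst hij; simp; ring
        · simp [hij]; ring
      simp only [this, Finset.sum_add_distrib, ← Finset.sum_mul]
      simp [Ψ, mul_comm, add_comm]
  have hker0 : ∀ P, aeval a P = 0 → Ψ P = 0 := by
    intro P hP
    ext
    · rw [hfst, hP]; rfl
    · rw [hsnd, h P hP]; rfl
  obtain ⟨φ, hφ⟩ : ∃ φ : B →+* TrivSqZeroExt E E, ∀ P,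
      φ ((aeval a : MvPolynomial ι ℂ →ₐ[ℂ] E).rangeRestrict P) = Ψ P := by
    refine ⟨(RingHom.liftOfSurjective
      ((aeval a : MvPolynomial ι ℂ →ₐ[ℂ] E).rangeRestrict : MvPolynomial ι ℂ →+* B)
      (AlgHom.rangeRestrict_surjective _)) ⟨(Ψ : MvPolynomial ι ℂ →+* TrivSqZeroExt E E),
        fun P hP => hker0 P (congrArg Subtype.val hP)⟩, fun P => ?_⟩
    exact RingHom.liftOfRightInverse_comp_apply _ _ _ _ P
  let π : TrivSqZeroExt E E →+* E := (TrivSqZeroExt.fstHom E E E : _ →ₐ[E] E)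
  have hπ : Function.Surjective π := fun x => ⟨TrivSqZeroExt.inl x, rfl⟩
  obtain ⟨σ, hσ1, hσ2⟩ := exists_ringHom_lift φ π hπ
    (by
      rw [pow_two, eq_bot_iff, Ideal.mul_le]
      intro r hr s hs
      have hr' : r.fst = 0 := hr
      have hs' : s.fst = 0 := hs
      rw [Ideal.mem_bot]
      ext <;> simp [hr', hs'])
    (by
      intro b
      obtain ⟨P, rfl⟩ := AlgHom.rangeRestrict_surjective _ b
      rw [hφ]
      exact hfst P)
  have hσ1' : ∀ x, (σ x).fst = x := hσ1
  have hσP : ∀ P, σ (aeval a P) = Ψ P := fun P => by rw [← hφ, ← hσ2]; rfl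
  refine ⟨Derivation.mk' { toFun := fun x => (σ x).snd, map_add' := ?_, map_smul' := ?_ } ?_, ?_⟩
  · intro x y; simp
  · intro z x
    have h1 : σ (algebraMap ℂ E z) = TrivSqZeroExt.inl (algebraMap ℂ E z) := by
      have := hσP (C z)
      rw [aeval_C] at this
      rw [this]
      simp [Ψ, TrivSqZeroExt.algebraMap_eq_inl']
    rw [Algebra.smul_def, map_mul, h1]
    simp [Algebra.smul_def]
  · intro x y
    simp [hσ1', mul_comm]
  · intro i
    have := hσP (X i)
    rw [aeval_X] at this
    simp [this, Ψ]
end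

/-! ### Dimension and chains of primes -/

section

open MvPolynomial

variable {n : ℕ}

theorem ringKrullDim_mvPolynomial_fin (s : ℕ) : ringKrullDim (MvPolynomial (Fin s) ℂ) = s := by
  rw [MvPolynomial.ringKrullDim_of_isNoetherianRing, ringKrullDim_eq_zero_of_field]
  simp

theorem exists_algebraicIndependent {A : Type} [CommRing A] [IsDomain A] [Algebra ℂ A]
    [Algebra.FiniteType ℂ A] {m : ℕ} (h : (m : WithBot ℕ∞) ≤ ringKrullDim A) :
    ∃ s, m ≤ s ∧ ∃ y : Fin s → A, AlgebraicIndependent ℂ y := by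
  obtain ⟨s, g, hinj, hgint⟩ := exists_integral_inj_algHom_of_fg ℂ A
  refine ⟨s, ?_, fun i => g (X i), ?_⟩
  · obtain ⟨l, hl⟩ := Order.le_krullDim_iff.1 h
    have hmono : StrictMono (PrimeSpectrum.comap g.toRingHom) := by
      intro p q hpq
      let _ : Algebra (MvPolynomial (Fin s) ℂ) A := g.toRingHom.toAlgebra
      obtain ⟨x, hxq, hxp⟩ := Set.exists_of_ssubset
        (show (p.asIdeal : Set A) ⊂ q.asIdeal from hpq)
      exact Ideal.comap_lt_comap_of_integral_mem_sdiff (R := MvPolynomial (Fin s) ℂ) hpq.le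
        ⟨hxq, hxp⟩ (hgint x)
    have h1 := Order.LTSeries.length_le_krullDim (l.map _ hmono)
    have h2 : Order.krullDim (PrimeSpectrum (MvPolynomial (Fin s) ℂ)) = s :=
      ringKrullDim_mvPolynomial_fin s
    rw [h2] at h1
    have h3 : l.length ≤ s := by exact_mod_cast h1
    omega
  · have : (aeval fun i => g (X i)) = g := by
      ext i; simp
    rw [AlgebraicIndependent, this]
    exact hinj

/-- A nonempty subset `S` of projective space gives a chain of `dim S + 2` prime ideals containing
its homogeneous ideal: those of a maximal chain of irreducible closed subsets, and the irrelevant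
ideal. -/
theorem exists_ltSeries {S : Set (Pj n)} (hS : S.Nonempty) :
    ∃ l : LTSeries (PrimeSpectrum (MvPolynomial (Fin n) ℂ)), l.length = zdim S + 1 ∧
      van S ≤ l.head.asIdeal := by
  have key : ∀ d : ℕ, (∃ c : Fin (d + 1) → Set (Pj n), StrictMono c ∧
      ∀ i, zIrr (c i) ∧ zClosed (c i) ∧ c i ⊆ zcl S) →
      ∃ l : LTSeries (PrimeSpectrum (MvPolynomial (Fin n) ℂ)), l.length = d + 1 ∧
      van S ≤ l.head.asIdeal := by
    rintro d ⟨c, hc, hc'⟩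
    let l₀ : LTSeries (PrimeSpectrum (MvPolynomial (Fin n) ℂ)) := LTSeries.mk d
      (fun i => ⟨van (c i.rev), van_isPrime (hc' _).1⟩) (by
        intro i j hij
        exact van_strictAnti (hc' _).2.1 (hc (Fin.rev_lt_rev.2 hij)))
    let m : PrimeSpectrum (MvPolynomial (Fin n) ℂ) :=
      ⟨RingHom.ker (eval (0 : Fin n → ℂ)), RingHom.ker_isPrime _⟩
    have hlast : l₀.last < m := by
      have e : l₀.last.asIdeal = van (c (Fin.last d).rev) := rfl
      obtain ⟨x, hx⟩ := (hc' (Fin.last d).rev).1.1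
      change l₀.last.asIdeal < RingHom.ker (eval (0 : Fin n → ℂ))
      rw [e]
      refine lt_of_le_of_ne ?_ ?_
      · intro f hf
        exact mem_van.1 hf hx 0 (Submodule.zero_mem _)
      · intro heq
        apply x.rep_nonzero
        funext i
        have : (X i : MvPolynomial (Fin n) ℂ) ∈ van (c (Fin.last d).rev) := by
          rw [heq]; simp [RingHom.mem_ker]
        simpa using mem_van.1 this hx _ (rep_mem x)
    refine ⟨l₀.snoc m hlast, rfl, ?_⟩
    rw [RelSeries.head_snoc, ← van_zcl]
    exact van_anti (hc' _).2.2
  have hmem : zdim S ∈ {d | ∃ c : Fin (d + 1) → Set (Pj n), StrictMono c ∧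
      ∀ i, zIrr (c i) ∧ zClosed (c i) ∧ c i ⊆ zcl S} := by
    refine Nat.sSup_mem ?_ ⟨n, ?_⟩
    · obtain ⟨x, hx⟩ := hS
      refine ⟨0, fun _ => zcl {x}, fun i j hij => absurd hij (by omega), fun _ => ⟨?_, ?_, ?_⟩⟩
      · exact @IsIrreducible.closure _ (zarTop n) _ (@isIrreducible_singleton _ (zarTop n) x)
      · exact @isClosed_closure _ (zarTop n) _
      · exact @closure_mono _ (zarTop n) _ _ (Set.singleton_subset_iff.2 hx)
    · intro d hd
      obtain ⟨l, hl, -⟩ := key d hd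
      have h1 := Order.LTSeries.length_le_krullDim l
      have h2 : Order.krullDim (PrimeSpectrum (MvPolynomial (Fin n) ℂ)) = n :=
        ringKrullDim_mvPolynomial_fin n
      rw [h2] at h1
      have h3 : l.length ≤ n := by exact_mod_cast h1
      omega
  exact key _ hmem

theorem zdim_add_one_le_ringKrullDim {S : Set (Pj n)} (hS : S.Nonempty) :
    ((zdim S + 1 : ℕ) : WithBot ℕ∞) ≤ ringKrullDim (MvPolynomial (Fin n) ℂ ⧸ van S) := by
  obtain ⟨l, hl, hle⟩ := exists_ltSeries hS
  rw [ringKrullDim_quotient]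
  refine Order.le_krullDim_iff.2 ⟨LTSeries.mk l.length
    (fun i => ⟨l i, ?_⟩) ?_, hl⟩
  · exact fun f hf => (l.monotone (Fin.zero_le i)) (hle hf)
  · intro i j hij
    exact l.strictMono hij

end

/-! ### Conormal spaces and smooth points -/

noncomputable section

open MvPolynomial

variable {n : ℕ}

theorem derivation_aeval {ι E : Type} [Fintype ι] [CommRing E] [Algebra ℂ E]
    (D : Derivation ℂ E E) (a : ι → E) (P : MvPolynomial ι ℂ) :
    D (aeval a P) = ∑ i, aeval a (pderiv i P) * D (a i) := by
  classical
  induction P using MvPolynomial.induction_on with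
  | C z => simp
  | add p q hp hq => simp only [map_add, hp, hq, add_mul, Finset.sum_add_distrib]
  | mul_X p i hp =>
    rw [map_mul, Derivation.leibniz, hp]
    have : ∀ j, aeval a (pderiv j (p * X i)) * D (a j) =
        (aeval a (pderiv j p) * D (a j)) * a i + (if j = i then aeval a p * D (a i) else 0) := by
      intro j
      rw [Derivation.leibniz, pderiv_X]
      by_cases hij : j = i
      · subst hij; simp; ring
      · simp [hij]; ring
    simp only [this, Finset.sum_add_distrib, ← Finset.sum_mul]
    simp [mul_comm, add_comm]

/-- The differential at `v`, as a linear map on polynomials. -/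
def dlin (v : Vc n) : MvPolynomial (Fin n) ℂ →ₗ[ℂ] Module.Dual ℂ (Vc n) where
  toFun f := dmap f v
  map_add' f g := by
    ext i; simp [dmap, add_mul, Finset.sum_add_distrib]
  map_smul' c f := by
    ext i; simp [dmap, Finset.mul_sum, mul_assoc]

theorem dmap_apply (f : MvPolynomial (Fin n) ℂ) (v u : Vc n) :
    dmap f v u = ∑ i, eval v (pderiv i f) * u i := by
  simp [dmap]

theorem dmap_single (f : MvPolynomial (Fin n) ℂ) (v : Vc n) (i : Fin n) :
    dmap f v (Pi.single i 1) = eval v (pderiv i f) := by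
  simp [dmap_apply, Pi.single_apply]

/-- The conormal space at the point `v` of the affine cone over `X`: the space of differentials at
`v` of the polynomials vanishing on `X`. -/
def conorm (X : Set (Pj n)) (v : Vc n) : Submodule ℂ (Module.Dual ℂ (Vc n)) :=
  ((van X).restrictScalars ℂ).map (dlin v)

theorem mem_conorm {X : Set (Pj n)} {v : Vc n} {φ : Module.Dual ℂ (Vc n)} :
    φ ∈ conorm X v ↔ ∃ f ∈ van X, dmap f v = φ := Iff.rfl

theorem tangentSub_eq (X : Set (Pj n)) (x : Pj n) :
    tangentSub X x = (conorm X x.rep).dualCoannihilator := by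
  ext u
  simp only [tangentSub, Submodule.mem_iInf, LinearMap.mem_ker, Submodule.mem_dualCoannihilator]
  constructor
  · rintro h φ ⟨f, hf, rfl⟩
    exact h f (mem_van'.1 hf)
  · intro h f hf
    exact h _ ⟨f, mem_van'.2 hf, rfl⟩

theorem finrank_conorm_add (X : Set (Pj n)) (x : Pj n) :
    Module.finrank ℂ (conorm X x.rep) + Module.finrank ℂ (tangentSub X x) = n := by
  rw [tangentSub_eq, Subspace.finrank_add_finrank_dualCoannihilator_eq]
  simp

theorem pderiv_scale (c : ℂ) (f : MvPolynomial (Fin n) ℂ) (i : Fin n) :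
    pderiv i (bind₁ (fun i => C c * X i) f) = C c * bind₁ (fun i => C c * X i) (pderiv i f) := by
  induction f using MvPolynomial.induction_on with
  | C z => simp
  | add p q hp hq =>
    simp only [map_add, mul_add]
    rw [hp, hq]
  | mul_X p j hp =>
    rw [map_mul, Derivation.leibniz, hp, Derivation.leibniz, pderiv_X]
    by_cases hij : i = j
    · subst hij; simp; ring
    · simp [hij]; ring

theorem conorm_smul_le (X : Set (Pj n)) (v : Vc n) {c : ℂ} (hc : c ≠ 0) :
    conorm X (c • v) ≤ conorm X v := by
  rintro φ ⟨f, hf, rfl⟩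
  let g : MvPolynomial (Fin n) ℂ := bind₁ (fun i => C c * MvPolynomial.X i) f
  have hg : ∀ w : Vc n, eval w g = eval (c • w) f := by
    intro w
    rw [eval_bind₁']
    congr 2
    funext i; simp
  have hgX : g ∈ van X := by
    refine mem_van.2 fun x hx w hw => ?_
    rw [hg]
    exact mem_van.1 hf hx _ (Submodule.smul_mem _ c hw)
  have hd : ∀ i, pderiv i g = C c * bind₁ (fun i => C c * MvPolynomial.X i) (pderiv i f) :=
    pderiv_scale c f
  refine ⟨c⁻¹ • g, Submodule.smul_mem ((van X).restrictScalars ℂ) _ hgX, ?_⟩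
  change dmap (c⁻¹ • g) v = dmap f (c • v)
  refine LinearMap.pi_ext' fun i => ?_
  ext
  simp only [LinearMap.comp_apply, LinearMap.single_apply, dmap_single]
  rw [Derivation.map_smul, hd, smul_eval, map_mul, eval_C, eval_bind₁', ← mul_assoc,
    inv_mul_cancel₀ hc, one_mul]
  congr 2
  funext i; simp

theorem conorm_smul (X : Set (Pj n)) (v : Vc n) {c : ℂ} (hc : c ≠ 0) :
    conorm X (c • v) = conorm X v := by
  refine le_antisymm (conorm_smul_le X v hc) ?_
  have := conorm_smul_le X (c • v) (inv_ne_zero hc)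
  rwa [smul_smul, inv_mul_cancel₀ hc, one_smul] at this

theorem conorm_rep (X : Set (Pj n)) {x : Pj n} {v : Vc n} (hv : v ∈ x.submodule) (h0 : v ≠ 0) :
    conorm X v = conorm X x.rep := by
  obtain ⟨c, rfl⟩ := (mem_submodule_iff _ _).1 hv
  exact conorm_smul X _ fun h => h0 (by simp [h])

/-- A hyperplane containing the tangent space is given by the gradient of a polynomial in the ideal
of the variety. -/
theorem exists_grad {X : Set (Pj n)} {x : Pj n} {v w : Vc n} (hv : v ∈ x.submodule) (h0 : v ≠ 0)
    (h : ∀ u ∈ tangentSub X x, ∑ i, w i * u i = 0) :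
    ∃ f ∈ van X, ∀ i, eval v (pderiv i f) = w i := by
  let φ : Module.Dual ℂ (Vc n) := ∑ i, w i • (LinearMap.proj i : Vc n →ₗ[ℂ] ℂ)
  have hφ : ∀ u, φ u = ∑ i, w i * u i := fun u => by simp [φ]
  have : φ ∈ (conorm X x.rep).dualCoannihilator.dualAnnihilator := by
    rw [Submodule.mem_dualAnnihilator, ← tangentSub_eq]
    intro u hu
    rw [hφ]; exact h u hu
  rw [Subspace.dualCoannihilator_dualAnnihilator_eq, ← conorm_rep X hv h0] at this
  obtain ⟨f, hf, hfφ⟩ := this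
  refine ⟨f, hf, fun i => ?_⟩
  rw [← dmap_single]
  have := congrArg (fun ψ : Module.Dual ℂ (Vc n) => ψ (Pi.single i 1)) hfφ
  refine Eq.trans this ?_
  rw [hφ]
  simp [Pi.single_apply]

/-- Polynomials in the ideal of `X` whose differentials at `x` form a basis of the conormal space,
with a dual family of vectors. -/
theorem exists_dual_family (X : Set (Pj n)) (v : Vc n) :
    ∃ (f : Fin (Module.finrank ℂ (conorm X v)) → MvPolynomial (Fin n) ℂ)
      (b : Fin (Module.finrank ℂ (conorm X v)) → Vc n),
      (∀ k, f k ∈ van X) ∧ ∀ k l, dmap (f k) v (b l) = if k = l then 1 else 0 := by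
  let B := Module.finBasis ℂ (conorm X v)
  have hB : ∀ k, ∃ f ∈ van X, dmap f v = B k := fun k => (B k).2
  choose f hf hfB using hB
  let Φ : Vc n →ₗ[ℂ] (Fin (Module.finrank ℂ (conorm X v)) → ℂ) := LinearMap.pi fun k => dmap (f k) v
  have hΦ : Function.Surjective Φ := by
    rw [← LinearMap.range_eq_top]
    by_contra hne
    obtain ⟨ψ, hψ0, hψ⟩ := Submodule.exists_le_ker_of_lt_top _ (lt_top_iff_ne_top.2 hne)
    apply hψ0
    have hs : ∑ k, ψ (Pi.single k 1) • (B k) = 0 := by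
      apply Subtype.ext
      refine LinearMap.ext fun u => ?_
      have h1 : ψ (Φ u) = 0 := hψ ⟨u, rfl⟩
      rw [linearMap_apply_eq_sum] at h1
      simpa [← hfB, Φ] using h1
    have := Fintype.linearIndependent_iff.1 B.linearIndependent _ hs
    refine LinearMap.pi_ext' fun i => ?_
    ext
    simpa using this i
  choose b hb using fun l : Fin (Module.finrank ℂ (conorm X v)) => hΦ (Pi.single l 1)
  refine ⟨f, b, hf, fun k l => ?_⟩
  have := congrFun (hb l) k
  simpa [Φ, Pi.single_apply] using this

/-- The Jacobian determinant `det (df_k(b_l))` as a polynomial. -/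
def jacDet {r : ℕ} (f : Fin r → MvPolynomial (Fin n) ℂ) (b : Fin r → Vc n) :
    MvPolynomial (Fin n) ℂ :=
  (Matrix.of fun k l => ∑ i, pderiv i (f k) * C (b l i)).det

theorem eval_jacDet {r : ℕ} (f : Fin r → MvPolynomial (Fin n) ℂ) (b : Fin r → Vc n) (v : Vc n) :
    eval v (jacDet f b) = (Matrix.of fun k l => dmap (f k) v (b l)).det := by
  rw [jacDet, RingHom.map_det]
  congr 1
  ext k l
  simp [dmap_apply]

theorem le_finrank_conorm {X : Set (Pj n)} {v : Vc n} {r : ℕ}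
    {f : Fin r → MvPolynomial (Fin n) ℂ} {b : Fin r → Vc n} (hf : ∀ k, f k ∈ van X)
    (h : eval v (jacDet f b) ≠ 0) : r ≤ Module.finrank ℂ (conorm X v) := by
  rw [eval_jacDet] at h
  have hli : LinearIndependent ℂ (fun k => (⟨dmap (f k) v, f k, hf k, rfl⟩ : conorm X v)) := by
    rw [Fintype.linearIndependent_iff]
    intro c hc
    by_contra hne
    push Not at hne
    obtain ⟨k₀, hk₀⟩ := hne
    apply h
    refine Matrix.exists_vecMul_eq_zero_iff.1 ⟨c, fun h0 => hk₀ (congrFun h0 k₀), ?_⟩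
    funext l
    have := congrArg (fun ψ : conorm X v => (ψ : Module.Dual ℂ (Vc n)) (b l)) hc
    simpa [Matrix.vecMul, dotProduct] using this
  simpa using hli.fintype_card_le_finrank

theorem zdim_add_one_le_finrank_tangentSub {X : Set (Pj n)} (hX : zIrr X) {x : Pj n} (hx : x ∈ X) :
    zdim X + 1 ≤ Module.finrank ℂ (tangentSub X x) := by
  classical
  have hp := van_isPrime hX
  let A := MvPolynomial (Fin n) ℂ ⧸ van X
  let K := FractionRing A
  obtain ⟨s, hs, y, hy⟩ := exists_algebraicIndependent (A := A) (zdim_add_one_le_ringKrullDim ⟨x, hx⟩)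
  obtain ⟨f, b, hf, hfb⟩ := exists_dual_family X x.rep
  have hsum := finrank_conorm_add X x
  generalize Module.finrank ℂ (conorm X x.rep) = r at f b hf hfb hsum
  let a : Fin n → K := fun i => algebraMap A K (Ideal.Quotient.mk _ (MvPolynomial.X i))
  have ha : ∀ P, aeval a P = algebraMap A K (Ideal.Quotient.mk _ P) := by
    intro P
    let ψ : MvPolynomial (Fin n) ℂ →ₐ[ℂ] K :=
      (IsScalarTower.toAlgHom ℂ A K).comp (Ideal.Quotient.mkₐ ℂ (van X))
    have : aeval a = ψ := by ext i; simp [ψ, a]; rfl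
    exact congrArg (fun g : MvPolynomial (Fin n) ℂ →ₐ[ℂ] K => g P) this
  have ha0 : ∀ P, aeval a P = 0 ↔ P ∈ van X := by
    intro P
    rw [ha, ← Ideal.Quotient.eq_zero_iff_mem]
    exact (IsFractionRing.injective A K).eq_iff' (map_zero _)
  choose Y hY using fun j => Ideal.Quotient.mk_surjective (y j)
  have hyK : AlgebraicIndependent ℂ (fun j => algebraMap A K (y j)) :=
    hy.map' (f := IsScalarTower.toAlgHom ℂ A K) (IsFractionRing.injective A K)
  have hD : ∀ j : Fin s, ∃ D : Derivation ℂ K K, ∀ i, D (algebraMap A K (y i)) =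
      (if i = j then 1 else 0 : K) := by
    intro j
    refine exists_derivation _ _ fun P hP => ?_
    have : P = 0 := (injective_iff_map_eq_zero _).1 hyK P hP
    simp [this]
  choose D hD using hD
  let J : Matrix (Fin r) (Fin n) K := Matrix.of fun k i => aeval a (pderiv i (f k))
  let V : Matrix (Fin n) (Fin s) K := Matrix.of fun i j => D j (a i)
  let Q : Matrix (Fin s) (Fin n) K := Matrix.of fun k i => aeval a (pderiv i (Y k))
  let B : Matrix (Fin n) (Fin r) K := Matrix.of fun i l => algebraMap ℂ K (b l i)
  have hJV : J * V = 0 := by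
    ext k j
    have := derivation_aeval (D j) a (f k)
    rw [(ha0 _).2 (hf k), map_zero] at this
    simpa [Matrix.mul_apply, J, V] using this.symm
  have hQV : Q * V = 1 := by
    ext k j
    have := derivation_aeval (D j) a (Y k)
    rw [ha, hY, hD] at this
    simpa [Matrix.mul_apply, Q, V, Matrix.one_apply] using this.symm
  have hV : s ≤ V.rank := by
    have := Matrix.rank_mul_le_right Q V
    rw [hQV, Matrix.rank_one] at this
    simpa using this
  have hJ : r ≤ J.rank := by
    have h1 : (J * B).det = aeval a (jacDet f b) := by
      rw [jacDet, AlgHom.map_det]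
      congr 1
      ext k l
      simp [Matrix.mul_apply, J, B]
    have h2 : (J * B).det ≠ 0 := by
      rw [h1, Ne, ha0]
      intro h
      have := mem_van.1 h hx _ (rep_mem x)
      rw [eval_jacDet] at this
      have h3 : (Matrix.of fun k l => dmap (f k) x.rep (b l)) = (1 : Matrix (Fin r) (Fin r) ℂ) := by
        ext k l; simp [hfb, Matrix.one_apply]
      rw [h3] at this
      simp at this
    have h3 := Matrix.rank_mul_le_left J B
    rw [Matrix.rank_of_isUnit _ ((Matrix.isUnit_iff_isUnit_det _).2 (isUnit_iff_ne_zero.2 h2))] at h3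
    simpa using h3
  have := Matrix.rank_add_rank_le_card_of_mul_eq_zero hJV
  rw [Fintype.card_fin] at this
  omega

end

/-! ### A generic point of the conormal variety -/

noncomputable section

open MvPolynomial

variable {n : ℕ}

/-- The pairs `(H, x)` with `x` a smooth point of `X` and `H` tangent to `X` at `x`; the conormal
variety is the closure of this set. -/
def conormal₀ (X : Set (Pj n)) : Set (Pj n × Pj n) :=
  {p | SmoothPt X p.2 ∧ tanSpace X p.2 ⊆ hypOf p.1}

theorem conormal_eq (X : Set (Pj n)) : conormal X = zcl2 (conormal₀ X) := rfl

theorem projLin_subset_hypOf {T : Submodule ℂ (Vc n)} {h : Pj n} {w : Vc n} (hw : w ∈ h.submodule)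
    (hT : projLin T ⊆ hypOf h) {u : Vc n} (hu : u ∈ T) : ∑ i, w i * u i = 0 := by
  by_cases hu0 : u = 0
  · simp [hu0]
  · refine hT (a := Projectivization.mk ℂ u hu0) ?_ w hw u ?_
    · rw [projLin, Set.mem_ofPred_eq, Projectivization.submodule_mk,
        Submodule.span_singleton_le_iff_mem]
      exact hu
    · rw [Projectivization.submodule_mk]; exact Submodule.mem_span_singleton_self u

/-- A polynomial vanishes at a point of `ℙ × ℙ` as soon as it vanishes at all pairs of nonzero
representatives. -/
theorem mem_pZeros2_of_ne {p : Pj n × Pj n} {P : MvPolynomial (Fin n ⊕ Fin n) ℂ}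
    (h : ∀ w ∈ p.1.submodule, ∀ v ∈ p.2.submodule, w ≠ 0 → v ≠ 0 → eval (Sum.elim w v) P = 0) :
    p ∈ pZeros2 P := by
  have key : resLine2 p.1.rep p.2.rep P = 0 := by
    have h0 : resLine2 p.1.rep p.2.rep P * (X 0 * X 1) = 0 := by
      refine MvPolynomial.funext fun t => ?_
      rw [map_mul, eval_resLine2, map_zero]
      by_cases h0 : t 0 = 0
      · simp [h0]
      by_cases h1 : t 1 = 0
      · simp [h1]
      rw [h _ ((mem_submodule_iff _ _).2 ⟨_, rfl⟩) _ ((mem_submodule_iff _ _).2 ⟨_, rfl⟩)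
        (smul_ne_zero h0 p.1.rep_nonzero) (smul_ne_zero h1 p.2.rep_nonzero), zero_mul]
    refine (mul_eq_zero.1 h0).resolve_right (mul_ne_zero (X_ne_zero _) (X_ne_zero _))
  exact (mem_spt2 p P).1 key

theorem sum_pderiv_eq_zero {g : MvPolynomial (Fin n) ℂ} {w k : Vc n}
    (h : ∀ t : ℂ, eval (w + t • k) g = 0) : ∑ i, eval w (pderiv i g) * k i = 0 := by
  have h1 : HasDerivAt (fun t : ℂ => eval (w + t • k) g) (∑ i, eval w (pderiv i g) * k i) 0 := by
    have h2 : HasDerivAt (fun t : ℂ => w + t • k) k 0 := by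
      simpa using ((hasDerivAt_id (0 : ℂ)).smul_const k).const_add w
    have h3 := (hasStrictFDerivAt_eval g (w + (0 : ℂ) • k)).hasFDerivAt.comp_hasDerivAt _ h2
    refine h3.congr_deriv ?_
    simp
  have h2 : (fun t : ℂ => eval (w + t • k) g) = fun _ => 0 := by funext t; exact h t
  rw [h2] at h1
  exact h1.unique (hasDerivAt_const _ _)

/-- Euler's relation: the cone over `X` is tangent to its rulings. -/
theorem rep_mem_tangentSub {X : Set (Pj n)} {x : Pj n} (hx : x ∈ X) : x.rep ∈ tangentSub X x := by
  rw [tangentSub_eq, Submodule.mem_dualCoannihilator]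
  rintro φ ⟨f, hf, rfl⟩
  change dmap f x.rep x.rep = 0
  rw [dmap_apply]
  refine sum_pderiv_eq_zero fun t => ?_
  exact mem_van.1 hf hx _ (add_mem (rep_mem x) (Submodule.smul_mem _ t (rep_mem x)))

theorem exists_generators (X : Set (Pj n)) : ∃ (M : ℕ) (g : Fin M → MvPolynomial (Fin n) ℂ),
    (∀ j, g j ∈ van X) ∧ ∀ f ∈ van X, ∀ x ∈ X, ∀ v ∈ x.submodule, ∃ c : Fin M → ℂ, ∀ i,
      eval v (pderiv i f) = ∑ j, c j * eval v (pderiv i (g j)) := by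
  obtain ⟨M, g, hg⟩ := Submodule.fg_iff_exists_fin_generating_family.1
    (IsNoetherian.noetherian (van X))
  have hgX : ∀ j, g j ∈ van X := fun j => by rw [← hg]; exact Submodule.subset_span ⟨j, rfl⟩
  refine ⟨M, g, hgX, fun f hf x hx v hv => ?_⟩
  rw [← hg] at hf
  obtain ⟨a, rfl⟩ := (Submodule.mem_span_range_iff_exists_fun _).1 hf
  refine ⟨fun j => eval v (a j), fun i => ?_⟩
  rw [map_sum, map_sum]
  refine Finset.sum_congr rfl fun j _ => ?_
  have : eval v (g j) = 0 := mem_van.1 (hgX j) hx v hv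
  rw [smul_eq_mul, Derivation.leibniz]
  simp [this]

/-- A generic point `(h, x)` of the conormal variety, with coordinates in a field `E`: the
equations of the conormal variety are the polynomial relations satisfied by `(h, x)`, and
`∑ xᵢ dhᵢ = 0`, because `∑ hᵢ xᵢ = 0` and `∑ hᵢ dxᵢ = 0`. -/
theorem exists_generic {X : Set (Pj n)} (hX : zIrr X) (hne : (conormal₀ X).Nonempty) :
    ∃ (E : Type) (_ : Field E) (_ : Algebra ℂ E) (h x : Fin n → E),
      (∀ P, aeval (Sum.elim h x) P = 0 ↔ P ∈ van2 (conormal₀ X)) ∧ x ≠ 0 ∧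
      ∀ D : Derivation ℂ E E, ∑ i, x i * D (h i) = 0 := by
  classical
  have hp := van_isPrime hX
  obtain ⟨M, g, hg, hgen⟩ := exists_generators X
  let A := MvPolynomial (Fin n) ℂ ⧸ van X
  let R := MvPolynomial (Fin M) A
  let E := FractionRing R
  let φ : MvPolynomial (Fin M) (MvPolynomial (Fin n) ℂ) →ₐ[ℂ] E := (IsScalarTower.toAlgHom ℂ R E).comp
    (mapAlgHom (Ideal.Quotient.mkₐ ℂ (van X)))
  let ev : (Fin M → ℂ) → Vc n → MvPolynomial (Fin M) (MvPolynomial (Fin n) ℂ) →+* ℂ := fun l v => (eval l).comp (map (eval v))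
  have evC : ∀ l v P, ev l v (C P) = eval v P := fun l v P => by simp [ev]
  have evX : ∀ l v j, ev l v (MvPolynomial.X j) = l j := fun l v P => by simp [ev]
  have hφ : ∀ q : MvPolynomial (Fin M) (MvPolynomial (Fin n) ℂ), φ q = 0 ↔ ∀ x ∈ X, ∀ v ∈ x.submodule, ∀ l, ev l v q = 0 := by
    intro q
    have h1 : φ q = 0 ↔ map (Ideal.Quotient.mk (van X)) q = 0 :=
      (IsFractionRing.injective R E).eq_iff' (map_zero _)
    rw [h1]
    constructor
    · intro h x hx v hv l
      have h2 : map (eval v) q = 0 := by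
        ext m
        have h3 := congrArg (coeff m) h
        rw [coeff_map, coeff_zero, Ideal.Quotient.eq_zero_iff_mem] at h3
        rw [coeff_map, coeff_zero]
        exact mem_van.1 h3 hx v hv
      simp [ev, h2]
    · intro h
      ext m
      rw [coeff_map, coeff_zero, Ideal.Quotient.eq_zero_iff_mem]
      refine mem_van.2 fun x hx v hv => ?_
      have h2 : map (eval v) q = 0 := MvPolynomial.funext fun l => by
        rw [map_zero]; exact h x hx v hv l
      rw [← coeff_map, h2, coeff_zero]
  let Hq : Fin n → MvPolynomial (Fin M) (MvPolynomial (Fin n) ℂ) := fun i => ∑ j, MvPolynomial.X j * C (pderiv i (g j))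
  let Xq : Fin n → MvPolynomial (Fin M) (MvPolynomial (Fin n) ℂ) := fun i => C (MvPolynomial.X i)
  let hv : (Fin M → ℂ) → Vc n → Vc n := fun l v i => ∑ j, l j * eval v (pderiv i (g j))
  have hev : ∀ l v P, ev l v (aeval (Sum.elim Hq Xq) P) = eval (Sum.elim (hv l v) v) P := by
    intro l v P
    induction P using MvPolynomial.induction_on with
    | C z =>
      rw [aeval_C, eval_C]
      have e : algebraMap ℂ (MvPolynomial (Fin M) (MvPolynomial (Fin n) ℂ)) z = C (C z) := rfl
      simp [evC, e]
    | add p q hp hq => simp only [map_add, hp, hq]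
    | mul_X p i hp =>
      rw [map_mul, map_mul, hp, map_mul]
      cases i <;> simp [evC, evX, Hq, Xq, hv]
  let h : Fin n → E := fun i => φ (Hq i)
  let x : Fin n → E := fun i => φ (Xq i)
  have hae : ∀ P : MvPolynomial (Fin n ⊕ Fin n) ℂ, aeval (Sum.elim h x) P = φ (aeval (Sum.elim Hq Xq) P) := by
    intro P
    rw [MvPolynomial.comp_aeval_apply]
    congr 2
    funext i; cases i <;> rfl
  have hxe : ∀ P : MvPolynomial (Fin n) ℂ, aeval x P = φ (C P) := by
    intro P
    induction P using MvPolynomial.induction_on with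
    | C z =>
      rw [aeval_C, ← AlgHom.commutes φ]
      rfl
    | add p q hp hq => simp only [map_add, hp, hq]
    | mul_X p i hp => rw [map_mul, C_mul, map_mul, hp, aeval_X]
  have hxX : ∀ f ∈ van X, aeval x f = 0 := by
    intro f hf
    rw [hxe, hφ]
    intro y hy v hv l
    have : eval v f = 0 := mem_van.1 hf hy v hv
    simp [evC, this]
  -- the base point used to see that smooth points are dense and that `h`, `x` are nonzero
  obtain ⟨⟨h₀, x₀⟩, hsm, htan⟩ := hne
  obtain ⟨i₁, hi₁⟩ : ∃ i, x₀.rep i ≠ 0 := Function.ne_iff.1 x₀.rep_nonzero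
  have hx1 : x i₁ ≠ 0 := by
    intro h0
    apply hi₁
    simpa [ev, Xq] using (hφ _).1 h0 x₀ hsm.1 _ (rep_mem x₀) 0
  have hrep : ∃ l, hv l x₀.rep = h₀.rep := by
    obtain ⟨f, hf, hfe⟩ := exists_grad (rep_mem x₀) x₀.rep_nonzero
      (fun u hu => projLin_subset_hypOf (rep_mem h₀) htan hu)
    obtain ⟨c, hc⟩ := hgen f hf x₀ hsm.1 _ (rep_mem x₀)
    exact ⟨c, by funext i; rw [← hfe, hc]⟩
  obtain ⟨i₀, hi₀⟩ : ∃ i, h₀.rep i ≠ 0 := Function.ne_iff.1 h₀.rep_nonzero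
  have hh0 : h i₀ ≠ 0 := by
    intro h0
    obtain ⟨l, hl⟩ := hrep
    apply hi₀
    rw [← hl]
    simpa [ev, Hq] using (hφ _).1 h0 x₀ hsm.1 _ (rep_mem x₀) l
  have hmem : ∀ P : MvPolynomial (Fin n ⊕ Fin n) ℂ, aeval (Sum.elim h x) P = 0 ↔ P ∈ van2 (conormal₀ X) := by
    intro P
    constructor
    · intro hP
      rw [hae, hφ] at hP
      rw [mem_van2]
      rintro ⟨k, y⟩ ⟨hy, hk⟩
      refine mem_pZeros2_of_ne fun w hw v hv' hw0 hv0 => ?_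
      obtain ⟨f, hf, hfe⟩ := exists_grad hv' hv0 (fun u hu => projLin_subset_hypOf hw hk hu)
      obtain ⟨c, hc⟩ := hgen f hf y hy.1 _ hv'
      have := hP y hy.1 v hv' c
      rw [hev] at this
      have e : hv c v = w := by funext i; rw [← hfe, hc]
      rwa [e] at this
    · intro hP
      obtain ⟨f, b, hf, hfb⟩ := exists_dual_family X x₀.rep
      have hr := finrank_conorm_add X x₀
      generalize Module.finrank ℂ (conorm X x₀.rep) = r at f b hf hfb hr
      have hΔ : aeval x (jacDet f b) ≠ 0 := by
        intro h0
        rw [hxe, hφ] at h0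
        have := h0 x₀ hsm.1 _ (rep_mem x₀) 0
        have h3 : (Matrix.of fun k l => dmap (f k) x₀.rep (b l)) = (1 : Matrix (Fin r) (Fin r) ℂ) := by
          ext k l; simp [hfb, Matrix.one_apply]
        have e : ev 0 x₀.rep (C (jacDet f b)) = 1 := by
          rw [evC, eval_jacDet]
          rw [h3, Matrix.det_one]
        rw [e] at this
        exact one_ne_zero this
      have hprod : φ (C (jacDet f b) * (Hq i₀ * (Xq i₁ * aeval (Sum.elim Hq Xq) P))) = 0 := by
        rw [hφ]
        intro y hy v hv' l
        rw [map_mul, map_mul, map_mul, hev]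
        have e1 : ev l v (C (jacDet f b)) = eval v (jacDet f b) := by simp [evC]
        have e2 : ev l v (Hq i₀) = hv l v i₀ := by simp [evC, evX, Hq, hv]
        have e3 : ev l v (Xq i₁) = v i₁ := by simp [evC, Xq]
        rw [e1, e2, e3]
        by_cases c1 : eval v (jacDet f b) = 0
        · simp [c1]
        by_cases c2 : hv l v = 0
        · simp [c2]
        by_cases c3 : v = 0
        · simp [c3]
        have hle := le_finrank_conorm hf c1
        rw [conorm_rep X hv' c3] at hle
        have hys : SmoothPt X y := by
          refine ⟨hy, ?_⟩
          have h1 := zdim_add_one_le_finrank_tangentSub hX hy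
          have h2 := finrank_conorm_add X y
          have h3 := hsm.2
          dsimp only at h3
          omega
        have hpm : ((Projectivization.mk ℂ (hv l v) c2, y) : Pj n × Pj n) ∈ conormal₀ X := by
          refine ⟨hys, ?_⟩
          intro z hz w hw u hu
          obtain ⟨c, rfl⟩ := (mem_submodule_mk _ _ _).1 hw
          have huT : u ∈ tangentSub X y := hz hu
          rw [tangentSub_eq, ← conorm_rep X hv' c3, Submodule.mem_dualCoannihilator] at huT
          have h1 : ∀ j, ∑ i, eval v (pderiv i (g j)) * u i = 0 := by
            intro j
            have := huT _ ⟨g j, hg j, rfl⟩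
            change dmap (g j) v u = 0 at this
            rwa [dmap_apply] at this
          have h2 : ∑ i, hv l v i * u i = 0 := by
            simp only [hv, Finset.sum_mul]
            rw [Finset.sum_comm]
            refine Finset.sum_eq_zero fun j _ => ?_
            simp only [mul_assoc]
            rw [← Finset.mul_sum, h1, mul_zero]
          simp only [Pi.smul_apply, smul_eq_mul, mul_assoc]
          rw [← Finset.mul_sum, h2, mul_zero]
        have := mem_van2.1 hP hpm (hv l v) ((mem_submodule_mk _ _ _).2 ⟨1, by simp⟩) v hv'
        rw [this]; simp
      rw [map_mul, map_mul, map_mul, ← hxe, ← hae] at hprod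
      exact (((mul_eq_zero.1 hprod).resolve_left hΔ |> mul_eq_zero.1).resolve_left hh0 |>
        mul_eq_zero.1).resolve_left hx1
  refine ⟨E, inferInstance, inferInstance, h, x, hmem, fun h0 => hx1 (congrFun h0 i₁), fun D => ?_⟩
  have hinc : ∑ i, h i * x i = 0 := by
    have h1 : (∑ i, MvPolynomial.X (Sum.inl i) * MvPolynomial.X (Sum.inr i) : MvPolynomial (Fin n ⊕ Fin n) ℂ) ∈
        van2 (conormal₀ X) := by
      rw [mem_van2]
      rintro ⟨k, y⟩ ⟨hy, hk⟩ w hw v hv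
      have h2 : v ∈ tangentSub X y := by
        obtain ⟨c, rfl⟩ := (mem_submodule_iff _ _).1 hv
        exact Submodule.smul_mem _ _ (rep_mem_tangentSub hy.1)
      simpa using projLin_subset_hypOf hw hk h2
    simpa using (hmem _).2 h1
  have hdx : ∑ i, h i * D (x i) = 0 := by
    have e : ∀ i, h i = ∑ j, φ (MvPolynomial.X j) * aeval x (pderiv i (g j)) := by
      intro i
      simp only [h, Hq, map_sum, map_mul, hxe]
    have e2 : ∀ i, h i * D (x i) =
        ∑ j, φ (MvPolynomial.X j) * (aeval x (pderiv i (g j)) * D (x i)) := fun i => by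
      rw [e, Finset.sum_mul]
      exact Finset.sum_congr rfl fun j _ => mul_assoc _ _ _
    rw [Finset.sum_congr rfl fun i _ => e2 i, Finset.sum_comm]
    refine Finset.sum_eq_zero fun j _ => ?_
    rw [← Finset.mul_sum, ← derivation_aeval, hxX _ (hg j), map_zero, mul_zero]
  have := congrArg D hinc
  rw [map_sum, map_zero] at this
  simp only [Derivation.leibniz, smul_eq_mul, Finset.sum_add_distrib] at this
  rwa [hdx, zero_add] at this

end

/-! ### The equation of a hypersurface -/

noncomputable section

open MvPolynomial

variable {n : ℕ}

theorem mem_van_dualVar {X : Set (Pj n)} {Q : MvPolynomial (Fin n) ℂ} :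
    Q ∈ van (dualVar X) ↔ rename Sum.inl Q ∈ van2 (conormal₀ X) := by
  have key : ∀ p : Pj n × Pj n, p ∈ pZeros2 (rename Sum.inl Q) ↔ p.1 ∈ pZeros Q := by
    intro p
    constructor
    · intro h w hw
      have := h w hw 0 (Submodule.zero_mem _)
      rwa [eval_rename, Sum.elim_comp_inl] at this
    · intro h w hw v hv
      rw [eval_rename, Sum.elim_comp_inl]
      exact h w hw
  rw [mem_van, mem_van2, dualVar, conormal_eq]
  constructor
  · intro h p hp
    exact (key p).2 (h ⟨p, subset_zcl2 _ hp, rfl⟩)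
  · rintro h _ ⟨p, hp, rfl⟩
    exact (key p).1 (zcl2_subset (zClosed2_pZeros2 _) h hp)

/-- A polynomial generating the ideal of a cone is homogeneous. -/
theorem isHomogeneous_of_generator {Z : Set (Pj n)} {F : MvPolynomial (Fin n) ℂ}
    (hF : ∀ P, P ∈ van Z ↔ F ∣ P) : F.IsHomogeneous F.totalDegree := by
  by_cases hF0 : F = 0
  · rw [hF0]; exact isHomogeneous_zero _ _ _
  have hc : ∀ d, F ∣ homogeneousComponent d F := by
    intro d
    rw [← hF, mem_van]
    intro z hz v hv
    refine eval_homogeneousComponent_eq_zero (fun β => ?_) d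
    exact mem_van.1 ((hF F).2 dvd_rfl) hz _ (Submodule.smul_mem _ β hv)
  have hz : ∀ d < F.totalDegree, homogeneousComponent d F = 0 := by
    intro d hd
    by_contra h0
    obtain ⟨g, hg⟩ := hc d
    have hg0 : g ≠ 0 := by rintro rfl; exact h0 (by rw [hg, mul_zero])
    have h1 := (homogeneousComponent_isHomogeneous d F).totalDegree h0
    rw [hg, totalDegree_mul_of_isDomain hF0 hg0] at h1
    omega
  have h1 : F = homogeneousComponent F.totalDegree F := by
    conv_lhs => rw [← sum_homogeneousComponent F, Finset.sum_range_succ,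
      Finset.sum_eq_zero fun d hd => hz d (Finset.mem_range.1 hd), zero_add]
  have h2 := homogeneousComponent_isHomogeneous F.totalDegree F
  rwa [← h1] at h2

theorem exists_not_dvd_pderiv {F : MvPolynomial (Fin n) ℂ} (hF : Irreducible F)
    (hh : F.IsHomogeneous F.totalDegree) : ∃ j, ¬ F ∣ pderiv j F := by
  by_contra! h
  have hz : ∀ j, pderiv j F = 0 := by
    intro j
    by_contra h0
    obtain ⟨g, hg⟩ := h j
    have hg0 : g ≠ 0 := by rintro rfl; exact h0 (by rw [hg, mul_zero])
    have h1 := hh.pderiv (i := j) |>.totalDegree h0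
    rw [hg, totalDegree_mul_of_isDomain hF.ne_zero hg0] at h1
    have h2 : F.totalDegree = 0 := by omega
    apply h0
    rw [totalDegree_eq_zero_iff_eq_C.1 h2, pderiv_C]
  have h1 := hh.sum_X_mul_pderiv
  simp only [hz, mul_zero, Finset.sum_const_zero] at h1
  have h2 : F.totalDegree = 0 := by
    by_contra hd
    rw [eq_comm, smul_eq_zero] at h1
    exact h1.elim hd hF.ne_zero
  have h3 := totalDegree_eq_zero_iff_eq_C.1 h2
  apply hF.not_isUnit
  rw [h3]
  refine (isUnit_iff_ne_zero.2 fun h0 => hF.ne_zero ?_).map C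
  rw [h3, h0, C_0]

/-- A variety of codimension one whose ideal is prime and nonzero is cut out by one irreducible
equation. -/
theorem exists_generator {N : ℕ} {Z : Set (Pj (N + 1))} (hne : Z.Nonempty)
    (hdim : zdim Z + 1 = N) (hp : (van Z).IsPrime) (h0 : van Z ≠ ⊥) :
    ∃ F, Irreducible F ∧ ∀ P, P ∈ van Z ↔ F ∣ P := by
  obtain ⟨F, hFZ, hF⟩ := hp.exists_mem_prime_of_ne_bot h0
  refine ⟨F, hF.irreducible, ?_⟩
  obtain ⟨l, hl, hhead⟩ := exists_ltSeries hne
  have hpF : (Ideal.span {F}).IsPrime := (Ideal.span_singleton_prime hF.ne_zero).2 hF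
  have hle : Ideal.span {F} ≤ van Z := (Ideal.span_singleton_le_iff_mem _).2 hFZ
  have heq : Ideal.span {F} = l.head.asIdeal := by
    by_contra hne'
    have h1 : (⟨Ideal.span {F}, hpF⟩ : PrimeSpectrum (MvPolynomial (Fin (N + 1)) ℂ)) < l.head :=
      lt_of_le_of_ne (hle.trans hhead) fun h => hne' (congrArg PrimeSpectrum.asIdeal h)
    have h2 : (⊥ : PrimeSpectrum (MvPolynomial (Fin (N + 1)) ℂ)) < ⟨Ideal.span {F}, hpF⟩ := by
      refine lt_of_le_of_ne bot_le fun h => ?_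
      have := congrArg PrimeSpectrum.asIdeal h
      exact hF.ne_zero (Ideal.span_singleton_eq_bot.1 this.symm)
    have h3 := Order.LTSeries.length_le_krullDim
      ((l.cons _ h1).cons ⊥ (by rw [RelSeries.head_cons]; exact h2))
    have h4 : Order.krullDim (PrimeSpectrum (MvPolynomial (Fin (N + 1)) ℂ)) = (N + 1 : ℕ) :=
      ringKrullDim_mvPolynomial_fin (N + 1)
    rw [h4] at h3
    have h5 := Nat.cast_le (α := WithBot ℕ∞).1 h3
    simp only [RelSeries.cons_length] at h5
    omega
  intro P
  rw [← Ideal.mem_span_singleton]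
  exact ⟨fun h => by rw [heq]; exact hhead h, fun h => hle h⟩

end

/-! ### Reflexivity -/

noncomputable section

open MvPolynomial

variable {n : ℕ}

/-- A relation satisfied by all `(α h, β x)` with `β` a complex number is satisfied for `β` in
the larger field. -/
theorem aeval_scale {E : Type} [Field E] [Algebra ℂ E] (h x : Fin n → E)
    {P : MvPolynomial (Fin n ⊕ Fin n) ℂ}
    (hP : ∀ β : ℂ, aeval (Sum.elim h fun i => algebraMap ℂ E β * x i) P = 0) (t : E) :
    aeval (Sum.elim h fun i => t * x i) P = 0 := by
  let R : Polynomial E := aeval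
    (Sum.elim (fun i => Polynomial.C (h i)) fun i => Polynomial.X * Polynomial.C (x i)) P
  have hR : ∀ t : E, R.eval t = aeval (Sum.elim h fun i => t * x i) P := by
    intro t
    simp only [R]
    clear hP R
    induction P using MvPolynomial.induction_on with
    | C z =>
      rw [aeval_C, aeval_C, Polynomial.algebraMap_apply, Polynomial.eval_C]
    | add p q hp hq => simp only [map_add, Polynomial.eval_add, hp, hq]
    | mul_X p i hp =>
      rw [map_mul, Polynomial.eval_mul, hp, map_mul]
      cases i <;> simp [mul_comm t]
  have h0 : R = 0 := by
    refine Polynomial.eq_zero_of_infinite_isRoot R ?_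
    refine (Set.infinite_range_of_injective (algebraMap ℂ E).injective).mono ?_
    rintro _ ⟨β, rfl⟩
    change R.eval _ = 0
    rw [hR, hP]
  rw [← hR, h0, Polynomial.eval_zero]

theorem van2_scale {Z : Set (Pj n × Pj n)} {P : MvPolynomial (Fin n ⊕ Fin n) ℂ} (hP : P ∈ van2 Z)
    (α β : ℂ) : aeval (Sum.elim (fun i => C α * X (Sum.inl i)) fun i => C β * X (Sum.inr i)) P ∈
      van2 Z := by
  rw [mem_van2]
  intro p hp w hw v hv
  have h1 := mem_van2.1 hP hp (α • w) (Submodule.smul_mem _ α hw) (β • v)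
    (Submodule.smul_mem _ β hv)
  rw [← h1]
  clear h1 hP
  induction P using MvPolynomial.induction_on with
  | C z => rw [aeval_C, algebraMap_eq, eval_C, eval_C]
  | add p q hp hq => simp only [map_add, hp, hq]
  | mul_X p i hp =>
    rw [map_mul, map_mul, hp, map_mul]
    cases i <;> simp

/-- **Reflexivity.**  If the dual variety has codimension one, then it is defined by an
irreducible form `F`, and `(h, ∇F(h))` lies on the (bicone over the) conormal variety for every
zero `h` of `F`. -/
theorem exists_dual_equation {N : ℕ} {X : Set (Pj (N + 1))} (hX : zIrr X)
    (hne : (dualVar X).Nonempty) (hdim : zdim (dualVar X) + 1 = N) :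
    ∃ F : MvPolynomial (Fin (N + 1)) ℂ, Irreducible F ∧ (∀ P, P ∈ van (dualVar X) ↔ F ∣ P) ∧
      ∀ P ∈ van2 (conormal₀ X), ∀ h : Vc (N + 1), eval h F = 0 → ∀ α β : ℂ,
        eval (Sum.elim (α • h) (β • fun i => eval h (pderiv i F))) P = 0 := by
  classical
  have hne0 : (conormal₀ X).Nonempty := by
    by_contra h0
    rw [Set.not_nonempty_iff_eq_empty] at h0
    obtain ⟨_, p, hp, -⟩ := hne
    rw [conormal_eq, h0, zcl2, @closure_empty _ (zarTop2 _)] at hp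
    exact hp
  obtain ⟨E, _, _, h, x, hE, hx, hD⟩ := exists_generic hX hne0
  have hq : ∀ Q, Q ∈ van (dualVar X) ↔ aeval h Q = 0 := by
    intro Q
    rw [mem_van_dualVar, ← hE, aeval_rename, Sum.elim_comp_inl]
  have hp : (van (dualVar X)).IsPrime := by
    have : van (dualVar X) = RingHom.ker (aeval h : MvPolynomial (Fin (N + 1)) ℂ →ₐ[ℂ] E) :=
      Ideal.ext fun Q => hq Q
    rw [this]
    exact RingHom.ker_isPrime _
  have hb : van (dualVar X) ≠ ⊥ := by
    intro hb
    apply hx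
    funext j
    obtain ⟨D, hDj⟩ := exists_derivation h (Pi.single j 1) (fun P hP => by
      rw [← hq, hb, Ideal.mem_bot] at hP
      simp [hP])
    have := hD D
    simpa [hDj, Pi.single_apply] using this
  obtain ⟨F, hF, hFv⟩ := exists_generator hne hdim hp hb
  refine ⟨F, hF, hFv, ?_⟩
  have hFh : ∀ P, aeval h P = 0 ↔ F ∣ P := fun P => by rw [← hq, hFv]
  have hF0 : aeval h F = 0 := (hFh F).2 dvd_rfl
  have hprop : ∀ i j, x i * aeval h (pderiv j F) = x j * aeval h (pderiv i F) := by
    intro i j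
    obtain ⟨D, hDc⟩ := exists_derivation h
      (Pi.single i (aeval h (pderiv j F)) - Pi.single j (aeval h (pderiv i F))) (fun P hP => by
        obtain ⟨g, rfl⟩ := (hFh P).1 hP
        have e : ∀ k, aeval h (pderiv k (F * g)) = aeval h (pderiv k F) * aeval h g := by
          intro k
          rw [Derivation.leibniz, map_add, smul_eq_mul, smul_eq_mul, map_mul, map_mul, hF0,
            zero_mul, zero_add, mul_comm]
        simp only [e, Pi.sub_apply, mul_sub, Finset.sum_sub_distrib, Pi.single_apply, mul_ite,
          mul_zero, Finset.sum_ite_eq', Finset.mem_univ, if_true]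
        ring)
    have := hD D
    simp only [hDc, Pi.sub_apply, mul_sub, Finset.sum_sub_distrib, Pi.single_apply, mul_ite,
      mul_zero, Finset.sum_ite_eq', Finset.mem_univ, if_true] at this
    exact sub_eq_zero.1 this
  obtain ⟨j, hj⟩ := exists_not_dvd_pderiv hF (isHomogeneous_of_generator hFv)
  rw [← hFh] at hj
  have hxj : x j ≠ 0 := by
    intro h0
    apply hx
    funext i
    have := hprop i j
    rw [h0, zero_mul] at this
    exact (mul_eq_zero.1 this).resolve_right hj
  have hgrad : ∀ i, aeval h (pderiv i F) = (aeval h (pderiv j F) / x j) * x i := by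
    intro i
    rw [div_mul_eq_mul_div, eq_div_iff hxj, mul_comm _ (x i), hprop i j, mul_comm]
  intro P hP k hk α β
  have h1 : ∀ t : E, aeval (Sum.elim (fun i => algebraMap ℂ E α * h i) fun i => t * x i) P = 0 := by
    intro t
    refine aeval_scale _ x (fun β => ?_) t
    have h2 := (hE _).2 (van2_scale hP α β)
    rw [MvPolynomial.comp_aeval_apply] at h2
    rw [← h2]
    congr 2
    funext i
    cases i <;> simp
  let P' : MvPolynomial (Fin (N + 1)) ℂ :=
    aeval (Sum.elim (fun i => C α * MvPolynomial.X i) fun i => C β * pderiv i F) P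
  have h2 : aeval h P' = 0 := by
    simp only [P']
    rw [MvPolynomial.comp_aeval_apply, ← h1 (algebraMap ℂ E β * (aeval h (pderiv j F) / x j))]
    congr 2
    funext i
    rcases i with i | i
    · simp
    · rw [Sum.elim_inr, Sum.elim_inr, map_mul, hgrad, aeval_C, mul_assoc]
  obtain ⟨g, hg⟩ := (hFh P').1 h2
  have h3 : eval k P' = 0 := by rw [hg, map_mul, hk, zero_mul]
  rw [← h3]
  simp only [P']
  rw [← coe_aeval_eq_eval, ← coe_aeval_eq_eval, RingHom.coe_coe, RingHom.coe_coe,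
    MvPolynomial.comp_aeval_apply]
  congr 2
  funext i
  cases i <;> simp

end

/-! ### Multiplicities and tangent cones -/

noncomputable section

open MvPolynomial Filter Topology

variable {n : ℕ}

theorem homogeneousComponent_polyOrd_ne {G : MvPolynomial (Fin n) ℂ} (hG : G ≠ 0) :
    homogeneousComponent (polyOrd G) G ≠ 0 := by
  have hne : {d | homogeneousComponent d G ≠ 0}.Nonempty := by
    by_contra h0
    rw [Set.not_nonempty_iff_eq_empty, Set.eq_empty_iff_forall_notMem] at h0
    apply hG
    rw [← sum_homogeneousComponent G]
    exact Finset.sum_eq_zero fun d _ => not_not.1 (h0 d)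
  exact Nat.sInf_mem hne

theorem homogeneousComponent_of_lt_polyOrd {G : MvPolynomial (Fin n) ℂ} {j : ℕ}
    (hj : j < polyOrd G) : homogeneousComponent j G = 0 := not_not.1 (Nat.notMem_of_lt_sInf hj)

theorem polyOrd_eq {G : MvPolynomial (Fin n) ℂ} {m : ℕ} (h : homogeneousComponent m G ≠ 0)
    (hlt : ∀ j < m, homogeneousComponent j G = 0) : polyOrd G = m := by
  refine le_antisymm (Nat.sInf_le h) ?_
  by_contra hc
  have hG : G ≠ 0 := by rintro rfl; simp at h
  exact homogeneousComponent_polyOrd_ne hG (hlt _ (not_le.1 hc))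

theorem shiftPoly_mul (F g : MvPolynomial (Fin n) ℂ) (v : Vc n) :
    shiftPoly (F * g) v = shiftPoly F v * shiftPoly g v := by
  simp only [shiftPoly, map_mul]

theorem shiftPoly_ne_zero {F : MvPolynomial (Fin n) ℂ} (hF : F ≠ 0) (v : Vc n) :
    shiftPoly F v ≠ 0 := by
  intro h
  apply hF
  refine MvPolynomial.funext fun w => ?_
  have h1 := congrArg (eval (w - v)) h
  rw [shiftPoly, eval_bind₁'] at h1
  simpa using h1

theorem eval_homogeneousComponent_mul {G H : MvPolynomial (Fin n) ℂ} (w : Vc n) :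
    eval w (homogeneousComponent (polyOrd G + polyOrd H) (G * H)) =
      eval w (homogeneousComponent (polyOrd G) G) * eval w (homogeneousComponent (polyOrd H) H) ∧
    ∀ j < polyOrd G + polyOrd H, eval w (homogeneousComponent j (G * H)) = 0 := by
  have key : ∀ (Q : MvPolynomial (Fin n) ℂ) j,
      eval w (homogeneousComponent j Q) = (linePoly Q 0 w).coeff j := fun Q j => by
    rw [coeff_linePoly, shiftPoly_zero]
  have hd : ∀ Q : MvPolynomial (Fin n) ℂ, Polynomial.X ^ polyOrd Q ∣ linePoly Q 0 w := by
    intro Q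
    rw [Polynomial.X_pow_dvd_iff]
    intro j hj
    rw [← key, homogeneousComponent_of_lt_polyOrd hj, map_zero]
  have hm : linePoly (G * H) 0 w = linePoly G 0 w * linePoly H 0 w := by
    simp only [linePoly, map_mul]
  simp only [key, hm]
  obtain ⟨p, hp⟩ := hd G
  obtain ⟨q, hq⟩ := hd H
  rw [hp, hq]
  have e : Polynomial.X ^ polyOrd G * p * (Polynomial.X ^ polyOrd H * q) =
      Polynomial.X ^ (polyOrd G + polyOrd H) * (p * q) := by ring
  rw [e]
  constructor
  · rw [Polynomial.coeff_X_pow_mul', Polynomial.coeff_X_pow_mul', Polynomial.coeff_X_pow_mul']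
    simp [Polynomial.mul_coeff_zero]
  · intro j hj
    rw [Polynomial.coeff_X_pow_mul', if_neg (not_le.2 hj)]

theorem polyOrd_mul {G H : MvPolynomial (Fin n) ℂ} (hG : G ≠ 0) (hH : H ≠ 0) :
    polyOrd (G * H) = polyOrd G + polyOrd H := by
  refine polyOrd_eq ?_ fun j hj => MvPolynomial.funext fun w => ?_
  · intro h0
    have h1 : homogeneousComponent (polyOrd G) G * homogeneousComponent (polyOrd H) H = 0 :=
      MvPolynomial.funext fun w => by
        rw [map_mul, ← (eval_homogeneousComponent_mul w).1, h0]
    exact mul_ne_zero (homogeneousComponent_polyOrd_ne hG) (homogeneousComponent_polyOrd_ne hH) h1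
  · rw [(eval_homogeneousComponent_mul w).2 j hj, map_zero]

theorem multAt_eq {Z : Set (Pj n)} {F : MvPolynomial (Fin n) ℂ} (hF : F ≠ 0)
    (hZ : ∀ P, P ∈ van Z ↔ F ∣ P) (z : Pj n) : multAt Z z = polyOrd (shiftPoly F z.rep) := by
  have hne : van Z ≠ ⊥ := by
    intro h0
    have := (hZ F).2 dvd_rfl
    rw [h0, Ideal.mem_bot] at this
    exact hF this
  rw [multAt, span_vanishId, idealMult, if_neg hne]
  refine le_antisymm (Nat.sInf_le ⟨F, (hZ F).2 dvd_rfl, hF, rfl⟩) ?_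
  refine le_csInf ⟨_, F, (hZ F).2 dvd_rfl, hF, rfl⟩ ?_
  rintro d ⟨f, hf, hf0, rfl⟩
  obtain ⟨g, rfl⟩ := (hZ f).1 hf
  rw [shiftPoly_mul, polyOrd_mul (shiftPoly_ne_zero hF _)
    (shiftPoly_ne_zero (right_ne_zero_of_mul hf0) _)]
  exact Nat.le_add_right _ _

theorem tanConeAt_eq {Z : Set (Pj n)} {F : MvPolynomial (Fin n) ℂ} (hF : F ≠ 0)
    (hZ : ∀ P, P ∈ van Z ↔ F ∣ P) (z : Pj n) : tanConeAt Z z = pZeros (initForm F z.rep) := by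
  ext y
  constructor
  · intro h
    exact h F (mem_van'.1 ((hZ F).2 dvd_rfl))
  · intro h f hf w hw
    obtain ⟨g, rfl⟩ := (hZ f).1 (mem_van'.2 hf)
    by_cases hg : g = 0
    · rw [hg, mul_zero, initForm]
      simp [shiftPoly]
    · rw [initForm, shiftPoly_mul, polyOrd_mul (shiftPoly_ne_zero hF _) (shiftPoly_ne_zero hg _),
        (eval_homogeneousComponent_mul w).1]
      have : eval w (homogeneousComponent (polyOrd (shiftPoly F z.rep)) (shiftPoly F z.rep)) = 0 :=
        h w hw
      rw [this, zero_mul]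

theorem eval_smul_of_isHomogeneous {F : MvPolynomial (Fin n) ℂ} {d : ℕ} (hF : F.IsHomogeneous d)
    (c : ℂ) (w : Vc n) : eval (c • w) F = eval w F * c ^ d := by
  have := congrArg (Polynomial.eval c) (linePoly_homogeneous hF w)
  rw [eval_linePoly, zero_add] at this
  simpa using this

/-- For a form `F`, the components of the Taylor expansion at `v` that vanish also vanish at all
multiples of `v`. -/
theorem homogeneousComponent_shiftPoly_smul {F : MvPolynomial (Fin n) ℂ} {d : ℕ}
    (hF : F.IsHomogeneous d) {v : Vc n} {j : ℕ} (h : homogeneousComponent j (shiftPoly F v) = 0)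
    (c : ℂ) : homogeneousComponent j (shiftPoly F (c • v)) = 0 := by
  refine MvPolynomial.funext fun w => ?_
  rw [map_zero, ← coeff_linePoly]
  have hcont : Continuous fun c : ℂ => (linePoly F (c • v) w).coeff j :=
    (continuous_coeff_linePoly F j).comp (f := fun c : ℂ => (c • v, w)) (by fun_prop)
  refine congrFun (hcont.ext_on (dense_compl_singleton (0 : ℂ)) continuous_const
    (g := fun _ => 0) fun c hc => ?_) c
  have hc0 : c ≠ 0 := hc
  have h1 : linePoly F (c • v) w = Polynomial.C (c ^ d) * linePoly F v (c⁻¹ • w) := by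
    refine Polynomial.funext fun u => ?_
    rw [eval_linePoly, Polynomial.eval_mul, Polynomial.eval_C, eval_linePoly, mul_comm,
      ← eval_smul_of_isHomogeneous hF]
    congr 2
    rw [smul_add, smul_comm u, smul_inv_smul₀ hc0]
  simp only [h1, Polynomial.coeff_C_mul, coeff_linePoly, h, map_zero, mul_zero]

/-- The Taylor coefficients depend polynomially on the base point. -/
theorem exists_coeff_poly (F : MvPolynomial (Fin n) ℂ) (w : Vc n) (j : ℕ) :
    ∃ c : MvPolynomial (Fin n) ℂ, ∀ v,
      eval v c = eval w (homogeneousComponent j (shiftPoly F v)) := by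
  let R : Polynomial (MvPolynomial (Fin n) ℂ) :=
    aeval (fun i => Polynomial.C (X i) + Polynomial.X * Polynomial.C (C (w i))) F
  refine ⟨R.coeff j, fun v => ?_⟩
  have h1 : R.map (eval v) = linePoly F v w := by
    simp only [R]
    clear R
    refine Polynomial.funext fun u => ?_
    rw [eval_linePoly]
    induction F using MvPolynomial.induction_on with
    | C z =>
      rw [aeval_C, IsScalarTower.algebraMap_apply ℂ (MvPolynomial (Fin n) ℂ)
        (Polynomial (MvPolynomial (Fin n) ℂ)), Polynomial.algebraMap_apply]
      simp
    | add p q hp hq => simp only [map_add, Polynomial.map_add, Polynomial.eval_add, hp, hq]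
    | mul_X p i hp =>
      rw [map_mul, Polynomial.map_mul, Polynomial.eval_mul, hp, map_mul]
      simp [mul_comm u]
  rw [← coeff_linePoly, ← h1, Polynomial.coeff_map]

/-- Equimultiplicity along `S` forces the multiplicity along `S` to be the minimal one along the
linear space `ℙ(K)`; hence the Taylor expansion of `F` at points of `K` starts in degree at
least `m`. -/
theorem order_on_linear {Z : Set (Pj n)} {F : MvPolynomial (Fin n) ℂ} {d : ℕ} (hF : F ≠ 0)
    (hZ : ∀ P, P ∈ van Z ↔ F ∣ P) (hh : F.IsHomogeneous d) (K : Submodule ℂ (Vc n))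
    {S : Set (Pj n)} (hSK : S ⊆ projLin K)
    (hgen : ∃ s₀ ∈ S, ∀ m : ℕ, multAtGeneral Z (projLin K) m → multAt Z s₀ = m)
    (hequi : ∀ s ∈ S, ∀ s' ∈ S, multAt Z s = multAt Z s') :
    ∃ m, (∀ s ∈ S, polyOrd (shiftPoly F s.rep) = m) ∧
      ∀ k ∈ K, ∀ j < m, homogeneousComponent j (shiftPoly F k) = 0 := by
  obtain ⟨s₀, hs₀, hm⟩ := hgen
  let A : Set ℕ := {e | ∃ z ∈ projLin K, polyOrd (shiftPoly F z.rep) = e}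
  have hA : A.Nonempty := ⟨_, s₀, hSK hs₀, rfl⟩
  obtain ⟨z₀, hz₀, hz₀m⟩ := Nat.sInf_mem hA
  set m := sInf A with hmdef
  have hlow : ∀ z ∈ projLin K, ∀ j < m, homogeneousComponent j (shiftPoly F z.rep) = 0 := by
    intro z hz j hj
    exact homogeneousComponent_of_lt_polyOrd (hj.trans_le (Nat.sInf_le ⟨z, hz, rfl⟩))
  have hgenm : multAtGeneral Z (projLin K) m := by
    have h0 : homogeneousComponent m (shiftPoly F z₀.rep) ≠ 0 := by
      rw [← hz₀m]
      exact homogeneousComponent_polyOrd_ne (shiftPoly_ne_zero hF _)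
    obtain ⟨w, hw⟩ : ∃ w, eval w (homogeneousComponent m (shiftPoly F z₀.rep)) ≠ 0 := by
      by_contra! hc
      exact h0 (MvPolynomial.funext fun w => by rw [hc, map_zero])
    obtain ⟨c, hc⟩ := exists_coeff_poly F w m
    refine ⟨(pZeros c)ᶜ, (zClosed_pZeros c).isOpen_compl, ⟨z₀, hz₀, ?_⟩, ?_⟩
    · intro h
      exact hw (by rw [← hc]; exact h _ (rep_mem z₀))
    · rintro z ⟨hz, hzU⟩
      rw [multAt_eq hF hZ]
      refine polyOrd_eq (fun h => hzU fun v hv => ?_) (hlow z hz)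
      obtain ⟨a, rfl⟩ := (mem_submodule_iff _ _).1 hv
      rw [hc, homogeneousComponent_shiftPoly_smul hh h, map_zero]
  refine ⟨m, fun s hs => ?_, fun k hk j hj => ?_⟩
  · rw [← multAt_eq hF hZ, hequi s hs s₀ hs₀, hm m hgenm]
  · by_cases hk0 : k = 0
    · rw [hk0, ← zero_smul ℂ z₀.rep]
      exact homogeneousComponent_shiftPoly_smul hh (hlow z₀ hz₀ j hj) 0
    · have h1 : Projectivization.mk ℂ k hk0 ∈ projLin K := by
        rintro v hv
        obtain ⟨c, rfl⟩ := (mem_submodule_mk _ _ _).1 hv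
        exact K.smul_mem c hk
      obtain ⟨c, hc⟩ := (mem_submodule_iff (Projectivization.mk ℂ k hk0) k).1
        ((mem_submodule_mk _ _ _).2 ⟨1, by simp⟩)
      rw [hc]
      exact homogeneousComponent_shiftPoly_smul hh (hlow _ h1 j hj) c

/-- The tangent cone at a point of `K` is invariant under translation by `K`. -/
theorem eval_add_of_order {F : MvPolynomial (Fin n) ℂ} {m : ℕ} {K : Submodule ℂ (Vc n)}
    (hord : ∀ k ∈ K, ∀ j < m, homogeneousComponent j (shiftPoly F k) = 0) {s k : Vc n}
    (hs : s ∈ K) (hk : k ∈ K) (w : Vc n) :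
    eval (w + k) (homogeneousComponent m (shiftPoly F s)) =
      eval w (homogeneousComponent m (shiftPoly F s)) := by
  obtain ⟨Φ, hΦ, h1, h2, -⟩ := exists_quot_linePoly F m
  have e1 : Continuous fun u : ℂ => Φ (s, u, w + k) :=
    hΦ.comp (f := fun u : ℂ => (s, u, w + k)) (by fun_prop)
  have e2 : Continuous fun u : ℂ => Φ (s + u • k, u, w) :=
    hΦ.comp (f := fun u : ℂ => (s + u • k, u, w)) (by fun_prop)
  have h3 := congrFun (e1.ext_on (dense_compl_singleton (0 : ℂ)) e2 fun u hu => ?_) 0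
  · simpa [h2] using h3
  · have hu0 : u ≠ 0 := hu
    have e3 := h1 s (hord s hs) u (w + k)
    have e4 := h1 (s + u • k) (hord _ (K.add_mem hs (K.smul_mem u hk))) u w
    have e5 : s + u • (w + k) = s + u • k + u • w := by rw [smul_add]; abel
    rw [e5, e4] at e3
    exact (mul_left_cancel₀ (pow_ne_zero m hu0) e3).symm

end

/-! ### Duals of tangent cones -/

noncomputable section

open MvPolynomial Filter Topology

variable {n : ℕ}

/-- The bicone in `ℂⁿ × ℂⁿ` over the conormal variety. -/
def conormalCone (X : Set (Pj n)) : Set (Vc n × Vc n) :=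
  {p | ∀ P ∈ van2 (conormal₀ X), ∀ α β : ℂ, eval (Sum.elim (α • p.1) (β • p.2)) P = 0}

theorem continuous_eval_elim (P : MvPolynomial (Fin n ⊕ Fin n) ℂ) (α β : ℂ) :
    Continuous fun p : Vc n × Vc n => eval (Sum.elim (α • p.1) (β • p.2)) P := by
  refine (MvPolynomial.continuous_eval P).comp (continuous_pi fun i => ?_)
  cases i
  · simp only [Sum.elim_inl, Pi.smul_apply]; fun_prop
  · simp only [Sum.elim_inr, Pi.smul_apply]; fun_prop

theorem isClosed_conormalCone (X : Set (Pj n)) : IsClosed (conormalCone X) := by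
  simp only [conormalCone, Set.ofPred_forall]
  exact isClosed_iInter fun P => isClosed_iInter fun _ => isClosed_iInter fun α =>
    isClosed_iInter fun β => isClosed_eq (continuous_eval_elim P α β) continuous_const

theorem smul_mem_conormalCone {X : Set (Pj n)} (h x : Vc n) (β : ℂ)
    (hp : (h, x) ∈ conormalCone X) : (h, β • x) ∈ conormalCone X := by
  intro P hP a b
  have := hp P hP a (b * β)
  rwa [mul_smul] at this

theorem mk_mem_conormal {X : Set (Pj n)} {p : Vc n × Vc n} (hp : p ∈ conormalCone X)
    (h1 : p.1 ≠ 0) (h2 : p.2 ≠ 0) :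
    ((Projectivization.mk ℂ p.1 h1, Projectivization.mk ℂ p.2 h2) : Pj n × Pj n) ∈ conormal X := by
  rw [conormal_eq, mem_zcl2]
  intro P hP w hw v hv
  obtain ⟨α, rfl⟩ := (mem_submodule_mk _ _ _).1 hw
  obtain ⟨β, rfl⟩ := (mem_submodule_mk _ _ _).1 hv
  exact hp P hP α β

/-- The points `(x, y)` such that `(s, x) ∈ T` form a closed set. -/
theorem zClosed2_slice {T : Set (Pj n × Pj n)} (hT : zClosed2 T) (s : Pj n) :
    zClosed2 {p : Pj n × Pj n | (s, p.1) ∈ T} := by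
  have : {p : Pj n × Pj n | (s, p.1) ∈ T} = ⋂ P ∈ van2 T, ⋂ w ∈ s.submodule,
      pZeros2 (aeval (Sum.elim (fun i => C (w i)) fun i => X (Sum.inl i)) P) := by
    ext p
    have key : ∀ (P : MvPolynomial (Fin n ⊕ Fin n) ℂ) (w u v : Vc n), eval (Sum.elim u v)
        (aeval (Sum.elim (fun i => C (w i)) fun i => X (Sum.inl i)) P) =
        eval (Sum.elim w u) P := by
      intro P w u v
      induction P using MvPolynomial.induction_on with
      | C z => rw [aeval_C, algebraMap_eq, eval_C, eval_C]
      | add p q hp hq => simp only [map_add, hp, hq]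
      | mul_X p i hp =>
        rw [map_mul, map_mul, hp, map_mul]
        cases i <;> simp
    rw [Set.mem_ofPred_eq, ← hT.zcl2_eq, mem_zcl2, hT.zcl2_eq]
    simp only [Set.mem_iInter]
    constructor
    · intro h P hP w hw u hu v hv
      rw [key]
      exact h P hP w hw u hu
    · intro h P hP w hw u hu
      rw [← key P w u 0]
      exact h P hP w hw u hu 0 (Submodule.zero_mem _)
  rw [this]
  refine @isClosed_biInter _ _ (zarTop2 n) _ _ fun P _ => ?_
  exact @isClosed_biInter _ _ (zarTop2 n) _ _ fun w _ => zClosed2_pZeros2 _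

/-- A limit of pairs of nonzero vectors representing points of the closed set `T` represents a
point of `T`. -/
theorem mem_of_mem_closure {T : Set (Pj n × Pj n)} (hT : zClosed2 T) {A : Set (Vc n × Vc n)}
    (hA : ∀ p ∈ A, ∀ (h1 : p.1 ≠ 0) (h2 : p.2 ≠ 0),
      ((Projectivization.mk ℂ p.1 h1, Projectivization.mk ℂ p.2 h2) : Pj n × Pj n) ∈ T)
    {s x : Pj n} (h : (s.rep, x.rep) ∈ closure A) : (s, x) ∈ T := by
  have hU : IsOpen {p : Vc n × Vc n | p.1 ≠ 0 ∧ p.2 ≠ 0} :=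
    (isOpen_ne_fun continuous_fst continuous_const).inter
      (isOpen_ne_fun continuous_snd continuous_const)
  have h1 := hU.inter_closure ⟨⟨s.rep_nonzero, x.rep_nonzero⟩, h⟩
  have h0 : (s, x) ∈ zcl2 T := by
    rw [mem_zcl2]
    intro P hP w hw v hv
    obtain ⟨α, rfl⟩ := (mem_submodule_iff _ _).1 hw
    obtain ⟨β, rfl⟩ := (mem_submodule_iff _ _).1 hv
    have h2 : IsClosed {p : Vc n × Vc n | eval (Sum.elim (α • p.1) (β • p.2)) P = 0} :=
      isClosed_eq (continuous_eval_elim P α β) continuous_const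
    have h3 : {p : Vc n × Vc n | p.1 ≠ 0 ∧ p.2 ≠ 0} ∩ A ⊆
        {p : Vc n × Vc n | eval (Sum.elim (α • p.1) (β • p.2)) P = 0} := by
      rintro p ⟨⟨hp1, hp2⟩, hpA⟩
      have h4 := mem_van2.1 hP (hA p hpA hp1 hp2)
      have h5 : α • p.1 ∈ (Projectivization.mk ℂ p.1 hp1).submodule :=
        (mem_submodule_mk _ _ _).2 ⟨α, rfl⟩
      have h6 : β • p.2 ∈ (Projectivization.mk ℂ p.2 hp2).submodule :=
        (mem_submodule_mk _ _ _).2 ⟨β, rfl⟩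
      rw [Set.mem_ofPred_eq]
      exact h4 _ h5 _ h6
    have h5 := closure_minimal h3 h2 h1
    rwa [Set.mem_ofPred_eq] at h5
  rwa [hT.zcl2_eq] at h0

end

/-- Let `X ⊂ ℙ^N` be an irreducible, non-degenerate projective variety whose
dual `X*` is a hypersurface, and let `L` be a linear subspace with `L^⊥ ⊆ X*`.  Let
`S ⊆ L^⊥` be a smooth connected curve passing through a general point of `L^⊥` (i.e.
containing a point at which the multiplicity of `X*` takes its generic value along `L^⊥`),
and assume `X*` is equimultiple along `S`.  Then for every `s ∈ S`, the dual `|C_s(X*)|*` of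
the reduced tangent cone is contained in `Tan(L, X)`, hence in `L`. -/
theorem dual_tangent_cone_in_contact_locus (N : ℕ) (X : Set (Pj (N + 1)))
    (hXcl : zClosed X) (hXirr : zIrr X) (hXnd : Nondeg X)
    (hXdh : zdim (dualVar X) + 1 = N)
    (W : Submodule ℂ (Vc (N + 1)))
    (hLd : perpSet (projLin W) ⊆ dualVar X)
    (S : Set (Pj (N + 1))) (hSL : S ⊆ perpSet (projLin W))
    (hSconn : zIrr S) (hScurve : zdim S = 1) (hSsm : ∀ s ∈ S, SmoothPt S s)
    (hgen : ∃ s₀ ∈ S, ∀ m : ℕ, multAtGeneral (dualVar X) (perpSet (projLin W)) m →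
      multAt (dualVar X) s₀ = m)
    (hequi : ∀ s ∈ S, ∀ s' ∈ S, multAt (dualVar X) s = multAt (dualVar X) s') :
    ∀ s ∈ S, dualVar (tanConeAt (dualVar X) s) ⊆ contactLocus X (projLin W) ∧
      dualVar (tanConeAt (dualVar X) s) ⊆ projLin W := by
  rw [perpSet_projLin] at hLd hSL hgen
  have hne : (dualVar X).Nonempty := by
    obtain ⟨s₀, hs₀, -⟩ := hgen
    exact ⟨s₀, hLd (hSL hs₀)⟩
  obtain ⟨F, hF, hFv, hrefl⟩ := exists_dual_equation hXirr hne hXdh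
  obtain ⟨m, hmS, hord⟩ := order_on_linear hF.ne_zero hFv (isHomogeneous_of_generator hFv)
    (orth W) hSL hgen hequi
  obtain ⟨T, b, hT, hTc, ⟨k₁, hk₁, hb⟩, hTdom⟩ := exists_dominating X W
  intro s hs
  have hsK : s.rep ∈ orth W := mem_projLin_iff.1 (hSL hs)
  have hcone : tanConeAt (dualVar X) s =
      pZeros (MvPolynomial.homogeneousComponent m (shiftPoly F s.rep)) := by
    rw [tanConeAt_eq hF.ne_zero hFv, initForm, hmS s hs]
  rw [hcone]
  set G := MvPolynomial.homogeneousComponent m (shiftPoly F s.rep) with hG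
  have hGh : G.IsHomogeneous m := MvPolynomial.homogeneousComponent_isHomogeneous m _
  -- both inclusions are checked on the dense part of the conormal variety of the tangent cone
  have key : ∀ p ∈ conormal₀ (pZeros G), (s, p.1) ∈ T ∧ p.1 ∈ projLin W := by
    rintro ⟨x, y⟩ ⟨hy, hxy⟩
    obtain ⟨g, hg, hgx⟩ := exists_grad (rep_mem y) y.rep_nonzero
      (fun u hu => projLin_subset_hypOf (rep_mem x) hxy hu)
    have hgG : ∀ w, MvPolynomial.eval w G = 0 → MvPolynomial.eval w g = 0 := by
      intro w hw
      by_cases hw0 : w = 0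
      · rw [hw0]
        exact mem_van.1 hg hy.1 0 (Submodule.zero_mem _)
      · have h1 : Projectivization.mk ℂ w hw0 ∈ pZeros G := by
          intro v hv
          obtain ⟨c, rfl⟩ := (mem_submodule_mk _ _ _).1 hv
          rw [eval_smul_of_isHomogeneous hGh, hw, zero_mul]
        exact mem_van.1 hg h1 w ((mem_submodule_mk _ _ _).2 ⟨1, by simp⟩)
    have hyG : MvPolynomial.eval y.rep G = 0 := hy.1 _ (rep_mem y)
    have hgx' : (fun i => MvPolynomial.eval y.rep (MvPolynomial.pderiv i g)) = x.rep := funext hgx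
    constructor
    · have h1 := analytic_main F hF (conormalCone X) (isClosed_conormalCone X)
        smul_mem_conormalCone (fun h hh μ P hP α β => by
          have h2 := hrefl P hP h hh α (β * μ)
          rw [mul_smul] at h2
          exact h2) m (orth W) hord s.rep hsK y.rep hyG g hgG
        (by
          obtain ⟨i, hi⟩ := Function.ne_iff.1 x.rep_nonzero
          exact ⟨i, by rw [hgx]; exact hi⟩) b k₁ hk₁ hb
      rw [hgx'] at h1
      refine mem_of_mem_closure hT (fun p hp hp1 hp2 => ?_) h1
      refine hTdom _ (mk_mem_conormal hp.1 hp1 hp2) ?_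
        ⟨p.1, (mem_submodule_mk _ _ _).2 ⟨1, by simp⟩, hp.2.2⟩
      intro v hv
      obtain ⟨c, rfl⟩ := (mem_submodule_mk _ _ _).1 hv
      exact Submodule.smul_mem _ c hp.2.1
    · refine mem_projLin_iff.2 (mem_of_forall_orth fun k hk => ?_)
      have h1 : ∑ i, MvPolynomial.eval y.rep (MvPolynomial.pderiv i g) * k i = 0 :=
        sum_pderiv_eq_zero fun t => hgG _ (by
          rw [hG, eval_add_of_order hord hsK (Submodule.smul_mem _ t hk)]
          exact hyG)
      rw [← h1]
      exact Finset.sum_congr rfl fun i _ => by rw [hgx, mul_comm]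
  constructor
  · rintro _ ⟨p, hp, rfl⟩
    rw [conormal_eq] at hp
    have h1 : (s, p.1) ∈ T := zcl2_subset (zClosed2_slice hT s) (fun p hp => (key p hp).1) hp
    exact hTc _ h1
  · rintro _ ⟨p, hp, rfl⟩
    rw [conormal_eq] at hp
    exact zcl2_subset (zClosed2_preimage_fst_projLin W) (fun p hp => (key p hp).2) hp
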